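/- arXiv:2605.28436 — 18 statements merged into one kernel-verified Lean document; each statement's English description precedes it below -/
import Mathlib

section
/- The solution set of the squared global positioning equations is exactly 𝔛 = {(b, x) ∈ ℝ × ℝⁿ : x = v + b·u + Σ_{j=1}^k yⱼ·wⱼ for some y₁,…,y_k ∈ ℝ satisfying Σ_{j=1}^k yⱼ² + (‖u‖² − 1)·b² + 2(⟨u,v⟩ − α)·b + ‖v‖² − β = 0}. -/
open scoped RealInnerProductSpace

theorem stmt_0 {n m : ℕ} [NeZero m] (hn : 1 ≤ n) (hm : m ≤ n + 1)
    (s : Fin m → EuclideanSpace ℝ (Fin n)) (t : Fin m → ℝ)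
    (hindep : AffineIndependent ℝ s)
    (u v : EuclideanSpace ℝ (Fin n)) (α β : ℝ)
    (hu : u ∈ Submodule.span ℝ (Set.range fun i => s i - s 0))
    (hα : ∀ i, ⟪u, s i⟫ - α = t i)
    (hv : v ∈ affineSpan ℝ (Set.range s))
    (hβ : ∀ i, 2 * ⟪s i, v⟫ - β = ‖s i‖ ^ 2 - t i ^ 2)
    {k : ℕ} (hk : k = n - (m - 1))
    (w : Fin k → EuclideanSpace ℝ (Fin n)) (hw : Orthonormal ℝ w)
    (hwspan : Submodule.span ℝ (Set.range w)
      = (Submodule.span ℝ (Set.range fun i => s i - s 0))ᗮ)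
    (X : Set (ℝ × EuclideanSpace ℝ (Fin n)))
    (hX : X = {p : ℝ × EuclideanSpace ℝ (Fin n) | ∀ i, ‖s i - p.2‖ ^ 2 = (t i - p.1) ^ 2}) :
    X = {p : ℝ × EuclideanSpace ℝ (Fin n) | ∃ y : Fin k → ℝ,
          p.2 = v + p.1 • u + ∑ j, y j • w j ∧
          (∑ j, y j ^ 2) + (‖u‖ ^ 2 - 1) * p.1 ^ 2
            + 2 * (⟪u, v⟫ - α) * p.1 + ‖v‖ ^ 2 - β = 0} := by
  have hvs : ∀ i, v - s i ∈ Submodule.span ℝ (Set.range fun i => s i - s 0) := by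
    intro i
    have h1 := AffineSubspace.vsub_mem_direction hv
      (mem_affineSpan ℝ (Set.mem_range_self (f := s) i))
    rw [direction_affineSpan, vectorSpan_range_eq_span_range_vsub_right ℝ s 0] at h1
    simpa only [vsub_eq_sub] using h1
  have key : ∀ (b : ℝ) (z : EuclideanSpace ℝ (Fin n)) (i : Fin m),
      (‖s i - (v + b • u + z)‖ ^ 2 = (t i - b) ^ 2) ↔
      -2 * ⟪s i, z⟫ + ‖v + b • u + z‖ ^ 2 - β - 2 * b * α - b ^ 2 = 0 := by
    intro b z i
    have h1 := hα i
    have h2 := hβ i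
    rw [norm_sub_sq_real, inner_add_right, inner_add_right, inner_smul_right,
      real_inner_comm u (s i), ← h1]
    rw [← h1] at h2
    constructor <;> intro h <;> linarith
  have hnorm : ∀ (b : ℝ) (z : EuclideanSpace ℝ (Fin n)), ⟪u, z⟫ = 0 →
      ‖v + b • u + z‖ ^ 2 = ‖v‖ ^ 2 + b ^ 2 * ‖u‖ ^ 2 + ‖z‖ ^ 2 + 2 * b * ⟪u, v⟫
        + 2 * ⟪v, z⟫ := by
    intro b z h
    rw [norm_add_sq_real, norm_add_sq_real, inner_add_left, inner_smul_left, inner_smul_right,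
      norm_smul, mul_pow, h, real_inner_comm u v, Real.norm_eq_abs, sq_abs]
    simp
    ring
  have hsq : ∀ y : Fin k → ℝ, ‖∑ j, y j • w j‖ ^ 2 = ∑ j, y j ^ 2 := by
    intro y
    rw [← real_inner_self_eq_norm_sq, hw.inner_sum]
    simp [sq]
  have hperp : ∀ (z : EuclideanSpace ℝ (Fin n)),
      z ∈ (Submodule.span ℝ (Set.range fun i => s i - s 0))ᗮ →
      ⟪u, z⟫ = 0 ∧ ∀ i, ⟪v, z⟫ = ⟪s i, z⟫ := by
    intro z hz
    rw [Submodule.mem_orthogonal] at hz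
    refine ⟨hz u hu, fun i => ?_⟩
    have := hz _ (hvs i)
    rw [inner_sub_left] at this
    linarith
  subst hX
  ext ⟨b, x⟩
  simp only [Set.mem_setOf_eq]
  constructor
  · intro h
    obtain ⟨z, rfl⟩ : ∃ z, x = v + b • u + z := ⟨x - (v + b • u), by abel⟩
    have h' := fun i => (key b z i).1 (h i)
    have hz : z ∈ (Submodule.span ℝ (Set.range fun i => s i - s 0))ᗮ := by
      rw [Submodule.mem_orthogonal]
      intro a ha
      induction ha using Submodule.span_induction with
      | mem a ha =>
        obtain ⟨i, rfl⟩ := ha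
        have h1 := h' i
        have h2 := h' 0
        simp only [inner_sub_left]
        linarith
      | zero => simp
      | add a c _ _ h1 h2 => rw [inner_add_left, h1, h2, add_zero]
      | smul r a _ h1 => rw [inner_smul_left, h1, mul_zero]
    obtain ⟨h1, h2⟩ := hperp z hz
    rw [← hwspan, Submodule.mem_span_range_iff_exists_fun] at hz
    obtain ⟨y, hy⟩ := hz
    refine ⟨y, by rw [hy], ?_⟩
    rw [← hsq, hy]
    have h3 := h' 0
    rw [hnorm b z h1, h2 0] at h3
    linarith
  · rintro ⟨y, rfl, h⟩ i
    rw [key]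
    have hz : ∑ j, y j • w j ∈ (Submodule.span ℝ (Set.range fun i => s i - s 0))ᗮ := by
      rw [← hwspan, Submodule.mem_span_range_iff_exists_fun]
      exact ⟨y, rfl⟩
    obtain ⟨h1, h2⟩ := hperp _ hz
    rw [hnorm b _ h1, h2 i, hsq]
    linarith
end

section
/- Suppose m = 2 and s₁ ≠ s₂, and set d = ‖s₁ − s₂‖. Then u = ((t₁ − t₂)/d²)·(s₁ − s₂), so ‖u‖ = |t₁ − t₂|/d; moreover, for each sign σ ∈ {+1, −1}, the pair given by b = (t₁ + t₂ + σ·d)/2 and x = (s₁ + s₂ + σ·d·u)/2 belongs to 𝔛 (i.e., satisfies ‖sᵢ − x‖² = (tᵢ − b)² for i = 1,2). -/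
open scoped RealInnerProductSpace

theorem stmt_1 {n : ℕ} (hn : 1 ≤ n) (hm : 2 ≤ n + 1)
    (s : Fin 2 → EuclideanSpace ℝ (Fin n)) (t : Fin 2 → ℝ)
    (hindep : AffineIndependent ℝ s) (hne : s 0 ≠ s 1)
    (u : EuclideanSpace ℝ (Fin n)) (α : ℝ)
    (hu : u ∈ Submodule.span ℝ (Set.range fun i => s i - s 0))
    (hα : ∀ i, ⟪u, s i⟫ - α = t i)
    (d : ℝ) (hd : d = ‖s 0 - s 1‖)
    (X : Set (ℝ × EuclideanSpace ℝ (Fin n)))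
    (hX : X = {p : ℝ × EuclideanSpace ℝ (Fin n) | ∀ i, ‖s i - p.2‖ ^ 2 = (t i - p.1) ^ 2}) :
    u = ((t 0 - t 1) / d ^ 2) • (s 0 - s 1) ∧
    ‖u‖ = |t 0 - t 1| / d ∧
    ∀ σ : ℝ, (σ = 1 ∨ σ = -1) →
      ((t 0 + t 1 + σ * d) / 2, ((1 : ℝ) / 2) • (s 0 + s 1 + (σ * d) • u)) ∈ X := by
  have hd0 : 0 < d := by rw [hd]; exact norm_pos_iff.mpr (sub_ne_zero.mpr hne)
  have hle : Submodule.span ℝ (Set.range fun i => s i - s 0) ≤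
      Submodule.span ℝ {s 0 - s 1} := by
    rw [Submodule.span_le]
    rintro _ ⟨i, rfl⟩
    fin_cases i
    · simp
    · refine Submodule.mem_span_singleton.mpr ⟨-1, ?_⟩
      simp
  obtain ⟨c, hc⟩ := Submodule.mem_span_singleton.mp (hle hu)
  have h1 : ⟪u, s 0 - s 1⟫ = t 0 - t 1 := by
    rw [inner_sub_right, ← hα 0, ← hα 1]; ring
  have h2 : c * d ^ 2 = t 0 - t 1 := by
    rw [← h1, ← hc, real_inner_smul_left, real_inner_self_eq_norm_sq, hd]
  have hcd : c = (t 0 - t 1) / d ^ 2 := by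
    rw [← h2]; field_simp
  refine ⟨by rw [← hcd, hc], ?_, ?_⟩
  · rw [← hc, norm_smul, ← hd, ← h2, abs_mul, abs_of_pos (pow_pos hd0 2), Real.norm_eq_abs]
    field_simp
  · intro σ hσ
    have hs : σ ^ 2 = 1 := by rcases hσ with h | h <;> simp [h]
    rw [hX]
    intro i
    fin_cases i
    · have e : s 0 - ((1 : ℝ) / 2) • (s 0 + s 1 + (σ * d) • u) =
          ((1 - σ * d * c) / 2) • (s 0 - s 1) := by
        rw [← hc]; module
      change ‖s 0 - ((1 : ℝ) / 2) • (s 0 + s 1 + (σ * d) • u)‖ ^ 2 =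
        (t 0 - (t 0 + t 1 + σ * d) / 2) ^ 2
      have e2 : t 0 - (t 0 + t 1 + σ * d) / 2 = (c * d ^ 2 - σ * d) / 2 := by rw [h2]; ring
      rw [e, e2, norm_smul, ← hd, mul_pow, Real.norm_eq_abs, sq_abs]
      linear_combination (d ^ 4 * c ^ 2 - d ^ 2) / 4 * hs
    · have e : s 1 - ((1 : ℝ) / 2) • (s 0 + s 1 + (σ * d) • u) =
          (-(1 + σ * d * c) / 2) • (s 0 - s 1) := by
        rw [← hc]; module
      change ‖s 1 - ((1 : ℝ) / 2) • (s 0 + s 1 + (σ * d) • u)‖ ^ 2 =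
        (t 1 - (t 0 + t 1 + σ * d) / 2) ^ 2
      have e2 : t 1 - (t 0 + t 1 + σ * d) / 2 = (-(c * d ^ 2) - σ * d) / 2 := by rw [h2]; ring
      rw [e, e2, norm_smul, ← hd, mul_pow, Real.norm_eq_abs, sq_abs]
      linear_combination (d ^ 4 * c ^ 2 - d ^ 2) / 4 * hs
end

section
/- The polynomial identity (‖u‖² − 1)·b² + 2(⟨u,v⟩ − α)·b + ‖v‖² − β = 0 holds for all b ∈ ℝ if and only if m = 2 and |t₁ − t₂| = ‖s₁ − s₂‖. In that case: (1) 𝔛 = {(b, v + b·u) : b ∈ ℝ}; and (2) a pair (t,s) ∈ ℝ × ℝⁿ satisfies ‖s − x‖² = (t − b)² for all (b,x) ∈ 𝔛 if and only if s = v + t·u. In particular, in that case sᵢ = v + tᵢ·u for i = 1,2. -/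
open scoped RealInnerProductSpace

lemma aux_zero {E : Type*} [NormedAddCommGroup E] [InnerProductSpace ℝ E] (u w : E)
    (hu : ‖u‖ ^ 2 = 1) (a c : ℝ) (hac : a ≠ c) (h1 : ‖a • u - w‖ ^ 2 = a ^ 2)
    (h2 : ‖c • u - w‖ ^ 2 = c ^ 2) : w = 0 := by
  rw [norm_sub_sq_real, norm_smul, mul_pow, hu, Real.norm_eq_abs, sq_abs, real_inner_smul_left]
    at h1 h2
  have h3 : (a - c) * ⟪u, w⟫ = 0 := by linarith
  have h4 : ⟪u, w⟫ = 0 := by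
    rcases mul_eq_zero.mp h3 with h | h
    · exact absurd (sub_eq_zero.mp h) hac
    · exact h
  rw [h4] at h1
  have : ‖w‖ ^ 2 = 0 := by linarith
  simpa using this

lemma aux_coeff (A B C D : ℝ) (h : ∀ b : ℝ, (A - 1) * b ^ 2 + 2 * B * b + C - D = 0) :
    A = 1 ∧ B = 0 ∧ C = D := by
  have h0 := h 0
  have h1 := h 1
  have h2 := h (-1)
  refine ⟨?_, ?_, ?_⟩ <;> linarith

lemma aux_on_line {E : Type*} [NormedAddCommGroup E] [InnerProductSpace ℝ E] (u v s : E)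
    (t α β : ℝ) (hu : ‖u‖ ^ 2 = 1) (huv : ⟪u, v⟫ = α) (hv : ‖v‖ ^ 2 = β)
    (hα : ⟪u, s⟫ - α = t) (hβ : 2 * ⟪s, v⟫ - β = ‖s‖ ^ 2 - t ^ 2) : s = v + t • u := by
  have : ‖s - (v + t • u)‖ ^ 2 = 0 := by
    rw [norm_sub_sq_real, norm_add_sq_real, inner_add_right, real_inner_smul_right,
      real_inner_smul_right, norm_smul, mul_pow, hu, Real.norm_eq_abs, sq_abs,
      real_inner_comm u s, real_inner_comm u v, huv, hv]
    have : ⟪u, s⟫ = t + α := by linarith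
    rw [this]
    linarith
  have h : s - (v + t • u) = 0 := by simpa using this
  exact sub_eq_zero.mp h

lemma aux_back {E : Type*} [NormedAddCommGroup E] [InnerProductSpace ℝ E]
    (s : Fin 2 → E) (t : Fin 2 → ℝ) (hne : s 0 ≠ s 1) (u v : E) (α β : ℝ)
    (hu : u ∈ Submodule.span ℝ (Set.range fun i => s i - s 0))
    (hα : ∀ i, ⟪u, s i⟫ - α = t i)
    (hv : v ∈ affineSpan ℝ (Set.range s))
    (hβ : ∀ i, 2 * ⟪s i, v⟫ - β = ‖s i‖ ^ 2 - t i ^ 2)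
    (ht : |t 1 - t 0| = ‖s 1 - s 0‖) :
    ‖u‖ ^ 2 = 1 ∧ ⟪u, v⟫ = α ∧ ‖v‖ ^ 2 = β := by
  obtain ⟨d, hd⟩ : ∃ d, d = s 1 - s 0 := ⟨_, rfl⟩
  have hr : Set.range s = {s 0, s 1} := by
    ext x; simp [Set.mem_range, Fin.exists_fin_two, eq_comm]
  have hr2 : (Set.range fun i => s i - s 0) = {0, d} := by
    ext x; simp [Set.mem_range, Fin.exists_fin_two, eq_comm, hd]
  rw [hr2, Submodule.span_insert_zero, Submodule.mem_span_singleton] at hu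
  obtain ⟨c, rfl⟩ := hu
  rw [hr] at hv
  obtain ⟨k, rfl⟩ := mem_affineSpan_pair_iff_exists_lineMap_eq.mp hv
  rw [AffineMap.lineMap_apply] at *
  simp only [vsub_eq_sub, vadd_eq_add, ← hd] at hα hβ ht ⊢
  have hs1 : s 1 = s 0 + d := by rw [hd]; abel
  have hd0 : d ≠ 0 := by rw [hd]; exact sub_ne_zero.mpr hne.symm
  have hn2 : ‖d‖ ^ 2 = (t 1 - t 0) ^ 2 := by rw [← ht, sq_abs]
  have hdp : 0 < ‖d‖ ^ 2 := by positivity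
  have a0 := hα 0
  have a1 := hα 1
  have b0 := hβ 0
  have b1 := hβ 1
  rw [hs1] at a1 b1
  simp only [inner_add_left, inner_add_right, real_inner_smul_left, real_inner_smul_right,
    norm_add_sq_real, norm_smul, mul_pow, Real.norm_eq_abs, sq_abs, real_inner_self_eq_norm_sq,
    real_inner_comm d (s 0)] at a0 a1 b0 b1 ⊢
  have hδ : t 1 - t 0 ≠ 0 := by
    intro h; rw [hn2, h] at hdp; simp at hdp
  rw [hn2] at a1 b1 ⊢
  obtain ⟨δ, hδe⟩ : ∃ δ, δ = t 1 - t 0 := ⟨_, rfl⟩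
  have ht1 : t 1 = t 0 + δ := by linarith
  rw [← hδe] at a1 b1 hδ ⊢
  rw [ht1] at a1 b1
  have hc : c * δ = 1 := by
    apply mul_right_cancel₀ hδ; linarith
  have hk : k * δ = - t 0 := by
    apply mul_right_cancel₀ hδ; linarith
  refine ⟨by rw [← mul_pow, hc]; norm_num, ?_, ?_⟩
  · linear_combination a0 + k * δ * hc + hk
  · linear_combination b0 + (k * δ - t 0) * hk

theorem stmt_2 {n m : ℕ} [NeZero m] (hn : 1 ≤ n) (hm : m ≤ n + 1)
    (s : Fin m → EuclideanSpace ℝ (Fin n)) (t : Fin m → ℝ)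
    (hindep : AffineIndependent ℝ s)
    (u v : EuclideanSpace ℝ (Fin n)) (α β : ℝ)
    (hu : u ∈ Submodule.span ℝ (Set.range fun i => s i - s 0))
    (hα : ∀ i, ⟪u, s i⟫ - α = t i)
    (hv : v ∈ affineSpan ℝ (Set.range s))
    (hβ : ∀ i, 2 * ⟪s i, v⟫ - β = ‖s i‖ ^ 2 - t i ^ 2)
    (X : Set (ℝ × EuclideanSpace ℝ (Fin n)))
    (hX : X = {p : ℝ × EuclideanSpace ℝ (Fin n) | ∀ i, ‖s i - p.2‖ ^ 2 = (t i - p.1) ^ 2}) :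
    ((∀ b : ℝ, (‖u‖ ^ 2 - 1) * b ^ 2 + 2 * (⟪u, v⟫ - α) * b + ‖v‖ ^ 2 - β = 0)
      ↔ (m = 2 ∧ ∀ i j : Fin m, |t i - t j| = ‖s i - s j‖)) ∧
    ((∀ b : ℝ, (‖u‖ ^ 2 - 1) * b ^ 2 + 2 * (⟪u, v⟫ - α) * b + ‖v‖ ^ 2 - β = 0) →
      (X = {p : ℝ × EuclideanSpace ℝ (Fin n) | p.2 = v + p.1 • u} ∧
       (∀ (τ : ℝ) (σ : EuclideanSpace ℝ (Fin n)),
          (∀ p ∈ X, ‖σ - p.2‖ ^ 2 = (τ - p.1) ^ 2) ↔ σ = v + τ • u) ∧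
       ∀ i, s i = v + t i • u)) := by
  have key : (∀ b : ℝ, (‖u‖ ^ 2 - 1) * b ^ 2 + 2 * (⟪u, v⟫ - α) * b + ‖v‖ ^ 2 - β = 0) →
      ‖u‖ ^ 2 = 1 ∧ (∀ i, s i = v + t i • u) ∧ m = 2 := by
    intro h
    obtain ⟨h1, h2, h3⟩ := aux_coeff _ _ _ _ h
    have hl : ∀ i, s i = v + t i • u := fun i =>
      aux_on_line u v (s i) (t i) α β h1 (by linarith) h3 (hα i) (hβ i)
    refine ⟨h1, hl, ?_⟩
    have hm0 : m ≠ 0 := NeZero.ne m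
    have hm1 : m ≠ 1 := by
      rintro rfl
      have : u = 0 := by
        have hz : (Set.range fun i => s i - s 0) = {0} := by
          ext x; simp [Set.mem_range, eq_comm]
        rw [hz] at hu
        simpa using hu
      rw [this] at h1
      simp at h1
    have hm2 : m ≤ 2 := by
      have hle : vectorSpan ℝ (Set.range s) ≤ Submodule.span ℝ {u} := by
        rw [vectorSpan_def, Submodule.span_le]
        rintro _ ⟨_, ⟨i, rfl⟩, _, ⟨j, rfl⟩, rfl⟩
        refine Submodule.mem_span_singleton.mpr ⟨t i - t j, ?_⟩
        simp only [vsub_eq_sub]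
        rw [hl i, hl j, sub_smul]; abel
      have e1 := hindep.card_le_finrank_succ
      have e2 := Submodule.finrank_mono hle
      have e3 := finrank_span_le_card (R := ℝ) ({u} : Set (EuclideanSpace ℝ (Fin n)))
      simp only [Set.toFinset_singleton, Finset.card_singleton] at e3
      rw [Fintype.card_fin] at e1
      omega
    omega
  refine ⟨⟨fun h => ?_, ?_⟩, fun h => ?_⟩
  · obtain ⟨h1, hl, h2⟩ := key h
    refine ⟨h2, fun i j => ?_⟩
    have hu1 : ‖u‖ = 1 := by
      have := norm_nonneg u
      nlinarith
    have : s i - s j = (t i - t j) • u := by rw [hl i, hl j, sub_smul]; abel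
    rw [this, norm_smul, hu1, mul_one, Real.norm_eq_abs]
  · rintro ⟨rfl, ht⟩ b
    obtain ⟨h1, h2, h3⟩ := aux_back s t (fun h => by simpa using hindep.injective h) u v α β hu hα
      hv hβ (ht 1 0)
    rw [h1, h2, h3]; ring
  · obtain ⟨h1, hl, h2⟩ := key h
    have hXe : X = {p : ℝ × EuclideanSpace ℝ (Fin n) | p.2 = v + p.1 • u} := by
      subst h2
      rw [hX]
      ext ⟨b, x⟩
      simp only [Set.mem_ofPred_eq]
      constructor
      · intro hx
        have ht : t 0 ≠ t 1 := by
          intro h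
          have : s 0 = s 1 := by rw [hl 0, hl 1, h]
          simpa using hindep.injective this
        have e : ∀ i, s i - x = (t i - b) • u - (x - (v + b • u)) := by
          intro i; rw [hl i, sub_smul]; abel
        exact sub_eq_zero.mp (aux_zero u _ h1 (t 0 - b) (t 1 - b) (fun h => ht (by linarith))
          (by rw [← e, hx]) (by rw [← e, hx]))
      · rintro rfl i
        have : s i - (v + b • u) = (t i - b) • u := by rw [hl i, sub_smul]; abel
        rw [this, norm_smul, mul_pow, h1, Real.norm_eq_abs, sq_abs, mul_one]
    refine ⟨hXe, fun τ σ => ⟨fun hp => ?_, ?_⟩, hl⟩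
    · rw [hXe] at hp
      have e : ∀ b : ℝ, ‖(b - τ) • u - (σ - (v + τ • u))‖ ^ 2 = (b - τ) ^ 2 := by
        intro b
        have h3 := hp (b, v + b • u) rfl
        have h4 : (b - τ) • u - (σ - (v + τ • u)) = -(σ - (v + b • u)) := by
          rw [sub_smul]; abel
        rw [h4, norm_neg, h3]; ring
      exact sub_eq_zero.mp (aux_zero u _ h1 (0 - τ) (1 - τ) (fun h => by linarith) (e 0) (e 1))
    · rintro rfl ⟨b, x⟩ hp
      rw [hXe] at hp
      simp only [Set.mem_ofPred_eq] at hp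
      subst hp
      have : v + τ • u - (v + b • u) = (τ - b) • u := by rw [sub_smul]; abel
      simp only
      rw [this, norm_smul, mul_pow, h1, Real.norm_eq_abs, sq_abs, mul_one]
end

section
/- For every i = 1,…,m the pair (tᵢ, sᵢ) belongs to 𝒮′, and 𝒮′ ⊆ 𝒮 (that is, every (t,s) ∈ 𝒮′ satisfies ‖s − x‖² = (t − b)² for all (b,x) ∈ 𝔛). -/
open scoped RealInnerProductSpace

theorem stmt_3 {n m : ℕ} [NeZero m] (hn : 1 ≤ n) (hm : m ≤ n + 1)
    (s : Fin m → EuclideanSpace ℝ (Fin n)) (t : Fin m → ℝ)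
    (hindep : AffineIndependent ℝ s)
    (u v : EuclideanSpace ℝ (Fin n)) (α β : ℝ)
    (hu : u ∈ Submodule.span ℝ (Set.range fun i => s i - s 0))
    (hα : ∀ i, ⟪u, s i⟫ - α = t i)
    (hv : v ∈ affineSpan ℝ (Set.range s))
    (hβ : ∀ i, 2 * ⟪s i, v⟫ - β = ‖s i‖ ^ 2 - t i ^ 2)
    (X : Set (ℝ × EuclideanSpace ℝ (Fin n)))
    (hX : X = {p : ℝ × EuclideanSpace ℝ (Fin n) | ∀ i, ‖s i - p.2‖ ^ 2 = (t i - p.1) ^ 2})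
    (S : Set (ℝ × EuclideanSpace ℝ (Fin n)))
    (hS : S = {q : ℝ × EuclideanSpace ℝ (Fin n) | ∀ p ∈ X, ‖q.2 - p.2‖ ^ 2 = (q.1 - p.1) ^ 2})
    (S' : Set (ℝ × EuclideanSpace ℝ (Fin n)))
    (hS' : S' = {q : ℝ × EuclideanSpace ℝ (Fin n) | q.2 ∈ affineSpan ℝ (Set.range s) ∧
        q.1 = ⟪u, q.2⟫ - α ∧ ‖q.2‖ ^ 2 - ⟪u, q.2⟫ ^ 2 + 2 * ⟪α • u - v, q.2⟫ + β - α ^ 2 = 0}) :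
    (∀ i, (t i, s i) ∈ S') ∧ S' ⊆ S := by
  subst hX hS hS'
  refine ⟨fun i => ⟨mem_affineSpan ℝ ⟨i, rfl⟩, (hα i).symm, ?_⟩, ?_⟩
  · have h1 := hα i
    have h2 := hβ i
    rw [real_inner_comm] at h2
    simp only [inner_sub_left, inner_smul_left, RCLike.conj_to_real]
    have h3 : ⟪u, s i⟫ = t i + α := by linarith
    rw [h3]
    linear_combination -h2
  · rintro ⟨a, q⟩ ⟨hq, ha, hh⟩ ⟨b, x⟩ hp
    simp only [Set.mem_setOf_eq] at hq ha hh hp ⊢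
    have key : 2 * ⟪v - x + b • u, q⟫ + (‖x‖ ^ 2 - β - 2 * b * α - b ^ 2) = 0 := by
      refine affineSpan_induction (k := ℝ)
        (p := fun q => 2 * ⟪v - x + b • u, q⟫ + (‖x‖ ^ 2 - β - 2 * b * α - b ^ 2) = 0) hq ?_ ?_
      · rintro _ ⟨i, rfl⟩
        have h1 := hα i
        have h2 := hβ i
        have h3 := hp i
        rw [real_inner_comm] at h2
        rw [norm_sub_sq_real, real_inner_comm] at h3
        simp only [inner_sub_left, inner_add_left, inner_smul_left, RCLike.conj_to_real]
        linear_combination h3 + h2 + 2 * b * h1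
      · intro c y z w hy hz hw
        simp only [vsub_eq_sub, vadd_eq_add, inner_add_right, inner_smul_right,
          inner_sub_right] at hy hz hw ⊢
        linear_combination c * hy - c * hz + hw
    simp only [inner_sub_left, inner_add_left, inner_smul_left, RCLike.conj_to_real] at key hh
    rw [norm_sub_sq_real, real_inner_comm, ha]
    linear_combination key + hh
end

section
/- If 𝔛 has at least two elements, then 𝒮 = 𝒮′; that is, a pair (t,s) ∈ ℝ × ℝⁿ satisfies ‖s − x‖² = (t − b)² for all (b,x) ∈ 𝔛 if and only if s lies in the affine span of s₁,…,s_m, t = ⟨u,s⟩ − α, and h̃(s) = 0. -/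
open scoped RealInnerProductSpace

theorem aux_identity {E : Type*} [NormedAddCommGroup E] [InnerProductSpace ℝ E]
    (u v y x : E) (α β t b : ℝ) :
    ‖y - x‖ ^ 2 - (t - b) ^ 2 = (‖y‖ ^ 2 - t ^ 2 - 2 * ⟪y, v⟫ + β) + 2 * b * (t + α - ⟪u, y⟫)
      - 2 * ⟪y - v, x - v - b • u⟫ + (‖x - v - b • u‖ ^ 2
        - ((1 - ‖u‖ ^ 2) * b ^ 2 + 2 * b * (α - ⟪u, v⟫) + (β - ‖v‖ ^ 2)))
      + 2 * b * ⟪u, x - v - b • u⟫ := by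
  simp only [← real_inner_self_eq_norm_sq, inner_sub_left, inner_sub_right, inner_smul_left,
    inner_smul_right, real_inner_comm u y, real_inner_comm u v, real_inner_comm u x,
    real_inner_comm v x, real_inner_comm v y, real_inner_comm x y, RCLike.conj_to_real]
  ring_nf
  try simp only [real_inner_comm]
  try ring

theorem aux_quad (a c d b1 b2 : ℝ) (hb : b1 ≠ b2) (h1 : 0 ≤ a * b1 ^ 2 + 2 * b1 * c + d)
    (h2 : 0 ≤ a * b2 ^ 2 + 2 * b2 * c + d) (h : ∀ b, a * b ^ 2 + 2 * b * c + d ≤ 0) :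
    a = 0 ∧ c = 0 ∧ d = 0 := by
  have e1 : a * b1 ^ 2 + 2 * b1 * c + d = 0 := le_antisymm (h _) h1
  have e2 : a * b2 ^ 2 + 2 * b2 * c + d = 0 := le_antisymm (h _) h2
  have hb' : b1 - b2 ≠ 0 := sub_ne_zero.mpr hb
  have e3 : a * (b1 + b2) + 2 * c = 0 := by
    apply mul_left_cancel₀ hb'
    linear_combination e1 - e2
  have key : ∀ b, a * b ^ 2 + 2 * b * c + d = a * ((b - b1) * (b - b2)) := by
    intro b
    linear_combination (b - b1) * e3 + e1
  have k1 := h (2 * b1 - b2)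
  have k2 := h ((b1 + b2) / 2)
  rw [key] at k1 k2
  have hp : 0 < (b1 - b2) ^ 2 := by positivity
  have ha : a = 0 := by
    apply le_antisymm
    · by_contra hc
      push Not at hc
      nlinarith [mul_pos hc hp]
    · by_contra hc
      push Not at hc
      nlinarith [mul_pos (neg_pos.mpr hc) hp]
  subst ha
  have hc : c = 0 := by linarith
  subst hc
  exact ⟨rfl, rfl, by linarith⟩

theorem stmt_4 {n m : ℕ} [NeZero m] (hn : 1 ≤ n) (hm : m ≤ n + 1)
    (s : Fin m → EuclideanSpace ℝ (Fin n)) (t : Fin m → ℝ)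
    (hindep : AffineIndependent ℝ s)
    (u v : EuclideanSpace ℝ (Fin n)) (α β : ℝ)
    (hu : u ∈ Submodule.span ℝ (Set.range fun i => s i - s 0))
    (hα : ∀ i, ⟪u, s i⟫ - α = t i)
    (hv : v ∈ affineSpan ℝ (Set.range s))
    (hβ : ∀ i, 2 * ⟪s i, v⟫ - β = ‖s i‖ ^ 2 - t i ^ 2)
    (X : Set (ℝ × EuclideanSpace ℝ (Fin n)))
    (hX : X = {p : ℝ × EuclideanSpace ℝ (Fin n) | ∀ i, ‖s i - p.2‖ ^ 2 = (t i - p.1) ^ 2})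
    (S : Set (ℝ × EuclideanSpace ℝ (Fin n)))
    (hS : S = {q : ℝ × EuclideanSpace ℝ (Fin n) | ∀ p ∈ X, ‖q.2 - p.2‖ ^ 2 = (q.1 - p.1) ^ 2})
    (S' : Set (ℝ × EuclideanSpace ℝ (Fin n)))
    (hS' : S' = {q : ℝ × EuclideanSpace ℝ (Fin n) | q.2 ∈ affineSpan ℝ (Set.range s) ∧
        q.1 = ⟪u, q.2⟫ - α ∧ ‖q.2‖ ^ 2 - ⟪u, q.2⟫ ^ 2 + 2 * ⟪α • u - v, q.2⟫ + β - α ^ 2 = 0}) :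
    X.Nontrivial → S = S' := by
  intro hnt
  set U := Submodule.span ℝ (Set.range fun i => s i - s 0) with hU
  set q : ℝ → ℝ := fun b => (1 - ‖u‖ ^ 2) * b ^ 2 + 2 * b * (α - ⟪u, v⟫) + (β - ‖v‖ ^ 2) with hq
  have hdir : (affineSpan ℝ (Set.range s)).direction = U := by
    rw [direction_affineSpan, vectorSpan_range_eq_span_range_vsub_right ℝ s 0]
    rfl
  have haff : ∀ y, y ∈ affineSpan ℝ (Set.range s) ↔ y - v ∈ U := by
    intro y
    rw [← hdir]
    exact (AffineSubspace.vsub_right_mem_direction_iff_mem hv y).symm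
  have hsU : ∀ i, s i - v ∈ U := fun i =>
    (haff _).1 (subset_affineSpan ℝ _ (Set.mem_range_self i))
  have hXiff : ∀ b x, (b, x) ∈ X ↔ x - v - b • u ∈ Uᗮ ∧ ‖x - v - b • u‖ ^ 2 = q b := by
    intro b x
    have hid : ∀ i, ‖s i - x‖ ^ 2 - (t i - b) ^ 2 = - 2 * ⟪s i - v, x - v - b • u⟫ +
        (‖x - v - b • u‖ ^ 2 - q b) + 2 * b * ⟪u, x - v - b • u⟫ := by
      intro i
      rw [aux_identity u v (s i) x α β (t i) b]
      simp only [hq]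
      linear_combination (-1) * hβ i - 2 * b * hα i
    subst hX
    constructor
    · intro h
      have h' : ∀ i, ‖s i - x‖ ^ 2 = (t i - b) ^ 2 := h
      have hw : x - v - b • u ∈ Uᗮ := by
        rw [Submodule.mem_orthogonal]
        intro z hz
        induction hz using Submodule.span_induction with
        | mem z hz =>
          obtain ⟨i, rfl⟩ := hz
          have e1 := hid i
          have e2 := hid 0
          rw [h' i] at e1
          rw [h' 0] at e2
          have : s i - s 0 = (s i - v) - (s 0 - v) := by abel
          simp only [this]
          rw [inner_sub_left]
          linarith
        | zero => simp
        | add a b _ _ ha hb => rw [inner_add_left, ha, hb, add_zero]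
        | smul c a _ ha => rw [inner_smul_left, ha, mul_zero]
      refine ⟨hw, ?_⟩
      have e2 := hid 0
      rw [h' 0, Submodule.inner_right_of_mem_orthogonal (hsU 0) hw,
        Submodule.inner_right_of_mem_orthogonal hu hw] at e2
      linarith
    · rintro ⟨hw, hn⟩ i
      have e2 := hid i
      rw [Submodule.inner_right_of_mem_orthogonal (hsU i) hw,
        Submodule.inner_right_of_mem_orthogonal hu hw] at e2
      show ‖s i - x‖ ^ 2 = (t i - b) ^ 2
      linarith
  have hid : ∀ b x y τ, (b, x) ∈ X → ‖y - x‖ ^ 2 - (τ - b) ^ 2 =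
      (‖y‖ ^ 2 - τ ^ 2 - 2 * ⟪y, v⟫ + β) + 2 * b * (τ + α - ⟪u, y⟫)
        - 2 * ⟪y - v, x - v - b • u⟫ := by
    intro b x y τ h
    obtain ⟨hw, hn⟩ := (hXiff b x).1 h
    rw [aux_identity u v y x α β τ b, Submodule.inner_right_of_mem_orthogonal hu hw, hn]
    simp only [hq]
    ring
  have hmk : ∀ b w, w ∈ Uᗮ → ‖w‖ ^ 2 = q b → (b, v + b • u + w) ∈ X := by
    intro b w hw hn
    rw [hXiff]
    have : v + b • u + w - v - b • u = w := by abel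
    rw [this]
    exact ⟨hw, hn⟩
  subst hS hS'
  ext ⟨τ, y⟩
  simp only [Set.mem_setOf_eq]
  constructor
  · intro hy
    set A := ‖y‖ ^ 2 - τ ^ 2 - 2 * ⟪y, v⟫ + β with hA
    set B := τ + α - ⟪u, y⟫ with hB
    obtain ⟨p, hp, r, hr, hpr⟩ := U.exists_add_mem_mem_orthogonal (y - v)
    have hinn : ∀ w ∈ Uᗮ, ⟪y - v, w⟫ = ⟪r, w⟫ := by
      intro w hw
      rw [hpr, inner_add_left, Submodule.inner_right_of_mem_orthogonal hp hw, zero_add]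
    have H : ∀ b w, w ∈ Uᗮ → ‖w‖ ^ 2 = q b → A + 2 * b * B - 2 * ⟪r, w⟫ = 0 := by
      intro b w hw hn
      have hm := hmk b w hw hn
      have e := hid b _ y τ hm
      have e' := hy _ hm
      have : v + b • u + w - v - b • u = w := by abel
      rw [this, hinn w hw] at e
      simp only at e'
      linarith
    have exw : ∀ b z, z ∈ Uᗮ → z ≠ 0 → 0 ≤ q b →
        ‖(√(q b) / ‖z‖) • z‖ ^ 2 = q b := by
      intro b z _ hz0 hqb
      have : ‖z‖ ≠ 0 := norm_ne_zero_iff.mpr hz0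
      rw [norm_smul, Real.norm_of_nonneg (by positivity), div_mul_cancel₀ _ this, Real.sq_sqrt hqb]
    have step1 : ∀ b, 0 < q b → r = 0 := by
      intro b hb
      by_contra hr0
      have n1 := exw b r hr hr0 hb.le
      have h1 := H b _ (Submodule.smul_mem _ _ hr) n1
      have h2 := H b (-((√(q b) / ‖r‖) • r)) (Submodule.neg_mem _ (Submodule.smul_mem _ _ hr))
        (by rw [norm_neg]; exact n1)
      rw [inner_neg_right, inner_smul_right, real_inner_self_eq_norm_sq] at h2
      rw [inner_smul_right, real_inner_self_eq_norm_sq] at h1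
      have hrp : 0 < ‖r‖ := norm_pos_iff.mpr hr0
      have hs : 0 < √(q b) := Real.sqrt_pos.mpr hb
      have : 0 < √(q b) / ‖r‖ * ‖r‖ ^ 2 := by positivity
      linarith
    have lin : ∀ b w, w ∈ Uᗮ → ‖w‖ ^ 2 = q b → A + 2 * b * B = 0 := by
      intro b w hw hn
      have h := H b w hw hn
      by_cases hq0 : 0 < q b
      · rw [step1 b hq0, inner_zero_left] at h
        linarith
      · have hw0 : w = 0 := by
          rw [← norm_eq_zero, ← sq_eq_zero_iff]
          exact le_antisymm (by linarith) (sq_nonneg _)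
        rw [hw0, inner_zero_right] at h
        linarith
    obtain ⟨⟨b1, x1⟩, h1, ⟨b2, x2⟩, h2, hne⟩ := hnt
    obtain ⟨hw1, hn1⟩ := (hXiff b1 x1).1 h1
    obtain ⟨hw2, hn2⟩ := (hXiff b2 x2).1 h2
    have solve : ∀ b b', b ≠ b' → A + 2 * b * B = 0 → A + 2 * b' * B = 0 → A = 0 ∧ B = 0 := by
      intro b b' hbb e e'
      have : B = 0 := by
        apply mul_left_cancel₀ (sub_ne_zero.mpr hbb)
        linarith
      rw [this] at e ⊢
      exact ⟨by linarith, rfl⟩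
    have key : (A = 0 ∧ B = 0) ∧ r = 0 := by
      by_cases hb : b1 = b2
      · subst hb
        have hqp : 0 < q b1 := by
          by_contra hc
          apply hne
          have z1 : x1 - v - b1 • u = 0 := by
            rw [← norm_eq_zero, ← sq_eq_zero_iff]
            exact le_antisymm (by linarith) (sq_nonneg _)
          have z2 : x2 - v - b1 • u = 0 := by
            rw [← norm_eq_zero, ← sq_eq_zero_iff]
            exact le_antisymm (by linarith) (sq_nonneg _)
          have : x1 = x2 := by
            have := z1.trans z2.symm
            simpa using this
          rw [this]
        have hw0 : x1 - v - b1 • u ≠ 0 := by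
          intro h0
          rw [h0, norm_zero] at hn1
          norm_num at hn1
          linarith
        have hcont : Continuous q := by
          simp only [hq]
          fun_prop
        have hev : ∀ᶠ b in nhdsWithin b1 {b1}ᶜ, 0 < q b :=
          (hcont.continuousAt.eventually (lt_mem_nhds hqp)).filter_mono nhdsWithin_le_nhds
        obtain ⟨b', hb', hne'⟩ := (hev.and self_mem_nhdsWithin).exists
        have hne'' : b' ≠ b1 := hne'
        exact ⟨solve b' b1 hne''
          (lin b' _ (Submodule.smul_mem _ _ hw1) (exw b' _ hw1 hw0 hb'.le))
          (lin b1 _ hw1 hn1), step1 b1 hqp⟩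
      · have hAB := solve b1 b2 hb (lin b1 _ hw1 hn1) (lin b2 _ hw2 hn2)
        refine ⟨hAB, ?_⟩
        by_cases hex : ∃ b, 0 < q b
        · obtain ⟨b, hb⟩ := hex
          exact step1 b hb
        · push Not at hex
          obtain ⟨ea, ec, ed⟩ := aux_quad _ _ _ b1 b2 hb
            (show 0 ≤ q b1 by rw [← hn1]; positivity)
            (show 0 ≤ q b2 by rw [← hn2]; positivity) hex
          obtain ⟨hA0, hB0⟩ := hAB
          have f1 : ‖y - v‖ ^ 2 = ⟪u, y - v⟫ ^ 2 := by
            rw [norm_sub_sq_real, inner_sub_right]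
            have : τ = ⟪u, y⟫ - ⟪u, v⟫ := by linarith
            rw [← this]
            linarith
          have f2 : ⟪u, y - v⟫ = ⟪u, p⟫ := by
            rw [hpr, inner_add_right, Submodule.inner_right_of_mem_orthogonal hu hr, add_zero]
          have f3 : ‖y - v‖ ^ 2 = ‖p‖ ^ 2 + ‖r‖ ^ 2 := by
            rw [hpr, norm_add_sq_real, Submodule.inner_right_of_mem_orthogonal hp hr]
            ring
          have f4 : ⟪u, p⟫ ^ 2 ≤ ‖u‖ ^ 2 * ‖p‖ ^ 2 := by
            rw [← mul_pow]
            exact sq_le_sq' (neg_le_of_abs_le (abs_real_inner_le_norm u p))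
              (real_inner_le_norm u p)
          have f5 : ‖u‖ ^ 2 = 1 := by linarith
          rw [f5, one_mul] at f4
          rw [f2] at f1
          rw [← norm_eq_zero, ← sq_eq_zero_iff]
          exact le_antisymm (by linarith) (sq_nonneg _)
    obtain ⟨⟨hA0, hB0⟩, hr0⟩ := key
    refine ⟨?_, by linarith, ?_⟩
    · rw [haff, hpr, hr0, add_zero]
      exact hp
    · have : τ = ⟪u, y⟫ - α := by linarith
      rw [inner_sub_left, inner_smul_left, real_inner_comm y v, RCLike.conj_to_real]
      rw [hA, this] at hA0
      linear_combination hA0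
  · rintro ⟨h1, h2, h3⟩ ⟨b, x⟩ hx
    have e := hid b x y τ hx
    obtain ⟨hw, hn⟩ := (hXiff b x).1 hx
    rw [Submodule.inner_right_of_mem_orthogonal ((haff y).1 h1) hw] at e
    rw [inner_sub_left, inner_smul_left, real_inner_comm y v, RCLike.conj_to_real] at h3
    show ‖y - x‖ ^ 2 = (τ - b) ^ 2
    subst h2
    linear_combination e + h3
end

section
/- Let (t,s) ∈ ℝ × ℝⁿ satisfy ⟨s, wⱼ⟩ = ⟨s₁, wⱼ⟩ for all j = 1,…,k and t = ⟨u, s⟩ − α, and let 𝔛′ = {(b,x) ∈ 𝔛 : ‖s − x‖² = (t − b)²} be the solution set of the system enlarged by the pair (t,s). Then 𝔛′ = 𝔛 if h̃(s) = 0, and 𝔛′ = ∅ if h̃(s) ≠ 0. -/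
open scoped RealInnerProductSpace

theorem stmt_6 {n m : ℕ} [NeZero m] (hn : 1 ≤ n) (hm : m ≤ n + 1)
    (s : Fin m → EuclideanSpace ℝ (Fin n)) (t : Fin m → ℝ)
    (hindep : AffineIndependent ℝ s)
    (u v : EuclideanSpace ℝ (Fin n)) (α β : ℝ)
    (hu : u ∈ Submodule.span ℝ (Set.range fun i => s i - s 0))
    (hα : ∀ i, ⟪u, s i⟫ - α = t i)
    (hv : v ∈ affineSpan ℝ (Set.range s))
    (hβ : ∀ i, 2 * ⟪s i, v⟫ - β = ‖s i‖ ^ 2 - t i ^ 2)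
    {k : ℕ} (hk : k = n - (m - 1))
    (w : Fin k → EuclideanSpace ℝ (Fin n)) (hw : Orthonormal ℝ w)
    (hwspan : Submodule.span ℝ (Set.range w)
      = (Submodule.span ℝ (Set.range fun i => s i - s 0))ᗮ)
    (X : Set (ℝ × EuclideanSpace ℝ (Fin n)))
    (hX : X = {p : ℝ × EuclideanSpace ℝ (Fin n) | ∀ i, ‖s i - p.2‖ ^ 2 = (t i - p.1) ^ 2})
    (τ : ℝ) (σ : EuclideanSpace ℝ (Fin n))
    (hσw : ∀ j, ⟪σ, w j⟫ = ⟪s 0, w j⟫)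
    (hτ : τ = ⟪u, σ⟫ - α)
    (X' : Set (ℝ × EuclideanSpace ℝ (Fin n)))
    (hX' : X' = {p ∈ X | ‖σ - p.2‖ ^ 2 = (τ - p.1) ^ 2}) :
    (‖σ‖ ^ 2 - ⟪u, σ⟫ ^ 2 + 2 * ⟪α • u - v, σ⟫ + β - α ^ 2 = 0 → X' = X) ∧
    (‖σ‖ ^ 2 - ⟪u, σ⟫ ^ 2 + 2 * ⟪α • u - v, σ⟫ + β - α ^ 2 ≠ 0 → X' = ∅) := by
  have key : ∀ p ∈ X, ‖σ - p.2‖ ^ 2 - (τ - p.1) ^ 2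
      = ‖σ‖ ^ 2 - ⟪u, σ⟫ ^ 2 + 2 * ⟪α • u - v, σ⟫ + β - α ^ 2 := by
    rintro ⟨b, x⟩ hp
    rw [hX] at hp
    have hp' : ∀ i, ‖s i - x‖ ^ 2 = (t i - b) ^ 2 := hp
    have haff : ∀ i, 2 * ⟪s i, v - x + b • u⟫ = β + 2 * b * α - ‖x‖ ^ 2 + b ^ 2 := by
      intro i
      have h1 := hp' i
      have h2 := hβ i
      have h3 := hα i
      rw [norm_sub_sq_real] at h1
      rw [real_inner_comm] at h3
      simp only [inner_add_right, inner_sub_right, inner_smul_right]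
      rw [← h3] at h1 h2
      linarith
    have hz : v - x + b • u ∈ Submodule.span ℝ (Set.range w) := by
      rw [hwspan, Submodule.mem_orthogonal]
      intro y hy
      induction hy using Submodule.span_induction with
      | mem y hy =>
        obtain ⟨i, rfl⟩ := hy
        have h1 := haff i
        have h2 := haff 0
        simp only [inner_sub_left]
        linarith
      | zero => simp
      | add a c _ _ ha hc => rw [inner_add_left, ha, hc, add_zero]
      | smul r a _ ha => rw [inner_smul_left, ha, mul_zero]
    have hsz : ∀ z ∈ Submodule.span ℝ (Set.range w), ⟪σ, z⟫ = ⟪s 0, z⟫ := by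
      intro z hz
      induction hz using Submodule.span_induction with
      | mem y hy =>
        obtain ⟨i, rfl⟩ := hy
        exact hσw i
      | zero => simp
      | add a c _ _ ha hc => rw [inner_add_right, inner_add_right, ha, hc]
      | smul r a _ ha => rw [inner_smul_right, inner_smul_right, ha]
    have h0 := haff 0
    rw [← hsz _ hz] at h0
    simp only [inner_add_right, inner_sub_right, inner_smul_right] at h0
    show ‖σ - x‖ ^ 2 - (τ - b) ^ 2 = _
    rw [norm_sub_sq_real, hτ, inner_sub_left, inner_smul_left, real_inner_comm σ u,
      real_inner_comm σ v]
    simp only [conj_trivial]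
    linarith
  constructor
  · intro h
    rw [hX']
    ext p
    refine ⟨fun hp => hp.1, fun hp => ⟨hp, ?_⟩⟩
    have := key p hp
    linarith
  · intro h
    rw [hX', Set.eq_empty_iff_forall_notMem]
    rintro p ⟨hp, hq⟩
    have := key p hp
    apply h
    linarith
end

section
/- Assume t₁,…,t_m are not all equal, 𝔛 has at least two elements, and e = ‖u‖ ∉ {0,1}. Then Q_sat = {v + z₀·u + Σ_{i=1}^{m−2} zᵢ·w′ᵢ : z₀,…,z_{m−2} ∈ ℝ with Σ_{i=1}^{m−2} zᵢ² − e²(e² − 1)(z₀ + μ)² + ρ = 0}. -/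
open scoped RealInnerProductSpace

theorem core_aux {E : Type*} [NormedAddCommGroup E] [InnerProductSpace ℝ E] (K : Submodule ℝ E)
    (e μ ρ : ℝ) (he : 0 < e) (he1 : e ≠ 1) (b1 b2 : ℝ) (y1 y2 : E)
    (hy1 : y1 ∈ K) (hy2 : y2 ∈ K)
    (h1 : ‖y1‖ ^ 2 + (e ^ 2 - 1) * (b1 + μ) ^ 2 = ρ)
    (h2 : ‖y2‖ ^ 2 + (e ^ 2 - 1) * (b2 + μ) ^ 2 = ρ)
    (hne : b1 ≠ b2 ∨ y1 ≠ y2) (q : E) (hq : q ∈ K) (A B : ℝ)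
    (H : ∀ b : ℝ, ∀ y ∈ K, ‖y‖ ^ 2 + (e ^ 2 - 1) * (b + μ) ^ 2 = ρ →
      A + 2 * b * B - 2 * ⟪q, y⟫ = 0) : q = 0 ∧ B = 0 ∧ A = 0 := by
  have key : ∃ b : ℝ, ∃ y ∈ K, ‖y‖ ^ 2 + (e ^ 2 - 1) * (b + μ) ^ 2 = ρ ∧ b + μ ≠ 0 := by
    by_cases c1 : b1 + μ = 0
    · by_cases c2 : b2 + μ = 0
      · have hb : b1 = b2 := by linarith
        have hyy : y1 ≠ y2 := by
          rcases hne with h | h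
          · exact absurd hb h
          · exact h
        rw [c1] at h1
        rw [c2] at h2
        have hy0 : y1 ≠ 0 := by
          intro h
          rw [h] at h1
          simp at h1
          rw [← h1] at h2
          simp at h2
          exact hyy (h.trans h2.symm)
        have hn : ‖y1‖ ≠ 0 := norm_ne_zero_iff.mpr hy0
        refine ⟨-μ + ‖y1‖ / e, e⁻¹ • y1, K.smul_mem _ hy1, ?_, ?_⟩
        · rw [norm_smul, Real.norm_of_nonneg (by positivity), ← h1]
          field_simp
          ring
        · have : -μ + ‖y1‖ / e + μ = ‖y1‖ / e := by ring
          rw [this]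
          exact div_ne_zero hn he.ne'
      · exact ⟨b2, y2, hy2, h2, c2⟩
    · exact ⟨b1, y1, hy1, h1, c1⟩
  obtain ⟨b, y, hy, hby, hb⟩ := key
  have hq0 : q = 0 := by
    by_contra hqn
    have hn : 0 < ‖q‖ := norm_pos_iff.mpr hqn
    have hr : ∃ d : ℝ, 0 < ρ - (e ^ 2 - 1) * d ^ 2 := by
      rcases lt_or_gt_of_ne he1 with h | h
      · have h3 : 0 < 1 - e ^ 2 := by nlinarith
        refine ⟨Real.sqrt ((|ρ| + 1) / (1 - e ^ 2)), ?_⟩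
        rw [Real.sq_sqrt (by positivity)]
        have : (e ^ 2 - 1) * ((|ρ| + 1) / (1 - e ^ 2)) = -(|ρ| + 1) := by
          field_simp
          ring
        rw [this]
        have := neg_abs_le ρ
        linarith
      · have h3 : 0 < e ^ 2 - 1 := by nlinarith
        refine ⟨0, ?_⟩
        have : 0 < (e ^ 2 - 1) * (b + μ) ^ 2 := by positivity
        have := sq_nonneg ‖y‖
        linarith
    obtain ⟨d, hd⟩ := hr
    set r := ρ - (e ^ 2 - 1) * d ^ 2 with hrd
    have hc : 0 < Real.sqrt r / ‖q‖ := div_pos (Real.sqrt_pos.mpr hd) hn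
    have hcn : (Real.sqrt r / ‖q‖ * ‖q‖) ^ 2 = r := by
      rw [div_mul_cancel₀ _ hn.ne', Real.sq_sqrt hd.le]
    set c := Real.sqrt r / ‖q‖
    have e1 := H (d - μ) (c • q) (K.smul_mem _ hq) (by
      rw [norm_smul, Real.norm_of_nonneg hc.le, hcn, sub_add_cancel, hrd]; ring)
    have e2 := H (d - μ) (-(c • q)) (K.neg_mem (K.smul_mem _ hq)) (by
      rw [norm_neg, norm_smul, Real.norm_of_nonneg hc.le, hcn, sub_add_cancel, hrd]; ring)
    rw [inner_neg_right] at e2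
    have e3 : ⟪q, c • q⟫ = 0 := by linarith
    rw [inner_smul_right, real_inner_self_eq_norm_sq] at e3
    have : 0 < c * ‖q‖ ^ 2 := by positivity
    linarith
  subst hq0
  have e1 := H b y hy hby
  have e2 := H (-2 * μ - b) y hy (by rw [← hby]; ring)
  rw [inner_zero_left] at e1 e2
  have e3 : B * (b + μ) = 0 := by linarith
  have hB : B = 0 := (mul_eq_zero.mp e3).resolve_right hb
  refine ⟨rfl, hB, ?_⟩
  rw [hB] at e1
  linarith

theorem stmt_7 {n m : ℕ} [NeZero m] (hn : 1 ≤ n) (hm : m ≤ n + 1)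
    (s : Fin m → EuclideanSpace ℝ (Fin n)) (t : Fin m → ℝ)
    (hindep : AffineIndependent ℝ s)
    (u v : EuclideanSpace ℝ (Fin n)) (α β : ℝ)
    (hu : u ∈ Submodule.span ℝ (Set.range fun i => s i - s 0))
    (hα : ∀ i, ⟪u, s i⟫ - α = t i)
    (hv : v ∈ affineSpan ℝ (Set.range s))
    (hβ : ∀ i, 2 * ⟪s i, v⟫ - β = ‖s i‖ ^ 2 - t i ^ 2)
    (X : Set (ℝ × EuclideanSpace ℝ (Fin n)))
    (hX : X = {p : ℝ × EuclideanSpace ℝ (Fin n) | ∀ i, ‖s i - p.2‖ ^ 2 = (t i - p.1) ^ 2})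
    (S : Set (ℝ × EuclideanSpace ℝ (Fin n)))
    (hS : S = {q : ℝ × EuclideanSpace ℝ (Fin n) | ∀ p ∈ X, ‖q.2 - p.2‖ ^ 2 = (q.1 - p.1) ^ 2})
    (Qsat : Set (EuclideanSpace ℝ (Fin n)))
    (hQsat : Qsat = {x : EuclideanSpace ℝ (Fin n) | ∃ τ : ℝ, (τ, x) ∈ S})
    (htne : ∃ i j : Fin m, t i ≠ t j)
    (hX2 : X.Nontrivial)
    (hu0 : u ≠ 0)
    (e μ ρ : ℝ) (he : e = ‖u‖) (he0 : e ≠ 0) (he1 : e ≠ 1)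
    (hμ : μ = (⟪u, v⟫ - α) / (e ^ 2 - 1))
    (hρ : ρ = (⟪u, v⟫ - α) ^ 2 / (e ^ 2 - 1) - ‖v‖ ^ 2 + β)
    (w' : Fin (m - 2) → EuclideanSpace ℝ (Fin n)) (hw' : Orthonormal ℝ w')
    (hw'u : ∀ i, ⟪u, w' i⟫ = 0)
    (hw'span : Submodule.span ℝ (insert u (Set.range w'))
      = Submodule.span ℝ (Set.range fun i => s i - s 0)) :
    Qsat = {x : EuclideanSpace ℝ (Fin n) | ∃ (z₀ : ℝ) (z : Fin (m - 2) → ℝ),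
      x = v + z₀ • u + ∑ i, z i • w' i ∧
      (∑ i, z i ^ 2) - e ^ 2 * (e ^ 2 - 1) * (z₀ + μ) ^ 2 + ρ = 0} := by
  have hepos : 0 < e := lt_of_le_of_ne (he ▸ norm_nonneg u) (Ne.symm he0)
  have hk : e ^ 2 - 1 ≠ 0 := by
    intro h
    have : (e - 1) * (e + 1) = 0 := by linarith
    rcases mul_eq_zero.mp this with h | h
    · exact he1 (by linarith)
    · linarith
  have hg : ⟪u, v⟫ - α = (e ^ 2 - 1) * μ := by rw [hμ]; field_simp
  have hρ' : ρ = (e ^ 2 - 1) * μ ^ 2 - ‖v‖ ^ 2 + β := by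
    rw [hρ, hg]; field_simp
  set U := Submodule.span ℝ (Set.range fun i => s i - s 0) with hU
  have hsU : ∀ i, s i - s 0 ∈ U := fun i => Submodule.subset_span ⟨i, rfl⟩
  have hvU : v - s 0 ∈ U := by
    have h0 : s 0 ∈ affineSpan ℝ (Set.range s) := subset_affineSpan _ _ ⟨0, rfl⟩
    have := AffineSubspace.vsub_mem_direction hv h0
    rw [direction_affineSpan, vectorSpan_eq_span_vsub_set_right ℝ (Set.mem_range_self 0),
      ← Set.range_comp] at this
    exact this
  have hsv : ∀ i, s i - v ∈ U := fun i => by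
    have := U.sub_mem (hsU i) hvU
    simpa using this
  have hee : ⟪u, u⟫ = e ^ 2 := by rw [real_inner_self_eq_norm_sq, he]
  have perp : ∀ a ∈ U, ∀ y ∈ Uᗮ, ⟪a, y⟫ = 0 := fun a ha y hy =>
    (Submodule.mem_orthogonal U y).mp hy a ha
  -- expansion
  have expand : ∀ (b : ℝ) (y : EuclideanSpace ℝ (Fin n)) (i : Fin m),
      ‖s i - (v + b • u + y)‖ ^ 2 - (t i - b) ^ 2
        = ‖y‖ ^ 2 + (e ^ 2 - 1) * (b + μ) ^ 2 - ρ - 2 * ⟪s i - v, y⟫ + 2 * b * ⟪u, y⟫ := by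
    intro b y i
    have h1 := hβ i
    have h2 := hα i
    rw [← real_inner_self_eq_norm_sq] at h1
    rw [hρ', ← real_inner_self_eq_norm_sq, ← real_inner_self_eq_norm_sq,
      ← real_inner_self_eq_norm_sq]
    simp only [inner_sub_left, inner_sub_right, inner_add_left, inner_add_right,
      real_inner_smul_left, real_inner_smul_right]
    have c1 := real_inner_comm v (s i)
    have c2 := real_inner_comm u (s i)
    have c3 := real_inner_comm y (s i)
    have c4 := real_inner_comm u v
    have c5 := real_inner_comm y v
    have c6 := real_inner_comm y u
    have c7 := real_inner_comm v u
    rw [c1, c2, c3, c5, c6, hee, ← h2]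
    rw [← h2, c1] at h1
    linear_combination (-1 : ℝ) * h1 + 2 * b * hg - b * c7
  have hXmem : ∀ (b : ℝ), ∀ y ∈ Uᗮ, ((b, v + b • u + y) ∈ X ↔
      ‖y‖ ^ 2 + (e ^ 2 - 1) * (b + μ) ^ 2 = ρ) := by
    intro b y hy
    rw [hX]
    simp only [Set.mem_setOf_eq]
    have hh : ∀ i, ‖s i - (v + b • u + y)‖ ^ 2 - (t i - b) ^ 2
        = ‖y‖ ^ 2 + (e ^ 2 - 1) * (b + μ) ^ 2 - ρ := fun i => by
      rw [expand, perp _ (hsv i) y hy, perp _ hu y hy]; ring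
    constructor
    · intro h
      have := hh 0
      rw [h 0] at this
      linarith
    · intro h i
      have := hh i
      linarith
  have hXform : ∀ p ∈ X, ∃ y ∈ Uᗮ, p.2 = v + p.1 • u + y := by
    intro p hp
    refine ⟨p.2 - (v + p.1 • u), ?_, by abel⟩
    rw [hX] at hp
    have hz : ∀ i, ⟪s i - s 0, p.2 - (v + p.1 • u)⟫ = 0 := by
      intro i
      have a1 := expand p.1 (p.2 - (v + p.1 • u)) i
      have a2 := expand p.1 (p.2 - (v + p.1 • u)) 0
      rw [add_sub_cancel, hp _, sub_self] at a1 a2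
      have : s i - s 0 = (s i - v) - (s 0 - v) := by abel
      rw [this, inner_sub_left]
      linarith
    rw [Submodule.mem_orthogonal]
    intro a ha
    induction ha using Submodule.span_induction with
    | mem x hx => obtain ⟨i, rfl⟩ := hx; exact hz i
    | zero => simp
    | add x y _ _ hx hy => rw [inner_add_left, hx, hy, add_zero]
    | smul c x _ hx => rw [real_inner_smul_left, hx, mul_zero]
  have expand2 : ∀ (τ b : ℝ), ∀ p ∈ U, ∀ q ∈ Uᗮ, ∀ y ∈ Uᗮ,
      ‖y‖ ^ 2 + (e ^ 2 - 1) * (b + μ) ^ 2 = ρ →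
      ‖(v + p + q) - (v + b • u + y)‖ ^ 2 - (τ - b) ^ 2 =
        (‖p‖ ^ 2 + ‖q‖ ^ 2 + ρ - (e ^ 2 - 1) * μ ^ 2 - τ ^ 2)
          + 2 * b * (τ - ⟪p, u⟫ - (e ^ 2 - 1) * μ) - 2 * ⟪q, y⟫ := by
    intro τ b p hp q hq y hy h
    have h1 : (v + p + q) - (v + b • u + y) = (p - b • u) + (q - y) := by abel
    have h2 : ⟪p - b • u, q - y⟫ = 0 :=
      perp _ (U.sub_mem hp (U.smul_mem _ hu)) _ (Uᗮ.sub_mem hq hy)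
    rw [h1, norm_add_sq_real, h2, norm_sub_sq_real, norm_sub_sq_real, ← h, norm_smul, mul_pow,
      ← he, Real.norm_eq_abs, sq_abs, real_inner_smul_right]
    ring
  have hS' : ∀ (τ : ℝ) (x : EuclideanSpace ℝ (Fin n)), (τ, x) ∈ S ↔
      ∃ p ∈ U, x = v + p ∧ τ = ⟪p, u⟫ + (e ^ 2 - 1) * μ ∧
        ‖p‖ ^ 2 + ρ - (e ^ 2 - 1) * μ ^ 2 - τ ^ 2 = 0 := by
    intro τ x
    rw [hS]
    simp only [Set.mem_setOf_eq]
    constructor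
    · intro h
      obtain ⟨p, hp, q, hq, hpq⟩ := U.exists_add_mem_mem_orthogonal (x - v)
      have hx : x = v + p + q := by rw [add_assoc, ← hpq]; abel
      obtain ⟨p1, hp1, p2, hp2, hne⟩ := hX2
      obtain ⟨y1, hy1, f1⟩ := hXform p1 hp1
      obtain ⟨y2, hy2, f2⟩ := hXform p2 hp2
      have g1 : (p1.1, v + p1.1 • u + y1) ∈ X := by rw [← f1]; exact hp1
      have g2 : (p2.1, v + p2.1 • u + y2) ∈ X := by rw [← f2]; exact hp2
      obtain ⟨r1, r2, r3⟩ := core_aux Uᗮ e μ ρ hepos he1 p1.1 p2.1 y1 y2 hy1 hy2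
        ((hXmem _ _ hy1).mp g1) ((hXmem _ _ hy2).mp g2) (by
          by_contra hc
          push Not at hc
          apply hne
          refine Prod.ext hc.1 ?_
          rw [f1, f2, hc.1, hc.2]) q hq
        (‖p‖ ^ 2 + ‖q‖ ^ 2 + ρ - (e ^ 2 - 1) * μ ^ 2 - τ ^ 2)
        (τ - ⟪p, u⟫ - (e ^ 2 - 1) * μ) (by
          intro b y hy hby
          have := h _ ((hXmem b y hy).mpr hby)
          rw [← expand2 τ b p hp q hq y hy hby, ← hx, this, sub_self])
      refine ⟨p, hp, by rw [hx, r1, add_zero], by linarith, ?_⟩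
      rw [r1, norm_zero] at r3
      linarith
    · rintro ⟨p, hp, rfl, hτ, h⟩ ⟨b, x⟩ hbx
      obtain ⟨y, hy, f⟩ := hXform _ hbx
      simp only at f
      subst f
      have := expand2 τ b p hp 0 (Submodule.zero_mem _) y hy ((hXmem b y hy).mp hbx)
      rw [add_zero, norm_zero, inner_zero_left] at this
      have h3 : τ - ⟪p, u⟫ - (e ^ 2 - 1) * μ = 0 := by linarith
      rw [h3] at this
      simp only
      linarith
  have hwU : ∀ i, w' i ∈ U := fun i => by
    rw [← hw'span]; exact Submodule.subset_span (Or.inr ⟨i, rfl⟩)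
  have hin : ∀ z : Fin (m - 2) → ℝ, ⟪u, ∑ i, z i • w' i⟫ = 0 := fun z => by
    rw [inner_sum]
    exact Finset.sum_eq_zero fun i _ => by rw [real_inner_smul_right, hw'u, mul_zero]
  have hns : ∀ z : Fin (m - 2) → ℝ, ‖∑ i, z i • w' i‖ ^ 2 = ∑ i, z i ^ 2 := fun z => by
    rw [← real_inner_self_eq_norm_sq, hw'.inner_sum]
    simp [sq]
  have hpn : ∀ (z₀ : ℝ) (z : Fin (m - 2) → ℝ),
      ‖z₀ • u + ∑ i, z i • w' i‖ ^ 2 = z₀ ^ 2 * e ^ 2 + ∑ i, z i ^ 2 := fun z₀ z => by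
    rw [norm_add_sq_real, hns, real_inner_smul_left, hin, norm_smul, mul_pow, ← he,
      Real.norm_eq_abs, sq_abs]
    ring
  have hpu : ∀ (z₀ : ℝ) (z : Fin (m - 2) → ℝ),
      ⟪z₀ • u + ∑ i, z i • w' i, u⟫ = z₀ * e ^ 2 := fun z₀ z => by
    rw [real_inner_comm, inner_add_right, hin, real_inner_smul_right, hee, add_zero]
  ext x
  rw [hQsat]
  simp only [Set.mem_setOf_eq, hS']
  constructor
  · rintro ⟨τ, p, hp, rfl, hτ, h⟩
    rw [← hw'span, Submodule.mem_span_insert] at hp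
    obtain ⟨z₀, r, hr, rfl⟩ := hp
    obtain ⟨z, rfl⟩ := (Submodule.mem_span_range_iff_exists_fun ℝ).mp hr
    refine ⟨z₀, z, by rw [add_assoc], ?_⟩
    rw [hpu] at hτ
    rw [hpn, hτ] at h
    linarith
  · rintro ⟨z₀, z, rfl, h⟩
    refine ⟨_, z₀ • u + ∑ i, z i • w' i, U.add_mem (U.smul_mem _ hu)
      (U.sum_mem fun i _ => U.smul_mem _ (hwU i)), by rw [add_assoc], rfl, ?_⟩
    rw [hpu, hpn]
    linarith
end

section
/- Assume t₁,…,t_m are not all equal, 𝔛 has at least two elements, and e = ‖u‖ ∉ {0,1}. Then (e² − 1)·ρ > 0 (in particular ρ ≠ 0 and ρ/(e² − 1) > 0), and the intersection of Q_sol with the affine span of s₁,…,s_m consists exactly of the two points c + √(ρ/(e² − 1))·u and c − √(ρ/(e² − 1))·u; these two points belong to Q_sol, i.e., they are positions occurring in solutions of the squared global positioning equations. -/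
open scoped RealInnerProductSpace

lemma aux_aff {n m : ℕ} (s : Fin m → EuclideanSpace ℝ (Fin n)) (w : EuclideanSpace ℝ (Fin n)) (K : ℝ)
    (h : ∀ i, ⟪s i, w⟫ = K) (p : EuclideanSpace ℝ (Fin n))
    (hp : p ∈ affineSpan ℝ (Set.range s)) : ⟪p, w⟫ = K := by
  refine affineSpan_induction (p := fun p => ⟪p, w⟫ = K) hp ?_ ?_
  · rintro _ ⟨i, rfl⟩
    exact h i
  · intro c a b d ha hb hd
    simp only [vsub_eq_sub, vadd_eq_add, inner_add_left, inner_smul_left, inner_sub_left, ha, hb, hd]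
    simp

lemma aux_span {n m : ℕ} [NeZero m] (s : Fin m → EuclideanSpace ℝ (Fin n))
    (w u : EuclideanSpace ℝ (Fin n)) (K : ℝ)
    (h : ∀ i, ⟪s i, w⟫ = K)
    (hu : u ∈ Submodule.span ℝ (Set.range fun i => s i - s 0)) : ⟪u, w⟫ = 0 := by
  induction hu using Submodule.span_induction with
  | mem x hx => obtain ⟨i, rfl⟩ := hx; simp [inner_sub_left, h]
  | zero => simp
  | add x y _ _ hx hy => simp [inner_add_left, hx, hy]
  | smul a x _ hx => simp [inner_smul_left, hx]

lemma aux_dir {n m : ℕ} [NeZero m] (s : Fin m → EuclideanSpace ℝ (Fin n))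
    (u v : EuclideanSpace ℝ (Fin n)) (b : ℝ)
    (hu : u ∈ Submodule.span ℝ (Set.range fun i => s i - s 0))
    (hv : v ∈ affineSpan ℝ (Set.range s)) : v + b • u ∈ affineSpan ℝ (Set.range s) := by
  have h1 : u ∈ (affineSpan ℝ (Set.range s)).direction := by
    refine (Submodule.span_le.2 ?_) hu
    rintro _ ⟨i, rfl⟩
    exact AffineSubspace.vsub_mem_direction (mem_affineSpan ℝ ⟨i, rfl⟩) (mem_affineSpan ℝ ⟨0, rfl⟩)
  have := AffineSubspace.vadd_mem_of_mem_direction (Submodule.smul_mem _ b h1) hv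
  simpa [add_comm] using this

theorem stmt_8 {n m : ℕ} [NeZero m] (hn : 1 ≤ n) (hm : m ≤ n + 1)
    (s : Fin m → EuclideanSpace ℝ (Fin n)) (t : Fin m → ℝ)
    (hindep : AffineIndependent ℝ s)
    (u v : EuclideanSpace ℝ (Fin n)) (α β : ℝ)
    (hu : u ∈ Submodule.span ℝ (Set.range fun i => s i - s 0))
    (hα : ∀ i, ⟪u, s i⟫ - α = t i)
    (hv : v ∈ affineSpan ℝ (Set.range s))
    (hβ : ∀ i, 2 * ⟪s i, v⟫ - β = ‖s i‖ ^ 2 - t i ^ 2)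
    (X : Set (ℝ × EuclideanSpace ℝ (Fin n)))
    (hX : X = {p : ℝ × EuclideanSpace ℝ (Fin n) | ∀ i, ‖s i - p.2‖ ^ 2 = (t i - p.1) ^ 2})
    (Qsol : Set (EuclideanSpace ℝ (Fin n)))
    (hQsol : Qsol = {x : EuclideanSpace ℝ (Fin n) | ∃ b : ℝ, (b, x) ∈ X})
    (htne : ∃ i j : Fin m, t i ≠ t j)
    (hX2 : X.Nontrivial)
    (e μ ρ : ℝ) (he : e = ‖u‖) (he0 : e ≠ 0) (he1 : e ≠ 1)
    (hμ : μ = (⟪u, v⟫ - α) / (e ^ 2 - 1))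
    (hρ : ρ = (⟪u, v⟫ - α) ^ 2 / (e ^ 2 - 1) - ‖v‖ ^ 2 + β)
    (c : EuclideanSpace ℝ (Fin n)) (hc : c = v - μ • u) :
    (e ^ 2 - 1) * ρ > 0 ∧
    Qsol ∩ (affineSpan ℝ (Set.range s) : Set (EuclideanSpace ℝ (Fin n)))
      = {c + Real.sqrt (ρ / (e ^ 2 - 1)) • u, c - Real.sqrt (ρ / (e ^ 2 - 1)) • u} ∧
    c + Real.sqrt (ρ / (e ^ 2 - 1)) • u ∈ Qsol ∧
    c - Real.sqrt (ρ / (e ^ 2 - 1)) • u ∈ Qsol := by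
  have hE : e ^ 2 - 1 ≠ 0 := by
    have h0 : 0 ≤ e := he ▸ norm_nonneg u
    intro h
    have : (e - 1) * (e + 1) = 0 := by linarith
    rcases mul_eq_zero.1 this with h | h
    · exact he1 (by linarith)
    · linarith
  have huu : ⟪u, u⟫ = e ^ 2 := by rw [he, real_inner_self_eq_norm_sq]
  have hκ : ⟪u, v⟫ - α = μ * (e ^ 2 - 1) := by rw [hμ]; field_simp
  have hρ' : ρ = μ ^ 2 * (e ^ 2 - 1) - ‖v‖ ^ 2 + β := by
    rw [hρ, hκ]; field_simp
  have hu0 : u ≠ 0 := by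
    rintro rfl
    exact he0 (by simpa using he)
  -- expansion of one equation
  have hexp : ∀ (b : ℝ) (y : EuclideanSpace ℝ (Fin n)) (i : Fin m),
      ‖s i - (v + b • u + y)‖ ^ 2 - (t i - b) ^ 2
        = ‖y‖ ^ 2 - (ρ - (e ^ 2 - 1) * (b + μ) ^ 2) + 2 * ⟪v, y⟫ + 2 * b * ⟪u, y⟫
          - 2 * ⟪s i, y⟫ := by
    intro b y i
    have h1 := hα i
    have h2 := hβ i
    simp only [← real_inner_self_eq_norm_sq] at h2 hρ' ⊢
    simp only [inner_sub_left, inner_sub_right, inner_add_left, inner_add_right, inner_smul_left,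
      inner_smul_right, RCLike.conj_to_real, huu, real_inner_comm (s i) v, real_inner_comm (s i) u,
      real_inner_comm (s i) y, real_inner_comm u v, real_inner_comm u y, real_inner_comm v y] at h1 h2 ⊢
    rw [hρ', ← h1]
    rw [← h1] at h2
    linear_combination (-1) * h2 + (2 * b) * hκ
  have hmem : ∀ (b : ℝ) (x : EuclideanSpace ℝ (Fin n)), (b, x) ∈ X →
      (∃ K, ∀ i, ⟪s i, x - (v + b • u)⟫ = K) ∧
      ‖x - (v + b • u)‖ ^ 2 = ρ - (e ^ 2 - 1) * (b + μ) ^ 2 := by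
    intro b x hx
    rw [hX] at hx
    have hx' : ∀ i, ‖s i - x‖ ^ 2 = (t i - b) ^ 2 := hx
    obtain ⟨y, rfl⟩ : ∃ y, x = v + b • u + y := ⟨x - (v + b • u), by abel⟩
    rw [add_sub_cancel_left]
    have hK : ∀ i, ⟪s i, y⟫ = (‖y‖ ^ 2 - (ρ - (e ^ 2 - 1) * (b + μ) ^ 2) + 2 * ⟪v, y⟫
        + 2 * b * ⟪u, y⟫) / 2 := by
      intro i
      have h1 := hexp b y i
      have h2 := hx' i
      linarith
    refine ⟨⟨_, hK⟩, ?_⟩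
    have h1 := aux_aff s y _ hK v hv
    have h2 := aux_span s y u _ hK hu
    rw [h2] at h1
    linarith
  have hmem2 : ∀ b : ℝ, ρ - (e ^ 2 - 1) * (b + μ) ^ 2 = 0 → (b, v + b • u) ∈ X := by
    intro b hb
    rw [hX]
    intro i
    have h1 := hexp b 0 i
    simp only [add_zero, inner_zero_right, norm_zero, hb] at h1
    show ‖s i - (v + b • u)‖ ^ 2 = (t i - b) ^ 2
    linarith
  have hpos : (e ^ 2 - 1) * ρ > 0 := by
    rcases lt_or_gt_of_ne hE with hneg | hpos
    · have hid : ∀ i, (e ^ 2 - 1) * ρ = ⟪u, v - s i + t i • u⟫ ^ 2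
          + (1 - e ^ 2) * ‖v - s i + t i • u‖ ^ 2 := by
        intro i
        have h1 := hα i
        have h2 := hβ i
        simp only [← real_inner_self_eq_norm_sq] at h2 hρ' ⊢
        simp only [inner_sub_left, inner_sub_right, inner_add_left, inner_add_right, inner_smul_left,
          inner_smul_right, RCLike.conj_to_real, huu, real_inner_comm (s i) v,
          real_inner_comm (s i) u, real_inner_comm u v] at h1 h2 ⊢
        have h4 : (e ^ 2 - 1) * ρ = (⟪u, v⟫ - α) ^ 2 - (e ^ 2 - 1) * (⟪v, v⟫ - β) := by
          rw [hρ', hκ]; ring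
        rw [h4]
        have ha : α = ⟪s i, u⟫ - t i := by linarith
        have hb : β = 2 * ⟪s i, v⟫ - ⟪s i, s i⟫ + t i ^ 2 := by
          linarith
        rw [ha, hb]
        ring
      by_contra hcon
      have hz : ∀ i, v - s i + t i • u = 0 := by
        intro i
        have h1 := hid i
        have h2 : ‖v - s i + t i • u‖ ^ 2 ≤ 0 := by
          nlinarith [sq_nonneg ⟪u, v - s i + t i • u⟫]
        have h3 : ‖v - s i + t i • u‖ = 0 := by
          nlinarith [norm_nonneg (v - s i + t i • u)]
        exact norm_eq_zero.1 h3
      obtain ⟨i, j, hij⟩ := htne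
      have h1 : ⟪u, v - s i + t i • u⟫ = 0 := by rw [hz i, inner_zero_right]
      have h2 : ⟪u, v - s j + t j • u⟫ = 0 := by rw [hz j, inner_zero_right]
      simp only [inner_add_right, inner_sub_right, inner_smul_right, huu] at h1 h2
      have h3 := hα i
      have h4 := hα j
      have h5 : (t i - t j) * (e ^ 2 - 1) = 0 := by linarith
      rcases mul_eq_zero.1 h5 with h | h
      · exact hij (by linarith)
      · exact hE h
    · refine mul_pos hpos ?_
      by_contra hcon
      push Not at hcon
      have hone : ∀ p ∈ X, p = (-μ, v + (-μ) • u) := by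
        rintro ⟨b, x⟩ hp
        obtain ⟨-, h⟩ := hmem b x hp
        have h1 : (e ^ 2 - 1) * (b + μ) ^ 2 ≥ 0 := by positivity
        have h2 : ‖x - (v + b • u)‖ ^ 2 = 0 := le_antisymm (by linarith) (sq_nonneg _)
        have h3 : (e ^ 2 - 1) * (b + μ) ^ 2 = 0 := by
          have := sq_nonneg ‖x - (v + b • u)‖
          linarith
        have h4 : b = -μ := by
          have := (mul_eq_zero.1 h3).resolve_left hE
          have := pow_eq_zero_iff (two_ne_zero) |>.1 this
          linarith
        have h5 : x = v + b • u :=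
          sub_eq_zero.1 (norm_eq_zero.1 (pow_eq_zero_iff (two_ne_zero) |>.1 h2))
        rw [h5, h4]
      obtain ⟨p, hp, q, hq, hpq⟩ := hX2
      exact hpq ((hone p hp).trans (hone q hq).symm)
  have hdiv : 0 < ρ / (e ^ 2 - 1) := by
    have : ρ / (e ^ 2 - 1) = (e ^ 2 - 1) * ρ / (e ^ 2 - 1) ^ 2 := by field_simp
    rw [this]
    positivity
  set r := Real.sqrt (ρ / (e ^ 2 - 1)) with hr
  have hr2 : (e ^ 2 - 1) * r ^ 2 = ρ := by
    rw [hr, Real.sq_sqrt hdiv.le]; field_simp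
  have hcp : c + r • u = v + (-μ + r) • u := by rw [hc]; module
  have hcm : c - r • u = v + (-μ - r) • u := by rw [hc]; module
  have hqp : c + r • u ∈ Qsol := by
    rw [hQsol, hcp]
    exact ⟨-μ + r, hmem2 _ (by rw [← hr2]; ring)⟩
  have hqm : c - r • u ∈ Qsol := by
    rw [hQsol, hcm]
    exact ⟨-μ - r, hmem2 _ (by rw [← hr2]; ring)⟩
  refine ⟨hpos, ?_, hqp, hqm⟩
  apply Set.Subset.antisymm
  · rintro x ⟨hxQ, hxA⟩
    rw [hQsol] at hxQ
    obtain ⟨b, hb⟩ := hxQ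
    obtain ⟨⟨K, hK⟩, hn⟩ := hmem b x hb
    have h1 := aux_aff s _ K hK x hxA
    have h2 := aux_aff s _ K hK (v + b • u) (aux_dir s u v b hu hv)
    have h3 : ‖x - (v + b • u)‖ ^ 2 = 0 := by
      rw [← real_inner_self_eq_norm_sq]
      nth_rewrite 1 [inner_sub_left]
      rw [h1, h2, sub_self]
    have h5 : x = v + b • u :=
      sub_eq_zero.1 (norm_eq_zero.1 (pow_eq_zero_iff (two_ne_zero) |>.1 h3))
    rw [h3] at hn
    have h6 : (b + μ) ^ 2 = r ^ 2 := by
      apply mul_left_cancel₀ hE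
      linarith
    rcases sq_eq_sq_iff_eq_or_eq_neg.1 h6 with h | h
    · left
      rw [hcp, h5, show b = -μ + r by linarith]
    · right
      rw [Set.mem_singleton_iff, hcm, h5, show b = -μ - r by linarith]
  · rintro x (rfl | rfl)
    · exact ⟨hqp, by rw [hcp]; exact aux_dir s u v _ hu hv⟩
    · exact ⟨hqm, by rw [hcm]; exact aux_dir s u v _ hu hv⟩
end

section
/- Assume t₁,…,t_m are not all equal, 𝔛 has at least two elements, m > 2 or |t₁ − t₂| ≠ ‖s₁ − s₂‖, and ‖u‖ = 1. Then ⟨u,v⟩ ≠ α and 3 ≤ m ≤ n. Moreover, with λ₁ = (β − ‖v‖²)/(2(⟨u,v⟩ − α)) and λ₂ = λ₁ − (⟨u,v⟩ − α)/2, one has Q_sol = {v + y₀·u + Σ_{j=1}^k yⱼ·wⱼ : y₀,…,y_k ∈ ℝ with Σ_{j=1}^k yⱼ² + 2(⟨u,v⟩ − α)(y₀ − λ₁) = 0} and Q_sat = {v + z₀·u + Σ_{i=1}^{m−2} zᵢ·w′ᵢ : z₀,…,z_{m−2} ∈ ℝ with Σ_{i=1}^{m−2} zᵢ² − 2(⟨u,v⟩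 − α)(z₀ − λ₂) = 0} (a pair of paraboloids of revolution). -/
open scoped RealInnerProductSpace

theorem aux_norm_sum {E : Type*} [NormedAddCommGroup E] [InnerProductSpace ℝ E] {k : ℕ}
    (w : Fin k → E) (hw : Orthonormal ℝ w) (y : Fin k → ℝ) :
    ‖∑ j, y j • w j‖ ^ 2 = ∑ j, y j ^ 2 := by
  rw [← real_inner_self_eq_norm_sq, hw.inner_sum]
  simp [sq]

theorem aux_add_sq {E : Type*} [NormedAddCommGroup E] [InnerProductSpace ℝ E]
    (a u y : E) (b : ℝ) (hu : ‖u‖ = 1) (huy : ⟪u, y⟫ = 0) :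
    ‖a + b • u + y‖ ^ 2 = ‖a‖ ^ 2 + 2 * b * ⟪u, a⟫ + b ^ 2 + 2 * ⟪a, y⟫ + ‖y‖ ^ 2 := by
  rw [norm_add_sq_real, norm_add_sq_real, norm_smul, hu, inner_add_left, inner_smul_left,
    inner_smul_right, huy, real_inner_comm a u]
  simp
  ring

theorem stmt_10 {n m : ℕ} [NeZero m] (hn : 1 ≤ n) (hm : m ≤ n + 1)
    (s : Fin m → EuclideanSpace ℝ (Fin n)) (t : Fin m → ℝ)
    (hindep : AffineIndependent ℝ s)
    (u v : EuclideanSpace ℝ (Fin n)) (α β : ℝ)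
    (hu : u ∈ Submodule.span ℝ (Set.range fun i => s i - s 0))
    (hα : ∀ i, ⟪u, s i⟫ - α = t i)
    (hv : v ∈ affineSpan ℝ (Set.range s))
    (hβ : ∀ i, 2 * ⟪s i, v⟫ - β = ‖s i‖ ^ 2 - t i ^ 2)
    {k : ℕ} (hk : k = n - (m - 1))
    (w : Fin k → EuclideanSpace ℝ (Fin n)) (hw : Orthonormal ℝ w)
    (hwspan : Submodule.span ℝ (Set.range w)
      = (Submodule.span ℝ (Set.range fun i => s i - s 0))ᗮ)
    (X : Set (ℝ × EuclideanSpace ℝ (Fin n)))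
    (hX : X = {p : ℝ × EuclideanSpace ℝ (Fin n) | ∀ i, ‖s i - p.2‖ ^ 2 = (t i - p.1) ^ 2})
    (S : Set (ℝ × EuclideanSpace ℝ (Fin n)))
    (hS : S = {q : ℝ × EuclideanSpace ℝ (Fin n) | ∀ p ∈ X, ‖q.2 - p.2‖ ^ 2 = (q.1 - p.1) ^ 2})
    (Qsol : Set (EuclideanSpace ℝ (Fin n)))
    (hQsol : Qsol = {x : EuclideanSpace ℝ (Fin n) | ∃ b : ℝ, (b, x) ∈ X})
    (Qsat : Set (EuclideanSpace ℝ (Fin n)))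
    (hQsat : Qsat = {x : EuclideanSpace ℝ (Fin n) | ∃ τ : ℝ, (τ, x) ∈ S})
    (htne : ∃ i j : Fin m, t i ≠ t j)
    (hX2 : X.Nontrivial)
    (hcase : 2 < m ∨ ∀ i j : Fin m, i ≠ j → |t i - t j| ≠ ‖s i - s j‖)
    (hu0 : u ≠ 0)
    (w' : Fin (m - 2) → EuclideanSpace ℝ (Fin n)) (hw' : Orthonormal ℝ w')
    (hw'u : ∀ i, ⟪u, w' i⟫ = 0)
    (hw'span : Submodule.span ℝ (insert u (Set.range w'))
      = Submodule.span ℝ (Set.range fun i => s i - s 0))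
    (heq : ‖u‖ = 1)
    (lam₁ lam₂ : ℝ)
    (hlam₁ : lam₁ = (β - ‖v‖ ^ 2) / (2 * (⟪u, v⟫ - α)))
    (hlam₂ : lam₂ = lam₁ - (⟪u, v⟫ - α) / 2) :
    ⟪u, v⟫ ≠ α ∧ 3 ≤ m ∧ m ≤ n ∧
    Qsol = {x : EuclideanSpace ℝ (Fin n) | ∃ (y₀ : ℝ) (y : Fin k → ℝ),
      x = v + y₀ • u + ∑ j, y j • w j ∧
      (∑ j, y j ^ 2) + 2 * (⟪u, v⟫ - α) * (y₀ - lam₁) = 0} ∧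
    Qsat = {x : EuclideanSpace ℝ (Fin n) | ∃ (z₀ : ℝ) (z : Fin (m - 2) → ℝ),
      x = v + z₀ • u + ∑ i, z i • w' i ∧
      (∑ i, z i ^ 2) - 2 * (⟪u, v⟫ - α) * (z₀ - lam₂) = 0} := by
  obtain ⟨U, hUdef⟩ : ∃ U, U = Submodule.span ℝ (Set.range fun i => s i - s 0) := ⟨_, rfl⟩
  rw [← hUdef] at hu hwspan hw'span
  obtain ⟨c, hc⟩ : ∃ c, c = ⟪u, v⟫ - α := ⟨_, rfl⟩
  have hsU : ∀ i, s i - s 0 ∈ U := fun i => by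
    rw [hUdef]; exact Submodule.subset_span ⟨i, rfl⟩
  have hssU : ∀ i j, s i - s j ∈ U := fun i j => by
    have := U.sub_mem (hsU i) (hsU j)
    simpa using this
  have hvU : v - s 0 ∈ U := by
    have h0 : s 0 ∈ affineSpan ℝ (Set.range s) := subset_affineSpan ℝ _ ⟨0, rfl⟩
    have h := AffineSubspace.vsub_mem_direction hv h0
    rw [direction_affineSpan, vectorSpan_range_eq_span_range_vsub_right ℝ s 0] at h
    rw [hUdef]
    simpa using h
  have hvsU : ∀ i, s i - v ∈ U := fun i => by
    have := U.sub_mem (hsU i) hvU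
    simpa using this
  have hUperp : ∀ y, (∀ i, ⟪s i - s 0, y⟫ = 0) → y ∈ Uᗮ := by
    intro y hy
    rw [Submodule.mem_orthogonal]
    intro a ha
    rw [hUdef] at ha
    induction ha using Submodule.span_induction with
    | mem x hx => obtain ⟨i, rfl⟩ := hx; exact hy i
    | zero => simp
    | add x y _ _ h1 h2 => rw [inner_add_left, h1, h2, add_zero]
    | smul r x _ h1 => rw [inner_smul_left, h1, mul_zero]
  have horth : ∀ a ∈ U, ∀ y ∈ Uᗮ, ⟪a, y⟫ = 0 := fun a ha y hy =>
    (Submodule.mem_orthogonal U y).1 hy a ha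
  have htd : ∀ i, t i = ⟪u, s i - v⟫ + c := by
    intro i; rw [inner_sub_right, hc, ← hα i]; ring
  -- description of X
  have hXU : ∀ b x, (b, x) ∈ X ↔ ∃ y ∈ Uᗮ, x = v + b • u + y ∧
      ‖y‖ ^ 2 + 2 * c * b + ‖v‖ ^ 2 - β = 0 := by
    intro b x
    have key : ∀ y, x = v + b • u + y → ∀ i, (‖s i - x‖ ^ 2 - (t i - b) ^ 2 =
        ‖x‖ ^ 2 - b ^ 2 - 2 * b * α - β - 2 * ⟪s i, y⟫) := by
      intro y hy i
      have h1 : ⟪s i, x⟫ = ⟪s i, v⟫ + b * ⟪u, s i⟫ + ⟪s i, y⟫ := by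
        rw [hy, inner_add_right, inner_add_right, inner_smul_right, real_inner_comm u (s i)]
      rw [norm_sub_sq_real, h1]
      have h2 := hβ i
      have h3 := hα i
      have h4 : ⟪u, s i⟫ = t i + α := by linarith
      rw [h4]
      linear_combination -h2
    have key2 : ∀ y ∈ Uᗮ, x = v + b • u + y → ∀ i, (‖s i - x‖ ^ 2 - (t i - b) ^ 2 =
        ‖y‖ ^ 2 + 2 * c * b + ‖v‖ ^ 2 - β) := by
      intro y hyU hy i
      have h1 := key y hy i
      have h2 := aux_add_sq v u y b heq (horth u hu y hyU)
      rw [← hy] at h2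
      have h3 := horth _ (hvsU i) y hyU
      rw [inner_sub_left] at h3
      rw [h1, h2, hc]
      linear_combination -2 * h3
    constructor
    · intro h
      rw [hX] at h
      have h : ∀ i, ‖s i - x‖ ^ 2 = (t i - b) ^ 2 := h
      have hy : x = v + b • u + (x - v - b • u) := by abel
      have hyU : (x - v - b • u) ∈ Uᗮ := by
        apply hUperp
        intro i
        have h1 := key _ hy i
        have h2 := key _ hy 0
        rw [h] at h1 h2
        rw [inner_sub_left]
        linarith
      refine ⟨_, hyU, hy, ?_⟩
      have := key2 _ hyU hy 0
      rw [h] at this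
      linarith
    · rintro ⟨y, hyU, hy, h⟩
      rw [hX]
      intro i
      have := key2 y hyU hy i
      show ‖s i - x‖ ^ 2 = (t i - b) ^ 2
      linarith
  have hwmem : ∀ y, y ∈ Uᗮ ↔ ∃ a : Fin k → ℝ, ∑ j, a j • w j = y := by
    intro y; rw [← hwspan, Submodule.mem_span_range_iff_exists_fun]
  have hw'mem : ∀ y, y ∈ U ↔ ∃ (z₀ : ℝ) (a : Fin (m - 2) → ℝ),
      y = z₀ • u + ∑ j, a j • w' j := by
    intro y
    rw [← hw'span, Submodule.mem_span_insert]
    constructor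
    · rintro ⟨a, z, hz, rfl⟩
      obtain ⟨f, rfl⟩ := Submodule.mem_span_range_iff_exists_fun ℝ |>.1 hz
      exact ⟨a, f, rfl⟩
    · rintro ⟨a, f, rfl⟩
      exact ⟨a, _, Submodule.mem_span_range_iff_exists_fun ℝ |>.2 ⟨f, rfl⟩, rfl⟩
  have hm3 : 2 < m := by
    rcases hcase with h | hcase
    · exact h
    by_contra hlt
    obtain ⟨i, j, hij⟩ := htne
    have hne : i ≠ j := fun h => hij (by rw [h])
    obtain ⟨a, f, hf⟩ := (hw'mem _).1 (hssU i j)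
    have : IsEmpty (Fin (m - 2)) := by
      have : m - 2 = 0 := by omega
      rw [this]; infer_instance
    simp only [Finset.univ_eq_empty, Finset.sum_empty, add_zero] at hf
    apply hcase i j hne
    have : t i - t j = ⟪u, s i - s j⟫ := by
      rw [← hα i, ← hα j, inner_sub_right]; ring
    rw [this, hf, inner_smul_right, real_inner_self_eq_norm_sq, norm_smul, heq]
    simp
  have hc0 : c ≠ 0 := by
    intro hc0
    obtain ⟨⟨b, x⟩, hp, -⟩ := hX2
    obtain ⟨y, hy, hx, he⟩ := (hXU _ _).1 hp
    have hpar : ∀ i, s i - v = ⟪u, s i - v⟫ • u := by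
      intro i
      have h1 : ‖s i - v‖ ^ 2 = t i ^ 2 - β + ‖v‖ ^ 2 := by
        rw [norm_sub_sq_real]; linarith [hβ i]
      have h2 := htd i
      rw [hc0, add_zero] at h2
      have h3 : ‖(s i - v) - ⟪u, s i - v⟫ • u‖ ^ 2 = ‖s i - v‖ ^ 2 - ⟪u, s i - v⟫ ^ 2 := by
        rw [norm_sub_sq_real, norm_smul, heq, inner_smul_right, real_inner_comm u (s i - v)]
        simp
        ring
      have h4 : ‖(s i - v) - ⟪u, s i - v⟫ • u‖ ^ 2 ≤ 0 := by
        rw [h3, h1, h2]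
        rw [hc0] at he
        nlinarith [sq_nonneg ‖y‖]
      have h5 : ‖(s i - v) - ⟪u, s i - v⟫ • u‖ = 0 := by
        nlinarith [sq_nonneg ‖(s i - v) - ⟪u, s i - v⟫ • u‖]
      exact sub_eq_zero.1 (norm_eq_zero.1 h5)
    let i0 : Fin (m - 2) := ⟨0, by omega⟩
    have hwU : w' i0 ∈ U := by
      rw [← hw'span]; exact Submodule.subset_span (Or.inr ⟨i0, rfl⟩)
    have hperp : w' i0 ∈ Uᗮ := by
      apply hUperp
      intro i
      have : s i - s 0 = (s i - v) - (s 0 - v) := by abel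
      rw [this, hpar i, hpar 0, inner_sub_left, inner_smul_left, inner_smul_left, hw'u]
      simp
    have h := horth _ hwU _ hperp
    rw [real_inner_self_eq_norm_sq, hw'.1 i0] at h
    norm_num at h
  have hmn : m ≤ n := by
    by_contra hlt
    have hk0 : k = 0 := by omega
    obtain ⟨⟨b, x⟩, hp, ⟨b', x'⟩, hq, hne⟩ := hX2
    obtain ⟨y, hy, hx, he⟩ := (hXU _ _).1 hp
    obtain ⟨y', hy', hx', he'⟩ := (hXU _ _).1 hq
    have hz : ∀ y ∈ Uᗮ, y = 0 := by
      intro y hy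
      obtain ⟨a, ha⟩ := (hwmem y).1 hy
      subst hk0
      simpa using ha.symm
    rw [hz y hy] at he hx
    rw [hz y' hy'] at he' hx'
    have hbb : b = b' := by
      have h1 : c * (b - b') = 0 := by linarith
      have h2 := (mul_eq_zero.1 h1).resolve_left hc0
      linarith
    apply hne
    rw [hx, hx', hbb]
  have hl1 : 2 * c * lam₁ = β - ‖v‖ ^ 2 := by
    rw [hlam₁, ← hc]; field_simp
  refine ⟨fun h => hc0 (by rw [hc, h, sub_self]), hm3, hmn, ?_, ?_⟩
  · rw [hQsol, ← hc]
    ext x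
    simp only [Set.mem_setOf_eq]
    constructor
    · rintro ⟨b, hb⟩
      obtain ⟨y, hy, hx, he⟩ := (hXU _ _).1 hb
      obtain ⟨a, rfl⟩ := (hwmem y).1 hy
      rw [aux_norm_sum w hw] at he
      exact ⟨b, a, hx, by linarith⟩
    · rintro ⟨b, a, hx, he⟩
      refine ⟨b, (hXU _ _).2 ⟨_, (hwmem _).2 ⟨a, rfl⟩, hx, ?_⟩⟩
      rw [aux_norm_sum w hw]
      linarith
  · rw [hQsat, ← hc]
    rw [← hc] at hlam₂
    have hexp : ∀ z b y τ, y ∈ Uᗮ → ‖y‖ ^ 2 + 2 * c * b + ‖v‖ ^ 2 - β = 0 →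
        ‖(v + z) - (v + b • u + y)‖ ^ 2 - (τ - b) ^ 2 =
        ‖z‖ ^ 2 - τ ^ 2 + 2 * c * lam₁ + 2 * b * (τ - ⟪u, z⟫ - c) - 2 * ⟪z, y⟫ := by
      intro z b y τ hy he
      have h1 : (v + z) - (v + b • u + y) = z + (-b) • u + (-y) := by
        rw [neg_smul]; abel
      rw [h1, aux_add_sq z u (-y) (-b) heq (by rw [inner_neg_right, horth u hu y hy, neg_zero]),
        inner_neg_right, norm_neg]
      linear_combination he - hl1
    have hsum : ∀ (z₀ : ℝ) (a : Fin (m - 2) → ℝ),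
        ⟪u, z₀ • u + ∑ j, a j • w' j⟫ = z₀ ∧
        ‖z₀ • u + ∑ j, a j • w' j‖ ^ 2 = z₀ ^ 2 + ∑ j, a j ^ 2 := by
      intro z₀ a
      have h0 : ⟪u, ∑ j, a j • w' j⟫ = 0 := by
        rw [inner_sum]
        apply Finset.sum_eq_zero
        intro j _
        rw [inner_smul_right, hw'u, mul_zero]
      constructor
      · rw [inner_add_right, h0, inner_smul_right, real_inner_self_eq_norm_sq, heq]; simp
      · rw [norm_add_sq_real, inner_smul_left, h0, aux_norm_sum w' hw', norm_smul, heq]; simp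
    ext x
    simp only [Set.mem_setOf_eq]
    constructor
    · rintro ⟨τ, hτ⟩
      rw [hS] at hτ
      have hτ : ∀ p ∈ X, ‖x - p.2‖ ^ 2 = (τ - p.1) ^ 2 := hτ
      obtain ⟨z, rfl⟩ : ∃ z, x = v + z := ⟨x - v, by abel⟩
      have hall : ∀ y ∈ Uᗮ, ∀ b, ‖y‖ ^ 2 + 2 * c * b + ‖v‖ ^ 2 - β = 0 →
          ‖z‖ ^ 2 - τ ^ 2 + 2 * c * lam₁ + 2 * b * (τ - ⟪u, z⟫ - c) - 2 * ⟪z, y⟫ = 0 := by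
        intro y hy b he
        rw [← hexp z b y τ hy he]
        have := hτ (b, v + b • u + y) ((hXU _ _).2 ⟨y, hy, rfl, he⟩)
        simp only at this
        linarith
      have hb : ∀ y : EuclideanSpace ℝ (Fin n),
          ‖y‖ ^ 2 + 2 * c * (lam₁ - ‖y‖ ^ 2 / (2 * c)) + ‖v‖ ^ 2 - β = 0 := by
        intro y
        have : 2 * c * (‖y‖ ^ 2 / (2 * c)) = ‖y‖ ^ 2 := by field_simp
        linarith
      have hzU : z ∈ U := by
        rw [← Submodule.orthogonal_orthogonal U, Submodule.mem_orthogonal]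
        intro y hy
        have h1 := hall y hy _ (hb y)
        have h2 := hall (-y) (Uᗮ.neg_mem hy) _ (hb (-y))
        rw [norm_neg, inner_neg_right] at h2
        rw [real_inner_comm]
        linarith
      let j0 : Fin k := ⟨0, by omega⟩
      have hw0 : w j0 ∈ Uᗮ := by
        rw [← hwspan]; exact Submodule.subset_span ⟨j0, rfl⟩
      have h1 := hall _ hw0 _ (hb _)
      have h2 := hall 0 (Submodule.zero_mem _) _ (hb _)
      rw [horth z hzU _ hw0, hw.1 j0] at h1
      rw [inner_zero_right, norm_zero] at h2
      have hinv : (1 : ℝ) / c ≠ 0 := one_div_ne_zero hc0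
      have h3 : (1 / c) * (τ - ⟪u, z⟫ - c) = 0 := by
        have : (1 : ℝ) ^ 2 / (2 * c) = (1 / c) / 2 := by field_simp
        rw [this] at h1
        norm_num at h2
        linear_combination h2 - h1
      have h4 : τ - ⟪u, z⟫ - c = 0 := (mul_eq_zero.1 h3).resolve_left hinv
      obtain ⟨z₀, a, rfl⟩ := (hw'mem z).1 hzU
      obtain ⟨e1, e2⟩ := hsum z₀ a
      refine ⟨z₀, a, by rw [add_assoc], ?_⟩
      rw [h4, e2] at h2
      rw [e1] at h4
      have h5 : τ = z₀ + c := by linarith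
      rw [h5] at h2
      rw [hlam₂]
      linear_combination h2
    · rintro ⟨z₀, a, hx, he⟩
      refine ⟨z₀ + c, ?_⟩
      rw [hS]
      rintro ⟨b, x'⟩ hp
      obtain ⟨y, hy, rfl, he'⟩ := (hXU _ _).1 hp
      obtain ⟨e1, e2⟩ := hsum z₀ a
      have h := hexp (z₀ • u + ∑ j, a j • w' j) b y (z₀ + c) hy he'
      rw [horth _ ((hw'mem _).2 ⟨z₀, a, rfl⟩) y hy, e1, e2, ← add_assoc, ← hx] at h
      show ‖x - (v + b • u + y)‖ ^ 2 = (z₀ + c - b) ^ 2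
      rw [hlam₂] at he
      linear_combination h + he
end

section
/- Assume t₁,…,t_m are not all equal, 𝔛 has at least two elements, and m > 2 or |t₁ − t₂| ≠ ‖s₁ − s₂‖. Then the affine span of Q_sol equals v + (ℝ·u + U⊥) (an affine subspace of dimension k+1), the affine span of Q_sat equals the affine span of s₁,…,s_m, which equals v + U (an affine subspace of dimension m−1), and the intersection (v + ℝ·u + U⊥) ∩ (v + U) is exactly the line {v + λ·u : λ ∈ ℝ}. -/
open scoped RealInnerProductSpace

theorem aux_quad_s11 (a b c x y : ℝ) (hxy : x ≠ y) (hx : a * x ^ 2 + 2 * x * b + c = 0)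
    (hy : a * y ^ 2 + 2 * y * b + c = 0) (h : ∀ z, 0 ≤ a * z ^ 2 + 2 * z * b + c) :
    a = 0 ∧ b = 0 ∧ c = 0 := by
  have hd : 0 < (x - y) ^ 2 := by
    have := sub_ne_zero.2 hxy
    positivity
  have h1 := h ((x + y) / 2)
  have h2 := h (2 * x - y)
  have ha1 : a * (x - y) ^ 2 ≤ 0 := by nlinarith
  have ha2 : 0 ≤ a * (x - y) ^ 2 := by nlinarith
  have ha : a = 0 := by
    have : a * (x - y) ^ 2 = 0 := le_antisymm ha1 ha2
    rcases mul_eq_zero.1 this with h | h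
    · exact h
    · exact absurd h hd.ne'
  subst ha
  have hb : b = 0 := by
    have : (x - y) * b = 0 := by linarith
    rcases mul_eq_zero.1 this with h | h
    · exact absurd h (sub_ne_zero.2 hxy)
    · exact h
  subst hb
  refine ⟨rfl, rfl, by linarith⟩

theorem stmt_11 {n m : ℕ} [NeZero m] (hn : 1 ≤ n) (hm : m ≤ n + 1)
    (s : Fin m → EuclideanSpace ℝ (Fin n)) (t : Fin m → ℝ)
    (hindep : AffineIndependent ℝ s)
    (u v : EuclideanSpace ℝ (Fin n)) (α β : ℝ)
    (hu : u ∈ Submodule.span ℝ (Set.range fun i => s i - s 0))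
    (hα : ∀ i, ⟪u, s i⟫ - α = t i)
    (hv : v ∈ affineSpan ℝ (Set.range s))
    (hβ : ∀ i, 2 * ⟪s i, v⟫ - β = ‖s i‖ ^ 2 - t i ^ 2)
    {k : ℕ} (hk : k = n - (m - 1))
    (X : Set (ℝ × EuclideanSpace ℝ (Fin n)))
    (hX : X = {p : ℝ × EuclideanSpace ℝ (Fin n) | ∀ i, ‖s i - p.2‖ ^ 2 = (t i - p.1) ^ 2})
    (S : Set (ℝ × EuclideanSpace ℝ (Fin n)))
    (hS : S = {q : ℝ × EuclideanSpace ℝ (Fin n) | ∀ p ∈ X, ‖q.2 - p.2‖ ^ 2 = (q.1 - p.1) ^ 2})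
    (Qsol : Set (EuclideanSpace ℝ (Fin n)))
    (hQsol : Qsol = {x : EuclideanSpace ℝ (Fin n) | ∃ b : ℝ, (b, x) ∈ X})
    (Qsat : Set (EuclideanSpace ℝ (Fin n)))
    (hQsat : Qsat = {x : EuclideanSpace ℝ (Fin n) | ∃ τ : ℝ, (τ, x) ∈ S})
    (htne : ∃ i j : Fin m, t i ≠ t j)
    (hX2 : X.Nontrivial)
    (hcase : 2 < m ∨ ∀ i j : Fin m, i ≠ j → |t i - t j| ≠ ‖s i - s j‖) :
    (affineSpan ℝ Qsol : Set (EuclideanSpace ℝ (Fin n)))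
      = {x : EuclideanSpace ℝ (Fin n) | ∃ y ∈ Submodule.span ℝ ({u} : Set (EuclideanSpace ℝ (Fin n)))
          ⊔ (Submodule.span ℝ (Set.range fun i => s i - s 0))ᗮ, x = v + y} ∧
    Module.finrank ℝ ↥(Submodule.span ℝ ({u} : Set (EuclideanSpace ℝ (Fin n)))
        ⊔ (Submodule.span ℝ (Set.range fun i => s i - s 0))ᗮ) = k + 1 ∧
    affineSpan ℝ Qsat = affineSpan ℝ (Set.range s) ∧
    (affineSpan ℝ (Set.range s) : Set (EuclideanSpace ℝ (Fin n)))
      = {x : EuclideanSpace ℝ (Fin n) | ∃ y ∈ Submodule.span ℝ (Set.range fun i => s i - s 0), x = v + y} ∧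
    Module.finrank ℝ ↥(Submodule.span ℝ (Set.range fun i => s i - s 0)) = m - 1 ∧
    {x : EuclideanSpace ℝ (Fin n) | ∃ y ∈ Submodule.span ℝ ({u} : Set (EuclideanSpace ℝ (Fin n)))
        ⊔ (Submodule.span ℝ (Set.range fun i => s i - s 0))ᗮ, x = v + y}
      ∩ {x : EuclideanSpace ℝ (Fin n) | ∃ y ∈ Submodule.span ℝ (Set.range fun i => s i - s 0), x = v + y}
      = {x : EuclideanSpace ℝ (Fin n) | ∃ lam : ℝ, x = v + lam • u} := by
  set U := Submodule.span ℝ (Set.range fun i => s i - s 0) with hU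
  have hVU : vectorSpan ℝ (Set.range s) = U := by
    rw [vectorSpan_range_eq_span_range_vsub_right ℝ s 0]; rfl
  have hs0 : s 0 ∈ affineSpan ℝ (Set.range s) := subset_affineSpan ℝ _ ⟨0, rfl⟩
  have hmem : ∀ x, x ∈ affineSpan ℝ (Set.range s) ↔ x - v ∈ U := by
    intro x
    rw [← hVU, ← direction_affineSpan]
    constructor
    · intro hx
      exact AffineSubspace.vsub_mem_direction hx hv
    · intro hx
      have := AffineSubspace.vadd_mem_of_mem_direction hx hv
      simpa using this
  have hsv : ∀ i, s i - v ∈ U := fun i => (hmem _).1 (subset_affineSpan ℝ _ ⟨i, rfl⟩)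
  have hm1 : 1 ≤ m := Nat.one_le_iff_ne_zero.2 (NeZero.ne m)
  have hfU : Module.finrank ℝ U = m - 1 := by
    rw [← hVU]
    exact hindep.finrank_vectorSpan (by simp; omega)
  have hu0 : u ≠ 0 := by
    rintro rfl
    obtain ⟨i, j, hij⟩ := htne
    apply hij
    rw [← hα i, ← hα j]; simp
  have horth : ∀ w ∈ Uᗮ, ∀ y ∈ U, ⟪y, w⟫ = 0 := fun w hw y hy =>
    (Submodule.mem_orthogonal U w).1 hw y hy
  set a := ‖u‖ ^ 2 - 1 with ha
  set b' := ⟪u, v⟫ - α with hb'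
  set c := ‖v‖ ^ 2 - β with hc
  -- characterization of solutions
  have hX1 : ∀ b, ∀ w ∈ Uᗮ, a * b ^ 2 + 2 * b * b' + c + ‖w‖ ^ 2 = 0 →
      (b, v + b • u + w) ∈ X := by
    intro b w hw h
    rw [hX]
    intro i
    have h1 := horth w hw _ (hsv i)
    have h2 := horth w hw _ hu
    have h3 := hα i
    have h4 := hβ i
    have e : s i - (v + b • u + w) = (s i - v) - b • u - w := by abel
    have h6 : ‖s i - (v + b • u + w)‖ ^ 2
        = ‖s i - v‖ ^ 2 + b ^ 2 * ‖u‖ ^ 2 + ‖w‖ ^ 2 - 2 * b * (⟪u, s i⟫ - ⟪u, v⟫) := by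
      rw [e, norm_sub_sq_real, norm_sub_sq_real, inner_sub_left (s i - v), h1, real_inner_smul_left, h2,
        real_inner_smul_right, norm_smul, mul_pow, Real.norm_eq_abs, sq_abs,
        real_inner_comm u (s i - v), inner_sub_right]
      ring
    simp only
    rw [h6, norm_sub_sq_real]
    have h5 : ⟪u, s i⟫ = t i + α := by linarith
    rw [h5]
    simp only [ha, hb', hc] at h
    linarith
  have hX2' : ∀ b x, (b, x) ∈ X → ∃ w ∈ Uᗮ, x = v + b • u + w ∧
      a * b ^ 2 + 2 * b * b' + c + ‖w‖ ^ 2 = 0 := by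
    intro b x hx
    rw [hX] at hx
    have hx' : ∀ i, ‖s i - x‖ ^ 2 = (t i - b) ^ 2 := hx
    have key : ∀ i, 2 * ⟪s i, x - v - b • u⟫ = ‖x‖ ^ 2 - β - 2 * b * α - b ^ 2 := by
      intro i
      have h1 := hx' i
      rw [norm_sub_sq_real] at h1
      have h3 := hα i
      have h4 := hβ i
      rw [inner_sub_right, inner_sub_right, real_inner_smul_right, real_inner_comm u (s i)]
      have h5 : ⟪u, s i⟫ = t i + α := by linarith
      rw [h5]
      linarith
    have hw : x - v - b • u ∈ Uᗮ := by
      rw [Submodule.mem_orthogonal]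
      have : U ≤ (Submodule.span ℝ {x - v - b • u})ᗮ := by
        rw [hU, Submodule.span_le]
        rintro _ ⟨i, rfl⟩
        simp only [SetLike.mem_coe]
        rw [Submodule.mem_orthogonal_singleton_iff_inner_left, inner_sub_left]
        linarith [key i, key 0]
      intro y hy
      exact Submodule.mem_orthogonal_singleton_iff_inner_left.1 (this hy)
    refine ⟨x - v - b • u, hw, by abel, ?_⟩
    have h1 := horth _ hw _ (hsv 0)
    have h2 := horth _ hw _ hu
    have h3 := key 0
    generalize hweq : x - v - b • u = w at *
    have hxeq : x = v + b • u + w := by rw [← hweq]; abel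
    have h6 : ‖x‖ ^ 2 = ‖v‖ ^ 2 + 2 * b * ⟪u, v⟫ + b ^ 2 * ‖u‖ ^ 2 + 2 * ⟪v, w⟫ + ‖w‖ ^ 2 := by
      rw [hxeq, norm_add_sq_real, norm_add_sq_real, inner_add_left, real_inner_smul_left, h2,
        real_inner_smul_right, norm_smul, mul_pow, Real.norm_eq_abs, sq_abs,
        real_inner_comm]
      ring
    rw [inner_sub_left] at h1
    simp only [ha, hb', hc]
    linarith
  -- the quadratic is not identically zero
  have hq : ¬ (a = 0 ∧ b' = 0 ∧ c = 0) := by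
    rintro ⟨h1, h2, h3⟩
    have hu1 : ‖u‖ ^ 2 = 1 := by linarith
    have hsi : ∀ i, s i - v = t i • u := by
      intro i
      have h4 := hα i
      have h5 := hβ i
      have h6 : ⟪u, s i⟫ = t i + α := by linarith
      have : ‖(s i - v) - t i • u‖ ^ 2 = 0 := by
        rw [norm_sub_sq_real, norm_sub_sq_real, real_inner_smul_right, norm_smul, mul_pow,
          Real.norm_eq_abs, sq_abs, hu1, real_inner_comm u (s i - v), inner_sub_right, h6]
        have : ⟪u, v⟫ = α := by linarith
        rw [this]
        linarith
      exact sub_eq_zero.1 (norm_eq_zero.1 (pow_eq_zero_iff (two_ne_zero)|>.1 this))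
    have hdiff : ∀ i j, s i - s j = (t i - t j) • u := by
      intro i j
      rw [sub_smul, ← hsi, ← hsi]; abel
    rcases hcase with hm2 | hne
    · have hle : U ≤ Submodule.span ℝ {u} := by
        rw [hU, Submodule.span_le]
        rintro _ ⟨i, rfl⟩
        simp only [SetLike.mem_coe, hdiff]
        exact Submodule.smul_mem _ _ (Submodule.mem_span_singleton_self u)
      have := Submodule.finrank_mono hle
      rw [hfU, finrank_span_singleton hu0] at this
      omega
    · obtain ⟨i, j, hij⟩ := htne
      apply hne i j (fun h => hij (by rw [h]))
      have : ‖u‖ = 1 := by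
        have := norm_nonneg u
        nlinarith
      rw [hdiff, norm_smul, this, mul_one, Real.norm_eq_abs]
  have hneg : ∃ b, a * b ^ 2 + 2 * b * b' + c < 0 := by
    by_contra! hcon
    obtain ⟨⟨b1, x1⟩, hp1, ⟨b2, x2⟩, hp2, hne⟩ := hX2
    obtain ⟨w1, hw1, e1, q1⟩ := hX2' _ _ hp1
    obtain ⟨w2, hw2, e2, q2⟩ := hX2' _ _ hp2
    have z1 : ‖w1‖ ^ 2 = 0 := by nlinarith [hcon b1, sq_nonneg ‖w1‖]
    have z2 : ‖w2‖ ^ 2 = 0 := by nlinarith [hcon b2, sq_nonneg ‖w2‖]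
    have y1 : w1 = 0 := norm_eq_zero.1 (pow_eq_zero_iff (two_ne_zero)|>.1 z1)
    have y2 : w2 = 0 := norm_eq_zero.1 (pow_eq_zero_iff (two_ne_zero)|>.1 z2)
    have hb : b1 ≠ b2 := by
      rintro rfl
      apply hne
      rw [e1, e2, y1, y2]
    exact hq (aux_quad_s11 a b' c b1 b2 hb (by linarith) (by linarith) hcon)
  -- scaled vectors
  have hscale : ∀ b, a * b ^ 2 + 2 * b * b' + c < 0 → ∀ w ∈ Uᗮ, w ≠ 0 →
      ∃ r : ℝ, r ≠ 0 ∧ (b, v + b • u + r • w) ∈ X ∧ (b, v + b • u + (-r) • w) ∈ X := by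
    intro b hb w hw hw0
    have hnw : 0 < ‖w‖ := norm_pos_iff.2 hw0
    have hpos : 0 < -(a * b ^ 2 + 2 * b * b' + c) := by linarith
    have hr : (Real.sqrt (-(a * b ^ 2 + 2 * b * b' + c)) / ‖w‖) ^ 2 * ‖w‖ ^ 2
        = -(a * b ^ 2 + 2 * b * b' + c) := by
      rw [div_pow, Real.sq_sqrt hpos.le]
      field_simp
    refine ⟨Real.sqrt (-(a * b ^ 2 + 2 * b * b' + c)) / ‖w‖,
      (div_pos (Real.sqrt_pos.2 hpos) hnw).ne', ?_, ?_⟩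
    · apply hX1 _ _ (Submodule.smul_mem _ _ hw)
      rw [norm_smul, mul_pow, Real.norm_eq_abs, sq_abs, hr]; ring
    · apply hX1 _ _ (Submodule.smul_mem _ _ hw)
      rw [norm_smul, mul_pow, Real.norm_eq_abs, sq_abs, neg_sq, hr]; ring
  obtain ⟨b0, hb0⟩ := hneg
  have hQ : ∀ b x, (b, x) ∈ X → x ∈ affineSpan ℝ Qsol := by
    intro b x hx
    apply subset_affineSpan
    rw [hQsol]
    exact ⟨b, hx⟩
  have hperp : ∀ w ∈ Uᗮ, w ∈ (affineSpan ℝ Qsol).direction := by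
    intro w hw
    by_cases hw0 : w = 0
    · rw [hw0]; exact Submodule.zero_mem _
    obtain ⟨r, hr0, h1, h2⟩ := hscale b0 hb0 w hw hw0
    have h3 := AffineSubspace.vsub_mem_direction (hQ _ _ h1) (hQ _ _ h2)
    have h4 : (v + b0 • u + r • w) -ᵥ (v + b0 • u + (-r) • w) = (2 * r) • w := by
      rw [vsub_eq_sub]; module
    rw [h4] at h3
    exact (Submodule.smul_mem_iff _ (by simpa using hr0)).1 h3
  have hpt : ∀ b x, (b, x) ∈ X → v + b • u ∈ affineSpan ℝ Qsol := by
    intro b x hx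
    obtain ⟨w, hw, e, -⟩ := hX2' _ _ hx
    have := AffineSubspace.vadd_mem_of_mem_direction (Submodule.neg_mem _ (hperp w hw)) (hQ _ _ hx)
    rw [e, vadd_eq_add] at this
    convert this using 1
    abel
  have htwo : ∃ b1 b2 : ℝ, b1 ≠ b2 ∧ v + b1 • u ∈ affineSpan ℝ Qsol ∧
      v + b2 • u ∈ affineSpan ℝ Qsol := by
    by_cases hbot : Uᗮ = ⊥
    · obtain ⟨⟨b1, x1⟩, hp1, ⟨b2, x2⟩, hp2, hne⟩ := hX2
      refine ⟨b1, b2, ?_, hpt _ _ hp1, hpt _ _ hp2⟩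
      rintro rfl
      obtain ⟨w1, hw1, e1, -⟩ := hX2' _ _ hp1
      obtain ⟨w2, hw2, e2, -⟩ := hX2' _ _ hp2
      rw [hbot, Submodule.mem_bot] at hw1 hw2
      apply hne
      rw [e1, e2, hw1, hw2]
    · obtain ⟨w, hw, hw0⟩ := Submodule.exists_mem_ne_zero_of_ne_bot hbot
      have hopen : IsOpen {b : ℝ | a * b ^ 2 + 2 * b * b' + c < 0} :=
        isOpen_lt (by fun_prop) (by fun_prop)
      obtain ⟨ε, hε, hball⟩ := Metric.isOpen_iff.1 hopen b0 hb0
      have hb1 : a * (b0 + ε / 2) ^ 2 + 2 * (b0 + ε / 2) * b' + c < 0 := by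
        apply hball
        rw [Metric.mem_ball, Real.dist_eq, add_sub_cancel_left, abs_of_pos (by linarith)]
        linarith
      obtain ⟨r, -, h1, -⟩ := hscale b0 hb0 w hw hw0
      obtain ⟨r', -, h2, -⟩ := hscale _ hb1 w hw hw0
      exact ⟨b0, b0 + ε / 2, by linarith, hpt _ _ h1, hpt _ _ h2⟩
  obtain ⟨b1, b2, hb12, hp1, hp2⟩ := htwo
  have hudir : u ∈ (affineSpan ℝ Qsol).direction := by
    have h3 := AffineSubspace.vsub_mem_direction hp1 hp2
    have h4 : (v + b1 • u) -ᵥ (v + b2 • u) = (b1 - b2) • u := by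
      rw [vsub_eq_sub]; module
    rw [h4] at h3
    exact (Submodule.smul_mem_iff _ (sub_ne_zero.2 hb12)).1 h3
  have hvQ : v ∈ affineSpan ℝ Qsol := by
    have := AffineSubspace.vadd_mem_of_mem_direction (Submodule.smul_mem _ (-b1) hudir) hp1
    rw [vadd_eq_add] at this
    convert this using 1
    module
  have hdisj : Disjoint (Submodule.span ℝ {u}) Uᗮ := by
    refine Disjoint.mono_left ?_ (Submodule.orthogonal_disjoint U)
    rw [Submodule.span_le]
    simpa using hu
  refine ⟨?_, ?_, ?_, ?_, hfU, ?_⟩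
  · apply Set.Subset.antisymm
    · have : affineSpan ℝ Qsol ≤ AffineSubspace.mk' v (Submodule.span ℝ {u} ⊔ Uᗮ) := by
        rw [affineSpan_le]
        intro x hx
        rw [hQsol] at hx
        obtain ⟨b, hb⟩ := hx
        obtain ⟨w, hw, e, -⟩ := hX2' _ _ hb
        rw [SetLike.mem_coe, AffineSubspace.mem_mk', e, vsub_eq_sub]
        have : v + b • u + w - v = b • u + w := by abel
        rw [this]
        exact Submodule.add_mem_sup
          (Submodule.smul_mem _ _ (Submodule.mem_span_singleton_self u)) hw
      intro x hx
      have h := this hx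
      rw [AffineSubspace.mem_mk', vsub_eq_sub] at h
      exact ⟨x - v, h, by abel⟩
    · rintro x ⟨y, hy, rfl⟩
      have hle : Submodule.span ℝ {u} ⊔ Uᗮ ≤ (affineSpan ℝ Qsol).direction := by
        refine sup_le ?_ hperp
        rw [Submodule.span_le]
        simpa using hudir
      have := AffineSubspace.vadd_mem_of_mem_direction (hle hy) hvQ
      rw [vadd_eq_add, add_comm] at this
      exact this
  · have h1 := Submodule.finrank_sup_add_finrank_inf_eq (Submodule.span ℝ {u}) Uᗮ
    rw [hdisj.eq_bot, finrank_bot, finrank_span_singleton hu0] at h1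
    have h2 := Submodule.finrank_add_finrank_orthogonal U
    rw [hfU, finrank_euclideanSpace_fin] at h2
    omega
  · apply le_antisymm
    · rw [affineSpan_le]
      intro x hx
      rw [hQsat] at hx
      obtain ⟨τ, hτ⟩ := hx
      rw [hS] at hτ
      rw [SetLike.mem_coe, hmem, ← Submodule.orthogonal_orthogonal U, Submodule.mem_orthogonal]
      intro w hw
      by_cases hw0 : w = 0
      · rw [hw0, inner_zero_left]
      obtain ⟨r, hr0, h1, h2⟩ := hscale b0 hb0 w hw hw0
      have k1 := hτ _ h1
      have k2 := hτ _ h2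
      have hwu := horth w hw _ hu
      simp only at k1 k2
      have e1 : x - (v + b0 • u + r • w) = (x - v - b0 • u) - r • w := by abel
      have e2 : x - (v + b0 • u + (-r) • w) = (x - v - b0 • u) + r • w := by module
      rw [e1, norm_sub_sq_real] at k1
      rw [e2, norm_add_sq_real] at k2
      have k3 : r * ⟪x - v - b0 • u, w⟫ = 0 := by
        rw [← real_inner_smul_right]; linarith
      have k4 := (mul_eq_zero.1 k3).resolve_left hr0
      rw [inner_sub_left, real_inner_smul_left, hwu] at k4
      rw [real_inner_comm]; linarith
    · apply affineSpan_mono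
      rintro _ ⟨i, rfl⟩
      rw [hQsat]
      refine ⟨t i, ?_⟩
      rw [hS]
      intro p hp
      rw [hX] at hp
      exact hp i
  · ext x
    rw [SetLike.mem_coe, hmem]
    constructor
    · intro h
      exact ⟨x - v, h, by abel⟩
    · rintro ⟨y, hy, rfl⟩
      simpa using hy
  · ext x
    constructor
    · rintro ⟨⟨y, hy, rfl⟩, ⟨z, hz, hyz⟩⟩
      have hyz' : y = z := by simpa using hyz
      subst hyz'
      obtain ⟨p, hp, w, hw, hpw⟩ := Submodule.mem_sup.1 hy
      obtain ⟨l, rfl⟩ := Submodule.mem_span_singleton.1 hp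
      have hwU : w ∈ U := by
        have : w = y - l • u := by rw [← hpw]; abel
        rw [this]
        exact Submodule.sub_mem _ hz (Submodule.smul_mem _ _ hu)
      have hw0 : w = 0 := inner_self_eq_zero.1 (horth w hw w hwU)
      exact ⟨l, by rw [← hpw, hw0, add_zero]⟩
    · rintro ⟨l, rfl⟩
      exact ⟨⟨l • u, Submodule.mem_sup_left
        (Submodule.smul_mem _ _ (Submodule.mem_span_singleton_self u)), rfl⟩,
        ⟨l • u, Submodule.smul_mem _ _ hu, rfl⟩⟩
end

section
/- Assume t₁,…,t_m are not all equal, 𝔛 has at least two elements, m > 2 or |t₁ − t₂| ≠ ‖s₁ − s₂‖, and e = ‖u‖ > 1. Then for every (b,x) ∈ 𝔛 and every (t,s) ∈ 𝒮 the following are equivalent: (i) ‖s − x‖ = t − b; (ii) t ≥ b; (iii) ⟨u, s − c⟩ ≥ 0. Consequently, the (unsquared) global positioning equations ‖sᵢ − x‖ = tᵢ − b (i = 1,…,m) are solvable if and only if ⟨u, sᵢ − c⟩ ≥ 0 for all i, and in that case their solution set equals 𝔛. -/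
open scoped RealInnerProductSpace

theorem stmt_12 {n m : ℕ} [NeZero m] (hn : 1 ≤ n) (hm : m ≤ n + 1)
    (s : Fin m → EuclideanSpace ℝ (Fin n)) (t : Fin m → ℝ)
    (hindep : AffineIndependent ℝ s)
    (u v : EuclideanSpace ℝ (Fin n)) (α β : ℝ)
    (hu : u ∈ Submodule.span ℝ (Set.range fun i => s i - s 0))
    (hα : ∀ i, ⟪u, s i⟫ - α = t i)
    (hv : v ∈ affineSpan ℝ (Set.range s))
    (hβ : ∀ i, 2 * ⟪s i, v⟫ - β = ‖s i‖ ^ 2 - t i ^ 2)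
    (X : Set (ℝ × EuclideanSpace ℝ (Fin n)))
    (hX : X = {p : ℝ × EuclideanSpace ℝ (Fin n) | ∀ i, ‖s i - p.2‖ ^ 2 = (t i - p.1) ^ 2})
    (S : Set (ℝ × EuclideanSpace ℝ (Fin n)))
    (hS : S = {q : ℝ × EuclideanSpace ℝ (Fin n) | ∀ p ∈ X, ‖q.2 - p.2‖ ^ 2 = (q.1 - p.1) ^ 2})
    (htne : ∃ i j : Fin m, t i ≠ t j)
    (hX2 : X.Nontrivial)
    (hcase : 2 < m ∨ ∀ i j : Fin m, i ≠ j → |t i - t j| ≠ ‖s i - s j‖)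
    (e μ ρ : ℝ) (he : e = ‖u‖) (he0 : e ≠ 0) (he1 : e ≠ 1)
    (hμ : μ = (⟪u, v⟫ - α) / (e ^ 2 - 1))
    (hρ : ρ = (⟪u, v⟫ - α) ^ 2 / (e ^ 2 - 1) - ‖v‖ ^ 2 + β)
    (c : EuclideanSpace ℝ (Fin n)) (hc : c = v - μ • u)
    (hgt : 1 < e) :
    (∀ p ∈ X, ∀ q ∈ S,
      ((‖q.2 - p.2‖ = q.1 - p.1) ↔ p.1 ≤ q.1) ∧
      ((p.1 ≤ q.1) ↔ 0 ≤ ⟪u, q.2 - c⟫)) ∧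
    ((∃ p : ℝ × EuclideanSpace ℝ (Fin n), ∀ i, ‖s i - p.2‖ = t i - p.1)
      ↔ ∀ i, 0 ≤ ⟪u, s i - c⟫) ∧
    ((∀ i, 0 ≤ ⟪u, s i - c⟫) →
      {p : ℝ × EuclideanSpace ℝ (Fin n) | ∀ i, ‖s i - p.2‖ = t i - p.1} = X) := by
  have hD : 0 < e ^ 2 - 1 := by nlinarith
  have hD' : e ^ 2 - 1 ≠ 0 := hD.ne'
  have huu : ⟪u, u⟫ = e ^ 2 := by rw [real_inner_self_eq_norm_sq, he]
  have hμ1 : μ * (e ^ 2 - 1) = ⟪u, v⟫ - α := by rw [hμ]; field_simp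
  have hρ1 : ρ = μ ^ 2 * (e ^ 2 - 1) - ⟪v, v⟫ + β := by
    rw [hρ, hμ, real_inner_self_eq_norm_sq]; field_simp
  -- facts on the sources
  have hτ : ∀ i, ⟪u, s i - c⟫ = t i + μ := by
    intro i
    rw [hc]
    simp only [inner_sub_right, inner_smul_right, huu]
    linarith [hα i]
  have hy : ∀ i, ⟪s i - c, s i - c⟫ = (t i + μ) ^ 2 - ρ := by
    intro i
    have h1 := hβ i
    rw [← real_inner_self_eq_norm_sq] at h1
    have h2 := hα i
    rw [hc, hρ1]
    simp only [inner_sub_right, inner_sub_left, inner_smul_right, inner_smul_left, huu,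
      real_inner_comm u v, real_inner_comm (s i) v, real_inner_comm (s i) u,
      RCLike.conj_to_real] at *
    have e1 : ⟪v, s i⟫ = ⟪s i, v⟫ := real_inner_comm _ _
    have e2 : ⟪v, u⟫ = ⟪u, v⟫ := real_inner_comm _ _
    have e3 : ⟪s i, u⟫ = ⟪u, s i⟫ := real_inner_comm _ _
    simp only [e1, e2, e3] at *
    linear_combination -h1 + 2 * μ * h2 + 2 * μ * hμ1
  -- general expansion
  have key : ∀ (y w : EuclideanSpace ℝ (Fin n)) (a : ℝ), ‖y - a • u - w‖ ^ 2 =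
      ⟪y, y⟫ + a ^ 2 * e ^ 2 + ⟪w, w⟫ - 2 * a * ⟪u, y⟫ - 2 * ⟪y, w⟫ + 2 * a * ⟪u, w⟫ := by
    intro y w a
    rw [← real_inner_self_eq_norm_sq]
    have e1 : ⟪y, u⟫ = ⟪u, y⟫ := real_inner_comm _ _
    have e2 : ⟪w, u⟫ = ⟪u, w⟫ := real_inner_comm _ _
    have e3 : ⟪w, y⟫ = ⟪y, w⟫ := real_inner_comm _ _
    simp only [inner_sub_right, inner_sub_left, inner_smul_right, inner_smul_left, huu, e1, e2, e3,
      RCLike.conj_to_real]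
    ring
  have hXe : ∀ p ∈ X, (e ^ 2 - 1) * (p.1 + μ) ^ 2
      + ‖p.2 - c - (p.1 + μ) • u‖ ^ 2 = ρ := by
    intro p hp
    rw [hX] at hp
    set w := p.2 - c - (p.1 + μ) • u with hw
    have h1 : ∀ i, (p.1 + μ) ^ 2 * (e ^ 2 - 1) + ⟪w, w⟫ - ρ
        = 2 * ⟪s i - c, w⟫ - 2 * (p.1 + μ) * ⟪u, w⟫ := by
      intro i
      have h2 := hp i
      have h3 : s i - p.2 = (s i - c) - (p.1 + μ) • u - w := by rw [hw]; abel
      rw [h3, key, hτ i, hy i] at h2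
      linear_combination h2
    have h0 : ∀ z ∈ Submodule.span ℝ (Set.range fun i => s i - s 0), ⟪z, w⟫ = 0 := by
      intro z hz
      induction hz using Submodule.span_induction with
      | mem z hz =>
        obtain ⟨i, rfl⟩ := hz
        have ha := h1 i
        have hb := h1 0
        simp only [inner_sub_left] at ha hb ⊢
        linarith
      | zero => simp
      | add a b _ _ ha hb => rw [inner_add_left, ha, hb, add_zero]
      | smul r a _ ha => rw [inner_smul_left, ha, mul_zero]
    have hvs : v - s 0 ∈ Submodule.span ℝ (Set.range fun i => s i - s 0) := by
      have h4 := AffineSubspace.vsub_mem_direction hv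
        (subset_affineSpan ℝ _ (Set.mem_range_self (f := s) 0))
      rw [direction_affineSpan, vectorSpan_range_eq_span_range_vsub_right ℝ s 0] at h4
      exact h4
    have h5 := h0 _ hu
    have h6 := h0 _ hvs
    have h7 : ⟪s 0 - c, w⟫ = 0 := by
      rw [hc]
      simp only [inner_sub_left, inner_smul_left, RCLike.conj_to_real] at h6 ⊢
      rw [h5]; linarith
    have h8 := h1 0
    rw [h5, h7] at h8
    rw [← real_inner_self_eq_norm_sq]
    linarith
  have hρpos : 0 < ρ := by
    by_contra hneg
    obtain ⟨p, hp, q, hq, hpq⟩ := hX2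
    have hz : ∀ p ∈ X, p = (-μ, c) := by
      intro p hp
      have h := hXe p hp
      have h1 : (p.1 + μ) ^ 2 = 0 := by
        nlinarith [sq_nonneg (p.1 + μ), sq_nonneg ‖p.2 - c - (p.1 + μ) • u‖]
      have h2 : p.1 + μ = 0 := by simpa using h1
      rw [h2] at h
      have h3 : ‖p.2 - c - (0 : ℝ) • u‖ ^ 2 = 0 := by
        nlinarith [sq_nonneg ‖p.2 - c - (0 : ℝ) • u‖]
      have h4 : p.2 - c = 0 := by simpa using h3
      exact Prod.ext (by simp; linarith) (sub_eq_zero.mp h4)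
    exact hpq ((hz p hp).trans (hz q hq).symm)
  have hpt : ∀ a : ℝ, (e ^ 2 - 1) * a ^ 2 = ρ → (a - μ, c + a • u) ∈ X := by
    intro a ha
    rw [hX]
    intro i
    have h3 : s i - (c + a • u) = (s i - c) - a • u - 0 := by rw [sub_zero]; abel
    simp only
    rw [h3, key, hτ i, hy i]
    simp only [inner_zero_right]
    linear_combination ha
  have hSe : ∀ q ∈ S, ⟪u, q.2 - c⟫ = q.1 + μ ∧
      ⟪q.2 - c, q.2 - c⟫ = (q.1 + μ) ^ 2 - ρ := by
    intro q hq
    rw [hS] at hq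
    obtain ⟨a, ha0, ha⟩ : ∃ a : ℝ, 0 < a ∧ (e ^ 2 - 1) * a ^ 2 = ρ := by
      refine ⟨Real.sqrt (ρ / (e ^ 2 - 1)), Real.sqrt_pos.mpr (by positivity), ?_⟩
      rw [Real.sq_sqrt (by positivity)]; field_simp
    have h : ∀ a : ℝ, (e ^ 2 - 1) * a ^ 2 = ρ →
        ⟪q.2 - c, q.2 - c⟫ + ρ - 2 * a * ⟪u, q.2 - c⟫ = (q.1 + μ) ^ 2 - 2 * a * (q.1 + μ) := by
      intro a ha
      have h1 := hq _ (hpt a ha)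
      have h3 : q.2 - (c + a • u) = (q.2 - c) - a • u - 0 := by rw [sub_zero]; abel
      simp only at h1
      rw [h3, key] at h1
      simp only [inner_zero_right] at h1
      linear_combination h1 - ha
    have h1 := h a ha
    have h2 := h (-a) (by rw [neg_sq]; exact ha)
    constructor
    · apply mul_left_cancel₀ ha0.ne'
      linarith
    · linarith
  have main : ∀ p ∈ X, ∀ q ∈ S,
      ((‖q.2 - p.2‖ = q.1 - p.1) ↔ p.1 ≤ q.1) ∧
      ((p.1 ≤ q.1) ↔ 0 ≤ ⟪u, q.2 - c⟫) := by
    intro p hp q hq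
    have hsq : ‖q.2 - p.2‖ ^ 2 = (q.1 - p.1) ^ 2 := by
      have := hq
      rw [hS] at this
      exact this p hp
    obtain ⟨h1, h2⟩ := hSe q hq
    have h3 := hXe p hp
    refine ⟨⟨fun h => ?_, fun h => ?_⟩, ?_⟩
    · have := norm_nonneg (q.2 - p.2); linarith
    · exact (sq_eq_sq₀ (norm_nonneg _) (by linarith)).mp hsq
    · rw [h1]
      have hcs := real_inner_mul_inner_self_le u (q.2 - c)
      rw [h1, h2, huu] at hcs
      have h4 : (e ^ 2 - 1) * (p.1 + μ) ^ 2 < (e ^ 2 - 1) * (q.1 + μ) ^ 2 := by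
        nlinarith [sq_nonneg ‖p.2 - c - (p.1 + μ) • u‖]
      have h5 := sq_lt_sq.mp (lt_of_mul_lt_mul_left h4 hD.le)
      constructor
      · intro h
        by_contra hn
        rw [abs_of_neg (not_le.mp hn)] at h5
        linarith [neg_abs_le (p.1 + μ)]
      · intro h
        rw [abs_of_nonneg h] at h5
        linarith [le_abs_self (p.1 + μ)]
  have hsS : ∀ i, (t i, s i) ∈ S := by
    intro i
    rw [hS]
    intro p hp
    rw [hX] at hp
    exact hp i
  have hsub : ∀ p : ℝ × EuclideanSpace ℝ (Fin n), (∀ i, ‖s i - p.2‖ = t i - p.1) → p ∈ X := by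
    intro p hp
    rw [hX]
    intro i
    rw [hp i]
  have heq : (∀ i, 0 ≤ ⟪u, s i - c⟫) → ∀ p ∈ X, ∀ i, ‖s i - p.2‖ = t i - p.1 := by
    intro h p hp i
    have := main p hp _ (hsS i)
    exact this.1.mpr (this.2.mpr (h i))
  refine ⟨main, ⟨?_, ?_⟩, ?_⟩
  · rintro ⟨p, hp⟩ i
    have := main p (hsub p hp) _ (hsS i)
    exact this.2.mp (this.1.mp (hp i))
  · intro h
    obtain ⟨p, hp⟩ := hX2.nonempty
    exact ⟨p, heq h p hp⟩
  · intro h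
    ext p
    exact ⟨hsub p, heq h p⟩
end

section
/- Assume t₁,…,t_m are not all equal, 𝔛 has at least two elements, m > 2 or |t₁ − t₂| ≠ ‖s₁ − s₂‖, and 0 < e = ‖u‖ < 1. Then for every (b,x) ∈ 𝔛 and every (t,s) ∈ 𝒮 the following are equivalent: (i) ‖s − x‖ = t − b; (ii) t ≥ b; (iii) ⟨u, x − c⟩ ≤ 0. Consequently, the solutions of the (unsquared) global positioning equations ‖sᵢ − x‖ = tᵢ − b (i = 1,…,m) are exactly the (b,x) ∈ 𝔛 with ⟨u, x − c⟩ ≤ 0. -/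
open scoped RealInnerProductSpace

theorem stmt_13 {n m : ℕ} [NeZero m] (hn : 1 ≤ n) (hm : m ≤ n + 1)
    (s : Fin m → EuclideanSpace ℝ (Fin n)) (t : Fin m → ℝ)
    (hindep : AffineIndependent ℝ s)
    (u v : EuclideanSpace ℝ (Fin n)) (α β : ℝ)
    (hu : u ∈ Submodule.span ℝ (Set.range fun i => s i - s 0))
    (hα : ∀ i, ⟪u, s i⟫ - α = t i)
    (hv : v ∈ affineSpan ℝ (Set.range s))
    (hβ : ∀ i, 2 * ⟪s i, v⟫ - β = ‖s i‖ ^ 2 - t i ^ 2)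
    (X : Set (ℝ × EuclideanSpace ℝ (Fin n)))
    (hX : X = {p : ℝ × EuclideanSpace ℝ (Fin n) | ∀ i, ‖s i - p.2‖ ^ 2 = (t i - p.1) ^ 2})
    (S : Set (ℝ × EuclideanSpace ℝ (Fin n)))
    (hS : S = {q : ℝ × EuclideanSpace ℝ (Fin n) | ∀ p ∈ X, ‖q.2 - p.2‖ ^ 2 = (q.1 - p.1) ^ 2})
    (htne : ∃ i j : Fin m, t i ≠ t j)
    (hX2 : X.Nontrivial)
    (hcase : 2 < m ∨ ∀ i j : Fin m, i ≠ j → |t i - t j| ≠ ‖s i - s j‖)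
    (e μ ρ : ℝ) (he : e = ‖u‖) (he0 : e ≠ 0) (he1 : e ≠ 1)
    (hμ : μ = (⟪u, v⟫ - α) / (e ^ 2 - 1))
    (hρ : ρ = (⟪u, v⟫ - α) ^ 2 / (e ^ 2 - 1) - ‖v‖ ^ 2 + β)
    (c : EuclideanSpace ℝ (Fin n)) (hc : c = v - μ • u)
    (hpos : 0 < e) (hlt : e < 1) :
    (∀ p ∈ X, ∀ q ∈ S,
      ((‖q.2 - p.2‖ = q.1 - p.1) ↔ p.1 ≤ q.1) ∧
      ((p.1 ≤ q.1) ↔ ⟪u, p.2 - c⟫ ≤ 0)) ∧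
    {p : ℝ × EuclideanSpace ℝ (Fin n) | ∀ i, ‖s i - p.2‖ = t i - p.1}
      = {p ∈ X | ⟪u, p.2 - c⟫ ≤ 0} := by
  have e2 : ⟪u, u⟫ = e ^ 2 := by rw [he, real_inner_self_eq_norm_sq]
  have hlt2 : e ^ 2 < 1 := by nlinarith
  have hμ' : ⟪u, v⟫ - α = μ * (e ^ 2 - 1) := by
    rw [hμ, div_mul_cancel₀]; linarith
  -- orthogonality
  have hux : ∀ p ∈ X, ⟪u, p.2⟫ = ⟪u, v⟫ + p.1 * e ^ 2 := by
    intro p hp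
    rw [hX] at hp
    have key : ∀ i, 2 * ⟪s i, v - p.2 + p.1 • u⟫ = β + 2 * α * p.1 + p.1 ^ 2 - ‖p.2‖ ^ 2 := by
      intro i
      have h1 := hp i
      rw [norm_sub_sq_real] at h1
      have h2 := hβ i
      have h3 := hα i
      rw [real_inner_comm] at h3
      rw [inner_add_right, inner_sub_right, inner_smul_right]
      linear_combination h2 + h1 + 2 * p.1 * h3
    have hw : ⟪u, v - p.2 + p.1 • u⟫ = 0 := by
      have hle : Submodule.span ℝ (Set.range fun i => s i - s 0) ≤
          LinearMap.ker (innerₗ (EuclideanSpace ℝ (Fin n)) (v - p.2 + p.1 • u)) := by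
        rw [Submodule.span_le]
        rintro _ ⟨i, rfl⟩
        simp only [SetLike.mem_coe, LinearMap.mem_ker, innerₗ_apply_apply]
        rw [real_inner_comm, inner_sub_left]
        linarith [key i, key 0]
      have := hle hu
      rw [LinearMap.mem_ker, innerₗ_apply_apply] at this
      rw [real_inner_comm]
      exact this
    rw [inner_add_right, inner_sub_right, inner_smul_right, e2] at hw
    linarith
  have huc : ∀ p ∈ X, ⟪u, p.2 - c⟫ = (p.1 + μ) * e ^ 2 := by
    intro p hp
    rw [hc, inner_sub_right, inner_sub_right, inner_smul_right, e2, hux p hp]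
    ring
  have hsx : ∀ p ∈ X, ∀ i, ⟪s i - p.2, u⟫ = t i - p.1 + (p.1 + μ) * (1 - e ^ 2) := by
    intro p hp i
    rw [real_inner_comm, inner_sub_right, hux p hp]
    linear_combination hα i - hμ'
  have hrefl : ∀ p ∈ X, (-2 * μ - p.1, p.2 + (-2 * μ - p.1 - p.1) • u) ∈ X := by
    intro p hp
    have h1 := hsx p hp
    rw [hX] at hp ⊢
    intro i
    have h2 := hp i
    have h3 := h1 i
    simp only
    rw [← sub_sub, norm_sub_sq_real, inner_smul_right, norm_smul, mul_pow, ← he, h2, h3,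
      Real.norm_eq_abs, sq_abs]
    ring
  have hne : ∀ p ∈ X, p.1 + μ ≠ 0 := by
    intro p hp h0
    have hz : ∀ i, t i = p.1 := by
      intro i
      have h3 := hsx p hp i
      rw [h0] at h3
      rw [hX] at hp
      have h2 := hp i
      have h4 := real_inner_mul_inner_self_le (s i - p.2) u
      rw [h3, e2, real_inner_self_eq_norm_sq, h2] at h4
      have h5 : (t i - p.1) ^ 2 = 0 := by nlinarith [sq_nonneg (t i - p.1)]
      have := pow_eq_zero_iff (two_ne_zero) |>.1 h5
      linarith
    obtain ⟨i, j, hij⟩ := htne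
    exact hij ((hz i).trans (hz j).symm)
  have habs : ∀ p ∈ X, ∀ q ∈ S, ‖q.2 - p.2‖ = |q.1 - p.1| := by
    intro p hp q hq
    rw [hS] at hq
    have := hq p hp
    rw [← abs_norm]
    exact (sq_eq_sq_iff_abs_eq_abs _ _).1 this
  have hlip : ∀ p ∈ X, ∀ q ∈ S,
      |(|q.1 - p.1| - |q.1 - (-2 * μ - p.1)|)| ≤ |2 * (p.1 + μ)| * e := by
    intro p hp q hq
    have h1 := habs p hp q hq
    have h2 := habs _ (hrefl p hp) q hq
    simp only at h2
    rw [← h1, ← h2]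
    refine (abs_norm_sub_norm_le _ _).trans (le_of_eq ?_)
    have : q.2 - p.2 - (q.2 - (p.2 + (-2 * μ - p.1 - p.1) • u)) = (-(2 * (p.1 + μ))) • u := by
      module
    rw [this, norm_smul, he, Real.norm_eq_abs, abs_neg]
  have main : ∀ p ∈ X, ∀ q ∈ S, (p.1 ≤ q.1 ↔ ⟪u, p.2 - c⟫ ≤ 0) := by
    intro p hp q hq
    rw [huc p hp]
    have h1 := hlip p hp q hq
    have h2 := hne p hp
    rcases lt_or_gt_of_ne h2 with h | h
    · refine ⟨fun _ => by nlinarith [sq_nonneg e], fun _ => ?_⟩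
      by_contra! hc
      rw [abs_of_neg (by linarith : q.1 - p.1 < 0),
        abs_of_neg (by linarith : q.1 - (-2 * μ - p.1) < 0),
        abs_of_neg (by linarith : 2 * (p.1 + μ) < 0)] at h1
      have := (abs_le.1 h1).1
      nlinarith
    · refine ⟨fun hc => ?_, fun hc => ?_⟩
      · exfalso
        rw [abs_of_nonneg (by linarith : 0 ≤ q.1 - p.1),
          abs_of_nonneg (by linarith : 0 ≤ q.1 - (-2 * μ - p.1)),
          abs_of_pos (by linarith : 0 < 2 * (p.1 + μ))] at h1
        have := (abs_le.1 h1).1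
        nlinarith
      · exfalso
        have : 0 < (p.1 + μ) * e ^ 2 := by positivity
        linarith
  have hsS : ∀ i, (t i, s i) ∈ S := by
    intro i
    rw [hS]
    intro p hp
    rw [hX] at hp
    exact hp i
  have hiff : ∀ p ∈ X, ∀ q ∈ S, (‖q.2 - p.2‖ = q.1 - p.1 ↔ p.1 ≤ q.1) := by
    intro p hp q hq
    rw [habs p hp q hq, abs_eq_self, sub_nonneg]
  refine ⟨fun p hp q hq => ⟨hiff p hp q hq, main p hp q hq⟩, ?_⟩
  ext p
  constructor
  · intro hp
    have hpX : p ∈ X := by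
      rw [hX]
      intro i
      rw [hp i]
    exact ⟨hpX, (main p hpX _ (hsS 0)).1 ((hiff p hpX _ (hsS 0)).1 (hp 0))⟩
  · rintro ⟨hpX, h⟩ i
    exact (hiff p hpX _ (hsS i)).2 ((main p hpX _ (hsS i)).2 h)
end

section
/- Assume t₁,…,t_m are not all equal, 𝔛 has at least two elements, m > 2 or |t₁ − t₂| ≠ ‖s₁ − s₂‖, and ‖u‖ = 1. Then for every (b,x) ∈ 𝔛 and every (t,s) ∈ 𝒮 the following are equivalent: (i) ‖s − x‖ = t − b; (ii) t ≥ b; (iii) ⟨u,v⟩ > α. Consequently, the (unsquared) global positioning equations ‖sᵢ − x‖ = tᵢ − b (i = 1,…,m) are solvable if and only if ⟨u,v⟩ > α, and in that case their solution set equals 𝔛. -/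
open scoped RealInnerProductSpace

lemma gp_span {E : Type*} [NormedAddCommGroup E] [InnerProductSpace ℝ E] {ι : Type*}
    (f : ι → E) (w : E) (h : ∀ i, ⟪w, f i⟫ = 0) {y : E}
    (hy : y ∈ Submodule.span ℝ (Set.range f)) : ⟪w, y⟫ = 0 := by
  induction hy using Submodule.span_induction with
  | mem x hx => obtain ⟨i, rfl⟩ := hx; exact h i
  | zero => simp
  | add x y _ _ hx hy => rw [inner_add_right, hx, hy, add_zero]
  | smul a x _ hx => rw [inner_smul_right, hx, mul_zero]

theorem stmt_14 {n m : ℕ} [NeZero m] (hn : 1 ≤ n) (hm : m ≤ n + 1)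
    (s : Fin m → EuclideanSpace ℝ (Fin n)) (t : Fin m → ℝ)
    (hindep : AffineIndependent ℝ s)
    (u v : EuclideanSpace ℝ (Fin n)) (α β : ℝ)
    (hu : u ∈ Submodule.span ℝ (Set.range fun i => s i - s 0))
    (hα : ∀ i, ⟪u, s i⟫ - α = t i)
    (hv : v ∈ affineSpan ℝ (Set.range s))
    (hβ : ∀ i, 2 * ⟪s i, v⟫ - β = ‖s i‖ ^ 2 - t i ^ 2)
    (X : Set (ℝ × EuclideanSpace ℝ (Fin n)))
    (hX : X = {p : ℝ × EuclideanSpace ℝ (Fin n) | ∀ i, ‖s i - p.2‖ ^ 2 = (t i - p.1) ^ 2})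
    (S : Set (ℝ × EuclideanSpace ℝ (Fin n)))
    (hS : S = {q : ℝ × EuclideanSpace ℝ (Fin n) | ∀ p ∈ X, ‖q.2 - p.2‖ ^ 2 = (q.1 - p.1) ^ 2})
    (htne : ∃ i j : Fin m, t i ≠ t j)
    (hX2 : X.Nontrivial)
    (hcase : 2 < m ∨ ∀ i j : Fin m, i ≠ j → |t i - t j| ≠ ‖s i - s j‖)
    (heq : ‖u‖ = 1) :
    (∀ p ∈ X, ∀ q ∈ S,
      ((‖q.2 - p.2‖ = q.1 - p.1) ↔ p.1 ≤ q.1) ∧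
      ((p.1 ≤ q.1) ↔ α < ⟪u, v⟫)) ∧
    ((∃ p : ℝ × EuclideanSpace ℝ (Fin n), ∀ i, ‖s i - p.2‖ = t i - p.1) ↔ α < ⟪u, v⟫) ∧
    (α < ⟪u, v⟫ →
      {p : ℝ × EuclideanSpace ℝ (Fin n) | ∀ i, ‖s i - p.2‖ = t i - p.1} = X) := by
  have hvU : v - s 0 ∈ Submodule.span ℝ (Set.range fun i => s i - s 0) := by
    have h1 := AffineSubspace.vsub_mem_direction hv (mem_affineSpan ℝ (Set.mem_range_self (f := s) 0))
    rw [direction_affineSpan, vectorSpan_range_eq_span_range_vsub_right ℝ s 0] at h1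
    exact h1
  -- orthogonality to differences
  have orth : ∀ w : EuclideanSpace ℝ (Fin n), (∀ i, ⟪w, s i - s 0⟫ = 0) →
      ⟪w, u⟫ = 0 ∧ ∀ i, ⟪w, s i⟫ = ⟪w, v⟫ := by
    intro w hw
    refine ⟨gp_span _ w hw hu, fun i => ?_⟩
    have h1 := gp_span _ w hw hvU
    have h2 := hw i
    rw [inner_sub_right] at h1 h2
    linarith
  have huu : ⟪u, u⟫ = 1 := by rw [real_inner_self_eq_norm_sq, heq]; norm_num
  -- parametrization
  have key : ∀ (b : ℝ) (w : EuclideanSpace ℝ (Fin n)) (i : Fin m), ⟪w, u⟫ = 0 → 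
      (‖s i - (v + b • u + w)‖ ^ 2 - (t i - b) ^ 2
        = ‖w‖ ^ 2 + ‖v‖ ^ 2 - β + 2 * b * (⟪u, v⟫ - α) - 2 * (⟪w, s i⟫ - ⟪w, v⟫)) := by
    intro b w i hw
    have e1 := hα i
    have e2 := hβ i
    simp only [← real_inner_self_eq_norm_sq] at e2 ⊢
    simp only [inner_sub_left, inner_sub_right, inner_add_left, inner_add_right,
      inner_smul_left, inner_smul_right, huu, hw, real_inner_comm w u, real_inner_comm (s i) w,
      real_inner_comm (s i) u, real_inner_comm v u, real_inner_comm v w, real_inner_comm v (s i)] at e1 e2 ⊢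
    simp only [real_inner_comm u v, real_inner_comm w v, real_inner_comm u (s i), real_inner_comm w (s i), real_inner_comm (s i) v, real_inner_comm u w, hw, RCLike.conj_to_real] at e1 e2 ⊢
    rw [← e1] at e2 ⊢
    linear_combination -e2
  have fwd : ∀ p ∈ X, ∃ w : EuclideanSpace ℝ (Fin n), p.2 = v + p.1 • u + w ∧
      (∀ i, ⟪w, s i - s 0⟫ = 0) ∧
      ‖w‖ ^ 2 + ‖v‖ ^ 2 - β + 2 * p.1 * (⟪u, v⟫ - α) = 0 := by
    intro p hp
    rw [hX] at hp
    have hp' : ∀ i, ‖s i - p.2‖ ^ 2 = (t i - p.1) ^ 2 := hp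
    have hO : ∀ i, ⟪p.2 - v - p.1 • u, s i - s 0⟫ = 0 := by
      intro i
      have a1 := hp' i
      have a2 := hp' 0
      have b1 := hα i
      have b2 := hα 0
      have c1 := hβ i
      have c2 := hβ 0
      rw [norm_sub_sq_real] at a1 a2
      simp only [inner_sub_left, inner_sub_right, inner_smul_left, RCLike.conj_to_real]
      rw [real_inner_comm (s i) v, real_inner_comm (s 0) v] at *
      rw [real_inner_comm p.2 (s i)] at *
      rw [real_inner_comm p.2 (s 0)] at *
      linear_combination (-1/2) * a1 + (1/2) * a2 - p.1 * b1 + p.1 * b2 - (1/2) * c1 + (1/2) * c2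
    have hx : p.2 = v + p.1 • u + (p.2 - v - p.1 • u) := by abel
    refine ⟨p.2 - v - p.1 • u, hx, hO, ?_⟩
    have k := key p.1 _ 0 (orth _ hO).1
    rw [← hx, hp' 0, (orth _ hO).2 0] at k
    linarith
  have bwd : ∀ (b : ℝ) (w : EuclideanSpace ℝ (Fin n)), (∀ i, ⟪w, s i - s 0⟫ = 0) →
      ‖w‖ ^ 2 + ‖v‖ ^ 2 - β + 2 * b * (⟪u, v⟫ - α) = 0 → (b, v + b • u + w) ∈ X := by
    intro b w hO h
    rw [hX]
    intro i
    have k := key b w i (orth _ hO).1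
    rw [(orth _ hO).2 i] at k
    simp only
    linarith
  have hγ : ⟪u, v⟫ - α ≠ 0 := by
    intro h0
    obtain ⟨p, hp, -⟩ := hX2
    obtain ⟨w, -, -, hw⟩ := fwd p hp
    rw [h0] at hw
    have col : ∀ i, s i - v = t i • u := by
      intro i
      have e1 := hα i
      have e2 := hβ i
      have e3 : ‖s i - v - t i • u‖ ^ 2 = - ‖w‖ ^ 2 := by
        rw [norm_sub_sq_real, norm_sub_sq_real, norm_smul, heq, inner_smul_right, inner_sub_left,
          Real.norm_eq_abs, mul_one, sq_abs, real_inner_comm u (s i), real_inner_comm u v]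
        have e4 : ⟪u, s i⟫ = t i + α := by linarith
        have e5 : ⟪u, v⟫ = α := by linarith
        rw [e4, e5]
        linarith
      have e6 : ‖s i - v - t i • u‖ = 0 := by
        have := sq_nonneg ‖w‖
        have := sq_nonneg ‖s i - v - t i • u‖
        exact pow_eq_zero_iff (two_ne_zero) |>.1 (by linarith)
      exact sub_eq_zero.1 (norm_eq_zero.1 e6)
    rcases hcase with h | h
    · have hc : Collinear ℝ (Set.range s) := by
        rw [collinear_iff_exists_forall_eq_smul_vadd]
        refine ⟨v, u, ?_⟩
        rintro _ ⟨i, rfl⟩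
        exact ⟨t i, by rw [← col i]; simp⟩
      have h1 := collinear_iff_finrank_le_one.1 hc
      have h2 := hindep.finrank_vectorSpan (n := m - 1) (by simp; omega)
      omega
    · obtain ⟨i, j, hij⟩ := htne
      apply h i j (fun e => hij (by rw [e]))
      have : s i - s j = (t i - t j) • u := by
        rw [sub_smul, ← col i, ← col j]; abel
      rw [this, norm_smul, heq, mul_one, Real.norm_eq_abs]
  have sS : ∀ i, (t i, s i) ∈ S := by
    intro i
    rw [hS]
    intro p hp
    rw [hX] at hp
    exact hp i
  have hw0 : ∃ w : EuclideanSpace ℝ (Fin n), w ≠ 0 ∧ ∀ i, ⟪w, s i - s 0⟫ = 0 := by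
    obtain ⟨p, hp, q, hq, hpq⟩ := hX2
    obtain ⟨w, hw1, hw2, hw3⟩ := fwd p hp
    obtain ⟨w', hw1', hw2', hw3'⟩ := fwd q hq
    by_contra! hcon
    have z : w = 0 := by
      by_contra hne
      obtain ⟨i, hi⟩ := hcon w hne
      exact hi (hw2 i)
    have z' : w' = 0 := by
      by_contra hne
      obtain ⟨i, hi⟩ := hcon w' hne
      exact hi (hw2' i)
    subst z z'
    have hb : p.1 = q.1 := by
      apply mul_right_cancel₀ hγ
      linarith
    exact hpq (Prod.ext hb (by rw [hw1, hw1', hb]))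
  have qS : ∀ q ∈ S, q.1 = ⟪u, q.2⟫ - α := by
    intro q hq
    obtain ⟨w, hne, hO⟩ := hw0
    have hO' : ∀ i, ⟪-w, s i - s 0⟫ = 0 := fun i => by rw [inner_neg_left, hO i, neg_zero]
    have hO0 : ∀ i, ⟪(0 : EuclideanSpace ℝ (Fin n)), s i - s 0⟫ = 0 := fun i => inner_zero_left _
    rw [hS] at hq
    have hq' : ∀ p ∈ X, ‖q.2 - p.2‖ ^ 2 = (q.1 - p.1) ^ 2 := hq
    have ex : ∀ (b : ℝ) (w : EuclideanSpace ℝ (Fin n)), ⟪w, u⟫ = 0 →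
        ‖q.2 - (v + b • u + w)‖ ^ 2 = ‖q.2 - v‖ ^ 2 - 2 * b * (⟪u, q.2⟫ - ⟪u, v⟫)
          - 2 * ⟪w, q.2 - v⟫ + b ^ 2 + ‖w‖ ^ 2 := by
      intro b w hw
      have : q.2 - (v + b • u + w) = (q.2 - v) - (b • u + w) := by abel
      rw [this, norm_sub_sq_real (q.2 - v), norm_add_sq_real, norm_smul, heq, inner_add_right,
        inner_smul_right, inner_smul_left, real_inner_comm w u, hw, real_inner_comm u (q.2 - v),
        real_inner_comm w (q.2 - v), inner_sub_right u, mul_one, Real.norm_eq_abs, sq_abs]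
      ring
    set g := ⟪u, v⟫ - α with hg
    have P0 := hq' _ (bwd ((β - ‖v‖ ^ 2) / (2 * g)) 0 hO0 (by rw [norm_zero]; field_simp; ring))
    have P1 := hq' _ (bwd ((β - ‖v‖ ^ 2 - ‖w‖ ^ 2) / (2 * g)) w hO (by field_simp; ring))
    have P2 := hq' _ (bwd ((β - ‖v‖ ^ 2 - ‖w‖ ^ 2) / (2 * g)) (-w) hO' (by rw [norm_neg]; field_simp; ring))
    simp only at P0 P1 P2
    rw [ex _ _ (orth _ hO0).1, norm_zero, inner_zero_left] at P0
    rw [ex _ _ (orth _ hO).1] at P1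
    rw [ex _ _ (orth _ hO').1, norm_neg, inner_neg_left] at P2
    have hd : (β - ‖v‖ ^ 2) / (2 * g) = (β - ‖v‖ ^ 2 - ‖w‖ ^ 2) / (2 * g) + ‖w‖ ^ 2 / (2 * g) := by
      ring
    rw [hd] at P0
    set b := (β - ‖v‖ ^ 2 - ‖w‖ ^ 2) / (2 * g)
    set d := ‖w‖ ^ 2 / (2 * g) with hdd
    have hwd : ‖w‖ ^ 2 = d * (2 * g) := by rw [hdd]; field_simp
    have hd0 : d ≠ 0 := by
      intro h
      rw [h, zero_mul] at hwd
      exact hne (norm_eq_zero.1 (pow_eq_zero_iff two_ne_zero |>.1 hwd))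
    rw [hwd] at P1 P2
    have : d * (q.1 - (⟪u, q.2⟫ - α)) = 0 := by
      have hv : ⟪u, v⟫ = g + α := by rw [hg]; ring
      rw [hv] at P0 P1 P2
      linear_combination (1/2) * P0 - (1/4) * P1 - (1/4) * P2
    rcases mul_eq_zero.1 this with h | h
    · exact absurd h hd0
    · linarith
  have main : ∀ p ∈ X, ∀ q ∈ S,
      ((‖q.2 - p.2‖ = q.1 - p.1) ↔ p.1 ≤ q.1) ∧
      ((p.1 ≤ q.1) ↔ α < ⟪u, v⟫) := by
    intro p hp q hq
    have h1 := qS q hq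
    have hn2 : ‖q.2 - p.2‖ ^ 2 = (q.1 - p.1) ^ 2 := by
      rw [hS] at hq
      exact hq p hp
    obtain ⟨w, hw1, hw2, -⟩ := fwd p hp
    have h2 : ⟪u, p.2⟫ = ⟪u, v⟫ + p.1 := by
      rw [hw1, inner_add_right, inner_add_right, inner_smul_right, huu, real_inner_comm w u,
        (orth _ hw2).1]
      ring
    have h3 : |⟪u, q.2 - p.2⟫| ≤ ‖q.2 - p.2‖ := by
      have := abs_real_inner_le_norm u (q.2 - p.2)
      rwa [heq, one_mul] at this
    rw [inner_sub_right] at h3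
    have h4 := abs_le.1 h3
    have hnn := norm_nonneg (q.2 - p.2)
    refine ⟨⟨fun h => by linarith, fun h => ?_⟩, ⟨fun h => ?_, fun h => ?_⟩⟩
    · exact (sq_eq_sq₀ hnn (by linarith)).1 hn2
    · have h5 := (sq_eq_sq₀ hnn (by linarith)).1 hn2
      have h6 : 0 ≤ ⟪u, v⟫ - α := by linarith [h4.2]
      have := lt_of_le_of_ne h6 (Ne.symm hγ)
      linarith
    · by_contra hlt
      push Not at hlt
      have h5 : ‖q.2 - p.2‖ = p.1 - q.1 :=
        (sq_eq_sq₀ hnn (by linarith)).1 (by rw [hn2]; ring)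
      linarith [h4.1]
  have sol : ∀ p : ℝ × EuclideanSpace ℝ (Fin n), (∀ i, ‖s i - p.2‖ = t i - p.1) → p ∈ X := by
    intro p h
    rw [hX]
    intro i
    rw [h i]
  have los : α < ⟪u, v⟫ → ∀ p ∈ X, ∀ i, ‖s i - p.2‖ = t i - p.1 := by
    intro h p hp i
    have := main p hp _ (sS i)
    exact this.1.2 (this.2.2 h)
  refine ⟨main, ⟨?_, ?_⟩, ?_⟩
  · rintro ⟨p, h⟩
    have := main p (sol p h) _ (sS 0)
    exact this.2.1 (this.1.1 (h 0))
  · intro h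
    obtain ⟨p, hp⟩ := hX2.nonempty
    exact ⟨p, los h p hp⟩
  · intro h
    ext p
    exact ⟨fun hp => sol p hp, fun hp => los h p hp⟩
end

section
/- The solution set of the squared global positioning equations is exactly 𝔛 = {(b₀, v + y) : y ∈ U⊥ with ‖y‖² = β − ‖v‖²}. In particular, every solution has bias b = b₀. -/
open scoped RealInnerProductSpace

theorem stmt_15 {n m : ℕ} [NeZero m] (hn : 1 ≤ n)
    (s : Fin m → EuclideanSpace ℝ (Fin n)) (t : Fin m → ℝ)
    (hindep : AffineIndependent ℝ (fun i => ((t i, s i) : ℝ × EuclideanSpace ℝ (Fin n))))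
    (hnindep : ¬ AffineIndependent ℝ s)
    (b₀ : ℝ) (v : EuclideanSpace ℝ (Fin n)) (β : ℝ)
    (hv : v ∈ affineSpan ℝ (Set.range s))
    (hβ : ∀ i, 2 * ⟪s i, v⟫ - β = ‖s i‖ ^ 2 - (t i - b₀) ^ 2)
    (X : Set (ℝ × EuclideanSpace ℝ (Fin n)))
    (hX : X = {p : ℝ × EuclideanSpace ℝ (Fin n) | ∀ i, ‖s i - p.2‖ ^ 2 = (t i - p.1) ^ 2}) :
    X = {p : ℝ × EuclideanSpace ℝ (Fin n) | ∃ y : EuclideanSpace ℝ (Fin n),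
        y ∈ (Submodule.span ℝ (Set.range fun i => s i - s 0))ᗮ ∧
        ‖y‖ ^ 2 = β - ‖v‖ ^ 2 ∧ p = (b₀, v + y)} ∧
    ∀ p ∈ X, p.1 = b₀ := by
  have hvU : v - s 0 ∈ Submodule.span ℝ (Set.range fun i => s i - s 0) := by
    have hle : affineSpan ℝ (Set.range s) ≤
        AffineSubspace.mk' (s 0) (Submodule.span ℝ (Set.range fun i => s i - s 0)) := by
      rw [affineSpan_le]
      rintro _ ⟨i, rfl⟩
      rw [SetLike.mem_coe, AffineSubspace.mem_mk']
      exact Submodule.subset_span ⟨i, rfl⟩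
    have h := hle hv
    rwa [AffineSubspace.mem_mk'] at h
  have hexp : ∀ i (x : EuclideanSpace ℝ (Fin n)),
      ‖s i - x‖ ^ 2 = ‖s i‖ ^ 2 - 2 * ⟪s i, x⟫ + ‖x‖ ^ 2 := fun i x => norm_sub_sq_real _ _
  have hb : ∀ p ∈ X, p.1 = b₀ := by
    rintro ⟨b, x⟩ hp
    rw [hX] at hp
    have hp' : ∀ i, ‖s i - x‖ ^ 2 = (t i - b) ^ 2 := hp
    show b = b₀
    rw [affineIndependent_iff] at hnindep hindep
    push Not at hnindep
    obtain ⟨S, w, hw0, hws, e, he, hne⟩ := hnindep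
    have ht : ∑ i ∈ S, w i * t i ≠ 0 := by
      intro h0
      apply hne
      refine hindep S w hw0 ?_ e he
      ext1
      · simpa [Prod.fst_sum] using h0
      · simpa [Prod.snd_sum] using hws
    have hi : ∀ i, 2 * (b - b₀) * t i =
        2 * ⟪s i, x - v⟫ + (β - ‖x‖ ^ 2 - b₀ ^ 2 + b ^ 2) := by
      intro i
      have h1 := hp' i
      rw [hexp] at h1
      have h2 := hβ i
      rw [inner_sub_right]
      linarith
    have hin : ∑ i ∈ S, w i * ⟪s i, x - v⟫ = 0 := by
      have : ⟪∑ i ∈ S, w i • s i, x - v⟫ = 0 := by rw [hws, inner_zero_left]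
      rw [sum_inner] at this
      simpa [real_inner_smul_left] using this
    have hz : 2 * (b - b₀) * ∑ i ∈ S, w i * t i = 0 := by
      calc 2 * (b - b₀) * ∑ i ∈ S, w i * t i
          = ∑ i ∈ S, w i * (2 * (b - b₀) * t i) := by
            rw [Finset.mul_sum]; exact Finset.sum_congr rfl fun i _ => by ring
        _ = ∑ i ∈ S, (2 * (w i * ⟪s i, x - v⟫) +
              w i * (β - ‖x‖ ^ 2 - b₀ ^ 2 + b ^ 2)) :=
            Finset.sum_congr rfl fun i _ => by rw [hi i]; ring
        _ = 0 := by
            rw [Finset.sum_add_distrib, ← Finset.mul_sum, ← Finset.sum_mul, hin, hw0]; ring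
    rcases mul_eq_zero.mp hz with h | h
    · linarith
    · exact absurd h ht
  refine ⟨?_, hb⟩
  ext ⟨b, x⟩
  constructor
  · intro hp
    have hbb : b = b₀ := hb _ hp
    subst hbb
    rw [hX] at hp
    have hp' : ∀ i, ‖s i - x‖ ^ 2 = (t i - b) ^ 2 := hp
    have hk : ∀ i, 2 * ⟪s i, x - v⟫ = ‖x‖ ^ 2 - β := by
      intro i
      have h1 := hp' i
      rw [hexp] at h1
      have h2 := hβ i
      rw [inner_sub_right]
      linarith
    have hy : x - v ∈ (Submodule.span ℝ (Set.range fun i => s i - s 0))ᗮ := by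
      rw [Submodule.mem_orthogonal]
      intro u hu
      induction hu using Submodule.span_induction with
      | mem u hu =>
        obtain ⟨i, rfl⟩ := hu
        have h1 := hk i
        have h2 := hk 0
        show ⟪s i - s 0, x - v⟫ = 0
        rw [inner_sub_left]
        linarith
      | zero => exact inner_zero_left _
      | add a c _ _ ha hc => rw [inner_add_left, ha, hc, add_zero]
      | smul r a _ ha => rw [real_inner_smul_left, ha, mul_zero]
    refine ⟨x - v, hy, ?_, by simp⟩
    have h1 := (Submodule.mem_orthogonal _ _).mp hy _ hvU
    rw [inner_sub_left] at h1
    have h2 := hk 0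
    have h3 : ‖v + (x - v)‖ ^ 2 = ‖v‖ ^ 2 + 2 * ⟪v, x - v⟫ + ‖x - v‖ ^ 2 :=
      norm_add_sq_real _ _
    rw [add_sub_cancel] at h3
    linarith
  · rintro ⟨y, hy, hn2, hp⟩
    obtain ⟨rfl, rfl⟩ := Prod.mk.inj hp
    rw [hX]
    intro i
    show ‖s i - (v + y)‖ ^ 2 = (t i - b) ^ 2
    have h1 := (Submodule.mem_orthogonal _ _).mp hy _ hvU
    have h2 := (Submodule.mem_orthogonal _ _).mp hy _ (Submodule.subset_span ⟨i, rfl⟩)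
    simp only [inner_sub_left] at h1 h2
    rw [hexp, inner_add_right, norm_add_sq_real]
    have h3 := hβ i
    linarith
end

section
/- Let (t,s) ∈ ℝ × ℝⁿ with s in the affine span of s₁,…,s_m, and let 𝔛′ = {(b,x) ∈ 𝔛 : ‖s − x‖² = (t − b)²} be the solution set of the system enlarged by the pair (t,s). Then 𝔛′ = 𝔛 if (t − b₀)² = ‖s − v‖² + β − ‖v‖², and 𝔛′ = ∅ otherwise. -/
open scoped RealInnerProductSpace

theorem stmt_16 {n m : ℕ} [NeZero m] (hn : 1 ≤ n)
    (s : Fin m → EuclideanSpace ℝ (Fin n)) (t : Fin m → ℝ)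
    (hindep : AffineIndependent ℝ (fun i => ((t i, s i) : ℝ × EuclideanSpace ℝ (Fin n))))
    (hnindep : ¬ AffineIndependent ℝ s)
    (b₀ : ℝ) (v : EuclideanSpace ℝ (Fin n)) (β : ℝ)
    (hv : v ∈ affineSpan ℝ (Set.range s))
    (hβ : ∀ i, 2 * ⟪s i, v⟫ - β = ‖s i‖ ^ 2 - (t i - b₀) ^ 2)
    (X : Set (ℝ × EuclideanSpace ℝ (Fin n)))
    (hX : X = {p : ℝ × EuclideanSpace ℝ (Fin n) | ∀ i, ‖s i - p.2‖ ^ 2 = (t i - p.1) ^ 2})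
    (τ : ℝ) (σ : EuclideanSpace ℝ (Fin n))
    (hσ : σ ∈ affineSpan ℝ (Set.range s))
    (X' : Set (ℝ × EuclideanSpace ℝ (Fin n)))
    (hX' : X' = {p ∈ X | ‖σ - p.2‖ ^ 2 = (τ - p.1) ^ 2}) :
    ((τ - b₀) ^ 2 = ‖σ - v‖ ^ 2 + β - ‖v‖ ^ 2 → X' = X) ∧
    ((τ - b₀) ^ 2 ≠ ‖σ - v‖ ^ 2 + β - ‖v‖ ^ 2 → X' = ∅) := by
  have key : ∀ p ∈ X, p.1 = b₀ ∧ ‖σ - p.2‖ ^ 2 = ‖σ - v‖ ^ 2 + β - ‖v‖ ^ 2 := by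
    rintro ⟨b, x⟩ hp
    rw [hX] at hp
    simp only [Set.mem_setOf_eq] at hp
    have h1 : ∀ i, 2 * ⟪s i, v - x⟫ + 2 * t i * (b - b₀) + (‖x‖ ^ 2 - β - b ^ 2 + b₀ ^ 2) = 0 := by
      intro i
      have h := hp i
      have h' := hβ i
      rw [norm_sub_sq_real] at h
      rw [inner_sub_right]
      linarith
    have hb : b = b₀ := by
      by_contra hne
      apply hnindep
      rw [affineIndependent_iff] at hindep ⊢
      intro S w hw hws
      apply hindep S w hw
      have h2 : ∑ i ∈ S, w i * (2 * ⟪s i, v - x⟫ + 2 * t i * (b - b₀)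
          + (‖x‖ ^ 2 - β - b ^ 2 + b₀ ^ 2)) = 0 :=
        Finset.sum_eq_zero (fun i _ => by rw [h1 i, mul_zero])
      have h3 : ∑ i ∈ S, w i * ⟪s i, v - x⟫ = 0 := by
        have : ⟪∑ i ∈ S, w i • s i, v - x⟫ = 0 := by rw [hws, inner_zero_left]
        rw [sum_inner] at this
        simpa only [real_inner_smul_left] using this
      have h4 : ∑ i ∈ S, w i * (2 * ⟪s i, v - x⟫ + 2 * t i * (b - b₀)
          + (‖x‖ ^ 2 - β - b ^ 2 + b₀ ^ 2)) = 2 * ∑ i ∈ S, w i * ⟪s i, v - x⟫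
          + 2 * (b - b₀) * ∑ i ∈ S, w i * t i
          + (‖x‖ ^ 2 - β - b ^ 2 + b₀ ^ 2) * ∑ i ∈ S, w i := by
        simp only [Finset.mul_sum, ← Finset.sum_add_distrib]
        exact Finset.sum_congr rfl (fun i _ => by ring)
      rw [h2, h3, hw] at h4
      have h5 : ∑ i ∈ S, w i * t i = 0 := by
        have : (b - b₀) * ∑ i ∈ S, w i * t i = 0 := by linarith
        exact (mul_eq_zero.mp this).resolve_left (sub_ne_zero.mpr hne)
      apply Prod.ext
      · simpa [Prod.fst_sum] using h5
      · simpa [Prod.snd_sum] using hws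
    refine ⟨hb, ?_⟩
    subst hb
    have h6 : 2 * ⟪σ, v - x⟫ + (‖x‖ ^ 2 - β) = 0 := by
      refine affineSpan_induction (p := fun y => 2 * ⟪y, v - x⟫ + (‖x‖ ^ 2 - β) = 0) hσ ?_ ?_
      · rintro _ ⟨i, rfl⟩
        have := h1 i
        linarith
      · intro c u w z hu hw hz
        simp only [vsub_eq_sub, vadd_eq_add, inner_add_left, real_inner_smul_left,
          inner_sub_left u w] at *
        linear_combination c * hu - c * hw + hz
    rw [norm_sub_sq_real, norm_sub_sq_real]
    rw [inner_sub_right] at h6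
    linarith
  subst hX'
  constructor
  · intro h
    ext p
    refine ⟨fun hp => hp.1, fun hp => ⟨hp, ?_⟩⟩
    obtain ⟨h1, h2⟩ := key p hp
    rw [h1, h2, h]
  · intro h
    rw [Set.eq_empty_iff_forall_notMem]
    rintro p ⟨hp, hq⟩
    obtain ⟨h1, h2⟩ := key p hp
    apply h
    rw [← h2, hq, h1]
end

section
/- Let 𝒮″ = {(t,s) ∈ ℝ × ℝⁿ : s lies in the affine span of s₁,…,s_m and (t − b₀)² = ‖s − v‖² + β − ‖v‖²}. Then: (a) (tᵢ,sᵢ) ∈ 𝒮″ for every i = 1,…,m; (b) 𝒮″ ⊆ 𝒮; and (c) if 𝔛 has at least two elements, then 𝒮 = 𝒮″. -/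
open scoped RealInnerProductSpace

theorem stmt_17 {n m : ℕ} [NeZero m] (hn : 1 ≤ n)
    (s : Fin m → EuclideanSpace ℝ (Fin n)) (t : Fin m → ℝ)
    (hindep : AffineIndependent ℝ (fun i => ((t i, s i) : ℝ × EuclideanSpace ℝ (Fin n))))
    (hnindep : ¬ AffineIndependent ℝ s)
    (b₀ : ℝ) (v : EuclideanSpace ℝ (Fin n)) (β : ℝ)
    (hv : v ∈ affineSpan ℝ (Set.range s))
    (hβ : ∀ i, 2 * ⟪s i, v⟫ - β = ‖s i‖ ^ 2 - (t i - b₀) ^ 2)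
    (X : Set (ℝ × EuclideanSpace ℝ (Fin n)))
    (hX : X = {p : ℝ × EuclideanSpace ℝ (Fin n) | ∀ i, ‖s i - p.2‖ ^ 2 = (t i - p.1) ^ 2})
    (S : Set (ℝ × EuclideanSpace ℝ (Fin n)))
    (hS : S = {q : ℝ × EuclideanSpace ℝ (Fin n) | ∀ p ∈ X, ‖q.2 - p.2‖ ^ 2 = (q.1 - p.1) ^ 2})
    (S'' : Set (ℝ × EuclideanSpace ℝ (Fin n)))
    (hS'' : S'' = {q : ℝ × EuclideanSpace ℝ (Fin n) | q.2 ∈ affineSpan ℝ (Set.range s) ∧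
        (q.1 - b₀) ^ 2 = ‖q.2 - v‖ ^ 2 + β - ‖v‖ ^ 2}) :
    (∀ i, (t i, s i) ∈ S'') ∧ S'' ⊆ S ∧ (X.Nontrivial → S = S'') := by
  classical
  subst hX hS hS''
  set A := affineSpan ℝ (Set.range s) with hA
  have hsA : ∀ i, s i ∈ A := fun i => mem_affineSpan ℝ (Set.mem_range_self i)
  have key : ∀ p : ℝ × EuclideanSpace ℝ (Fin n), (∀ i, ‖s i - p.2‖ ^ 2 = (t i - p.1) ^ 2) →
      p.1 = b₀ ∧ (∀ u ∈ A.direction, ⟪u, p.2 - v⟫ = 0) ∧ ‖p.2 - v‖ ^ 2 = β - ‖v‖ ^ 2 := by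
    rintro ⟨b, x⟩ hp
    simp only at hp ⊢
    have hc : ∀ i, 2 * ⟪s i, x - v⟫ = 2 * (b - b₀) * t i + (‖x‖ ^ 2 - β + b₀ ^ 2 - b ^ 2) := by
      intro i
      have h1 := hp i
      have h2 := hβ i
      rw [norm_sub_sq_real] at h1
      rw [inner_sub_right]
      linarith
    have hb : b = b₀ := by
      rw [affineIndependent_iff] at hindep hnindep
      push Not at hnindep
      obtain ⟨fs, w, hw0, hws, e, he, hwe⟩ := hnindep
      have ht : ∑ i ∈ fs, w i * t i ≠ 0 := by
        intro h0
        apply hwe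
        refine hindep fs w hw0 ?_ e he
        ext1
        · simpa [Prod.fst_sum] using h0
        · simpa [Prod.snd_sum] using hws
      have h1 : ∑ i ∈ fs, w i * (2 * ⟪s i, x - v⟫) = 0 := by
        have : ∑ i ∈ fs, w i * (2 * ⟪s i, x - v⟫) = 2 * ⟪∑ i ∈ fs, w i • s i, x - v⟫ := by
          rw [sum_inner, Finset.mul_sum]
          refine Finset.sum_congr rfl fun i _ => ?_
          rw [real_inner_smul_left]; ring
        rw [this, hws]; simp
      have h2 : ∑ i ∈ fs, w i * (2 * ⟪s i, x - v⟫) = 2 * (b - b₀) * ∑ i ∈ fs, w i * t i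
          + (‖x‖ ^ 2 - β + b₀ ^ 2 - b ^ 2) * ∑ i ∈ fs, w i := by
        rw [Finset.mul_sum, Finset.mul_sum, ← Finset.sum_add_distrib]
        refine Finset.sum_congr rfl fun i _ => ?_
        rw [hc i]; ring
      rw [h1, hw0, mul_zero, add_zero] at h2
      have h3 := (mul_eq_zero.mp h2.symm).resolve_right ht
      linarith
    subst hb
    have hperp : ∀ u ∈ A.direction, ⟪u, x - v⟫ = 0 := by
      have hle : A.direction ≤ (Submodule.span ℝ {x - v})ᗮ := by
        rw [hA, direction_affineSpan, vectorSpan_def, Submodule.span_le]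
        rintro _ ⟨_, ⟨i, rfl⟩, _, ⟨j, rfl⟩, rfl⟩
        simp only [SetLike.mem_coe, vsub_eq_sub]
        rw [Submodule.mem_orthogonal_singleton_iff_inner_left, inner_sub_left]
        have := hc i
        have := hc j
        linarith
      intro u hu
      exact Submodule.mem_orthogonal_singleton_iff_inner_left.mp (hle hu)
    refine ⟨rfl, hperp, ?_⟩
    have h1 := hperp (s 0 - v) (AffineSubspace.vsub_mem_direction (hsA 0) hv)
    have h2 := hc 0
    rw [inner_sub_left] at h1
    rw [norm_sub_sq_real]
    rw [inner_sub_right v, real_inner_self_eq_norm_sq, real_inner_comm x v] at h1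
    linarith
  have ha : ∀ i, (t i - b₀) ^ 2 = ‖s i - v‖ ^ 2 + β - ‖v‖ ^ 2 := by
    intro i
    rw [norm_sub_sq_real]
    linarith [hβ i]
  have pyth : ∀ u y : EuclideanSpace ℝ (Fin n), ⟪u, y⟫ = 0 → ‖u - y‖ ^ 2 = ‖u‖ ^ 2 + ‖y‖ ^ 2 := by
    intro u y h
    rw [norm_sub_sq_real, h]; ring
  have hb : {q : ℝ × EuclideanSpace ℝ (Fin n) | q.2 ∈ A ∧
        (q.1 - b₀) ^ 2 = ‖q.2 - v‖ ^ 2 + β - ‖v‖ ^ 2} ⊆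
      {q : ℝ × EuclideanSpace ℝ (Fin n) | ∀ p ∈ {p : ℝ × EuclideanSpace ℝ (Fin n) |
        ∀ i, ‖s i - p.2‖ ^ 2 = (t i - p.1) ^ 2}, ‖q.2 - p.2‖ ^ 2 = (q.1 - p.1) ^ 2} := by
    rintro q ⟨hq, hq2⟩ p hp
    obtain ⟨h1, h2, h3⟩ := key p hp
    have h4 := pyth _ _ (h2 (q.2 - v) (AffineSubspace.vsub_mem_direction hq hv))
    rw [sub_sub_sub_cancel_right] at h4
    rw [h1, h4, hq2, h3]; ring
  refine ⟨fun i => ⟨hsA i, ha i⟩, hb, ?_⟩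
  rintro ⟨p, hp, p', hp', hne⟩
  refine Set.Subset.antisymm ?_ hb
  intro q hq
  obtain ⟨h1, h2, h3⟩ := key p hp
  obtain ⟨h1', h2', h3'⟩ := key p' hp'
  have hr : 0 < β - ‖v‖ ^ 2 := by
    rcases (h3 ▸ sq_nonneg ‖p.2 - v‖ : 0 ≤ β - ‖v‖ ^ 2).lt_or_eq with h | h
    · exact h
    · exfalso
      rw [← h] at h3 h3'
      have e1 : p.2 - v = 0 := by simpa using h3
      have e2 : p'.2 - v = 0 := by simpa using h3'
      apply hne
      ext1
      · rw [h1, h1']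
      · rw [sub_eq_zero.mp e1, sub_eq_zero.mp e2]
  have hmem : ∀ y : EuclideanSpace ℝ (Fin n), (∀ u ∈ A.direction, ⟪u, y⟫ = 0) →
      ‖y‖ ^ 2 = β - ‖v‖ ^ 2 → ‖q.2 - v - y‖ ^ 2 = (q.1 - b₀) ^ 2 := by
    intro y hy hy2
    have := hq (b₀, v + y) (by
      intro i
      simp only
      rw [← sub_sub, pyth _ _ (hy (s i - v) (AffineSubspace.vsub_mem_direction (hsA i) hv)), ha i,
        hy2]
      ring)
    simpa only [← sub_sub] using this
  have hqA : q.2 ∈ A := by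
    obtain ⟨u, hu, w, hw, huw⟩ := Submodule.exists_add_mem_mem_orthogonal (K := A.direction) (q.2 - v)
    by_cases hw0 : w = 0
    · rw [hw0, add_zero] at huw
      rw [← AffineSubspace.vsub_right_mem_direction_iff_mem hv, vsub_eq_sub, huw]
      exact hu
    · exfalso
      have hwn : 0 < ‖w‖ := norm_pos_iff.mpr hw0
      set c := √(β - ‖v‖ ^ 2) / ‖w‖ with hcdef
      have hc : 0 < c := div_pos (Real.sqrt_pos.mpr hr) hwn
      have hcn : c ^ 2 * ‖w‖ ^ 2 = β - ‖v‖ ^ 2 := by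
        rw [hcdef, div_pow, Real.sq_sqrt hr.le]
        field_simp
      have hw' : ∀ u ∈ A.direction, ⟪u, w⟫ = 0 := fun u hu =>
        (Submodule.mem_orthogonal _ _).mp hw u hu
      have e1 := hmem (c • w) (fun u hu => by rw [real_inner_smul_right, hw' u hu, mul_zero])
        (by rw [norm_smul, mul_pow, Real.norm_eq_abs, sq_abs, hcn])
      have e2 := hmem ((-c) • w) (fun u hu => by rw [real_inner_smul_right, hw' u hu, mul_zero])
        (by rw [norm_smul, mul_pow, Real.norm_eq_abs, sq_abs, neg_sq, hcn])
      rw [norm_sub_sq_real, real_inner_smul_right, norm_smul, mul_pow, Real.norm_eq_abs, sq_abs]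
        at e1 e2
      have e3 : ⟪q.2 - v, w⟫ = ‖w‖ ^ 2 := by
        rw [huw, inner_add_left, hw' u hu, real_inner_self_eq_norm_sq, zero_add]
      rw [e3] at e1 e2
      have : 0 < c * ‖w‖ ^ 2 := by positivity
      nlinarith
  refine ⟨hqA, ?_⟩
  have h4 := pyth _ _ (h2 (q.2 - v) (AffineSubspace.vsub_mem_direction hqA hv))
  rw [← hmem _ h2 h3, h4, h3]; ring
end

section
/- Suppose m ≥ 2 and all pseudoranges are equal: tᵢ = τ for all i. Set r = √(‖v‖² − β + τ²). Then: (1) ‖v‖² − β + τ² ≥ 0 and ‖sᵢ − v‖ = r for all i (the satellites lie on a sphere of radius r around v); (2) 𝔛 = {(b, v + y) : y ∈ U⊥ and b = τ + √(r² + ‖y‖²) or b = τ − √(r² + ‖y‖²)}, so that Q_sol = v + U⊥; and (3) 𝒮 = {(τ, s) : s lies in the affine span of s₁,…,s_m and ‖s − v‖ = r}, so that Q_sat is the sphere of radius r around v inside the affine span of s₁,…,s_m. -/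
open scoped RealInnerProductSpace

theorem stmt_18 {n m : ℕ} [NeZero m] (hn : 1 ≤ n) (hm : m ≤ n + 1)
    (hm2 : 2 ≤ m)
    (s : Fin m → EuclideanSpace ℝ (Fin n)) (t : Fin m → ℝ)
    (hindep : AffineIndependent ℝ s)
    (v : EuclideanSpace ℝ (Fin n)) (β : ℝ)
    (hv : v ∈ affineSpan ℝ (Set.range s))
    (hβ : ∀ i, 2 * ⟪s i, v⟫ - β = ‖s i‖ ^ 2 - t i ^ 2)
    (τ : ℝ) (hτ : ∀ i, t i = τ)
    (r : ℝ) (hr : r = Real.sqrt (‖v‖ ^ 2 - β + τ ^ 2))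
    (X : Set (ℝ × EuclideanSpace ℝ (Fin n)))
    (hX : X = {p : ℝ × EuclideanSpace ℝ (Fin n) | ∀ i, ‖s i - p.2‖ ^ 2 = (t i - p.1) ^ 2})
    (S : Set (ℝ × EuclideanSpace ℝ (Fin n)))
    (hS : S = {q : ℝ × EuclideanSpace ℝ (Fin n) | ∀ p ∈ X, ‖q.2 - p.2‖ ^ 2 = (q.1 - p.1) ^ 2})
    (Qsol : Set (EuclideanSpace ℝ (Fin n)))
    (hQsol : Qsol = {x : EuclideanSpace ℝ (Fin n) | ∃ b : ℝ, (b, x) ∈ X})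
    (Qsat : Set (EuclideanSpace ℝ (Fin n)))
    (hQsat : Qsat = {x : EuclideanSpace ℝ (Fin n) | ∃ τ : ℝ, (τ, x) ∈ S}) :
    0 ≤ ‖v‖ ^ 2 - β + τ ^ 2 ∧
    (∀ i, ‖s i - v‖ = r) ∧
    X = {p : ℝ × EuclideanSpace ℝ (Fin n) | ∃ y : EuclideanSpace ℝ (Fin n),
        y ∈ (Submodule.span ℝ (Set.range fun i => s i - s 0))ᗮ ∧
        p.2 = v + y ∧
        (p.1 = τ + Real.sqrt (r ^ 2 + ‖y‖ ^ 2) ∨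
         p.1 = τ - Real.sqrt (r ^ 2 + ‖y‖ ^ 2))} ∧
    Qsol = {x : EuclideanSpace ℝ (Fin n) |
        ∃ y ∈ (Submodule.span ℝ (Set.range fun i => s i - s 0))ᗮ, x = v + y} ∧
    S = {q : ℝ × EuclideanSpace ℝ (Fin n) | q.1 = τ ∧ q.2 ∈ affineSpan ℝ (Set.range s) ∧
        ‖q.2 - v‖ = r} ∧
    Qsat = {x : EuclideanSpace ℝ (Fin n) | x ∈ affineSpan ℝ (Set.range s) ∧ ‖x - v‖ = r} := by
  have hr2nn : ∀ i, ‖s i - v‖ ^ 2 = ‖v‖ ^ 2 - β + τ ^ 2 := by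
    intro i
    have h := hβ i
    rw [hτ i] at h
    rw [norm_sub_sq_real]
    linarith
  have h0 : 0 ≤ ‖v‖ ^ 2 - β + τ ^ 2 := by
    rw [← hr2nn 0]; positivity
  have hr0 : 0 ≤ r := by rw [hr]; exact Real.sqrt_nonneg _
  have hrr : r ^ 2 = ‖v‖ ^ 2 - β + τ ^ 2 := by rw [hr]; exact Real.sq_sqrt h0
  have hsr : ∀ i, ‖s i - v‖ = r := by
    intro i
    rw [hr, ← hr2nn i, Real.sqrt_sq (norm_nonneg _)]
  have hrpos : 0 < r := by
    rcases hr0.lt_or_eq with h | h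
    · exact h
    · exfalso
      have h1 : ∀ i, s i = v := fun i => by
        have := hsr i
        rw [← h, norm_eq_zero, sub_eq_zero] at this
        exact this
      have h2 : (⟨0, by omega⟩ : Fin m) = ⟨1, by omega⟩ :=
        hindep.injective (by rw [h1, h1])
      simp at h2
  have hdir : (affineSpan ℝ (Set.range s)).direction
      = Submodule.span ℝ (Set.range fun i => s i - s 0) := by
    rw [direction_affineSpan, vectorSpan_range_eq_span_range_vsub_right ℝ s 0]
    rfl
  generalize hD : Submodule.span ℝ (Set.range fun i => s i - s 0) = D at *
  have hmem : ∀ q, q ∈ affineSpan ℝ (Set.range s) ↔ q - v ∈ D := by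
    intro q
    rw [← hdir]
    exact (AffineSubspace.vsub_right_mem_direction_iff_mem hv q).symm
  have hsD : ∀ i, s i - v ∈ D := fun i =>
    (hmem _).1 (subset_affineSpan ℝ _ ⟨i, rfl⟩)
  have hDperp : ∀ y, (∀ i, ⟪s i - s 0, y⟫ = 0) → y ∈ Dᗮ := by
    intro y hy
    rw [Submodule.mem_orthogonal, ← hD]
    intro u hu
    induction hu using Submodule.span_induction with
    | mem x hx => obtain ⟨i, rfl⟩ := hx; exact hy i
    | zero => simp
    | add a b _ _ ha hb => rw [inner_add_left, ha, hb, add_zero]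
    | smul c a _ ha => rw [inner_smul_left, ha, mul_zero]
  have hexp : ∀ w y : EuclideanSpace ℝ (Fin n),
      ‖w - (v + y)‖ ^ 2 = ‖w - v‖ ^ 2 - 2 * ⟪w - v, y⟫ + ‖y‖ ^ 2 := by
    intro w y
    rw [← sub_sub, norm_sub_sq_real]
  have hsq : ∀ (y : EuclideanSpace ℝ (Fin n)),
      Real.sqrt (r ^ 2 + ‖y‖ ^ 2) ^ 2 = r ^ 2 + ‖y‖ ^ 2 :=
    fun y => Real.sq_sqrt (by positivity)
  have hX' : X = {p : ℝ × EuclideanSpace ℝ (Fin n) | ∃ y : EuclideanSpace ℝ (Fin n),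
        y ∈ Dᗮ ∧ p.2 = v + y ∧
        (p.1 = τ + Real.sqrt (r ^ 2 + ‖y‖ ^ 2) ∨
         p.1 = τ - Real.sqrt (r ^ 2 + ‖y‖ ^ 2))} := by
    rw [hX]
    ext ⟨b, x⟩
    simp only [Set.mem_setOf_eq]
    constructor
    · intro h
      obtain ⟨y, rfl⟩ : ∃ y, x = v + y := ⟨x - v, by abel⟩
      have h' : ∀ i, r ^ 2 - 2 * ⟪s i - v, y⟫ + ‖y‖ ^ 2 = (τ - b) ^ 2 := by
        intro i
        have := h i
        rwa [hexp, hsr, hτ] at this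
      have hy : y ∈ Dᗮ := by
        apply hDperp
        intro i
        have e : s i - s 0 = (s i - v) - (s 0 - v) := by abel
        rw [e, inner_sub_left]
        linarith [h' i, h' 0]
      refine ⟨y, hy, rfl, ?_⟩
      have h1 := h' 0
      rw [(Submodule.mem_orthogonal _ _).1 hy _ (hsD 0)] at h1
      have h2 : (b - τ) ^ 2 = Real.sqrt (r ^ 2 + ‖y‖ ^ 2) ^ 2 := by
        rw [hsq]; linarith
      rcases sq_eq_sq_iff_eq_or_eq_neg.1 h2 with h3 | h3
      · left; linarith
      · right; linarith
    · rintro ⟨y, hy, rfl, hb⟩ i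
      rw [hexp, hsr, hτ, (Submodule.mem_orthogonal _ _).1 hy _ (hsD i)]
      have := hsq y
      rcases hb with rfl | rfl <;> linarith
  have hS' : S = {q : ℝ × EuclideanSpace ℝ (Fin n) | q.1 = τ ∧
      q.2 ∈ affineSpan ℝ (Set.range s) ∧ ‖q.2 - v‖ = r} := by
    rw [hS, hX']
    ext ⟨a, q⟩
    simp only [Set.mem_setOf_eq]
    constructor
    · intro h
      have k : ∀ y ∈ Dᗮ, ‖q - v‖ ^ 2 - 2 * ⟪q - v, y⟫ + ‖y‖ ^ 2
          = (a - (τ + Real.sqrt (r ^ 2 + ‖y‖ ^ 2))) ^ 2 := by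
        intro y hy
        rw [← hexp]
        exact h (τ + Real.sqrt (r ^ 2 + ‖y‖ ^ 2), v + y) ⟨y, hy, rfl, Or.inl rfl⟩
      have k' : ∀ y ∈ Dᗮ, ‖q - v‖ ^ 2 - 2 * ⟪q - v, y⟫ + ‖y‖ ^ 2
          = (a - (τ - Real.sqrt (r ^ 2 + ‖y‖ ^ 2))) ^ 2 := by
        intro y hy
        rw [← hexp]
        exact h (τ - Real.sqrt (r ^ 2 + ‖y‖ ^ 2), v + y) ⟨y, hy, rfl, Or.inr rfl⟩
      have k0 := k 0 (Submodule.zero_mem _)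
      have k0' := k' 0 (Submodule.zero_mem _)
      simp only [inner_zero_right, norm_zero, mul_zero, sub_zero, ne_eq, OfNat.ofNat_ne_zero,
        not_false_eq_true, zero_pow, add_zero, Real.sqrt_sq hr0] at k0 k0'
      have ha : a = τ := by
        have : (a - τ) * r = 0 := by linarith
        rcases mul_eq_zero.1 this with h1 | h1 <;> linarith
      subst ha
      have hq : ‖q - v‖ = r := by
        have : ‖q - v‖ ^ 2 = r ^ 2 := by rw [k0]; ring
        exact (sq_eq_sq₀ (norm_nonneg _) hr0).1 this
      refine ⟨rfl, ?_, hq⟩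
      rw [hmem, ← Submodule.orthogonal_orthogonal D, Submodule.mem_orthogonal']
      intro y hy
      have h1 := k y hy
      have h2 := hsq y
      rw [hq] at h1
      linarith
    · rintro ⟨rfl, hq, hqr⟩ ⟨b, x⟩ ⟨y, hy, hx, hb⟩
      simp only at hx hb ⊢
      subst hx
      rw [hexp, hqr, (Submodule.mem_orthogonal _ _).1 hy _ ((hmem _).1 hq)]
      have := hsq y
      rcases hb with rfl | rfl <;> linarith
  refine ⟨h0, hsr, hX', ?_, hS', ?_⟩
  · rw [hQsol, hX']
    ext x
    constructor
    · rintro ⟨b, y, hy, hx, -⟩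
      exact ⟨y, hy, hx⟩
    · rintro ⟨y, hy, hx⟩
      exact ⟨_, y, hy, hx, Or.inl rfl⟩
  · rw [hQsat, hS']
    ext x
    constructor
    · rintro ⟨b, -, h⟩
      exact h
    · intro h
      exact ⟨τ, rfl, h⟩
end

section
/- Let M ⊆ ℝ × ℝⁿ be a nonempty set and define 𝔛(M) = {(b,x) ∈ ℝ × ℝⁿ : ‖s − x‖² = (t − b)² for all (t,s) ∈ M}. Then there exists a finite subset M′ ⊆ M with at most n + 3 elements such that 𝔛(M′) = 𝔛(M); moreover, if 𝔛(M) ≠ ∅, then M′ can be chosen with at most n + 2 elements. -/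
open scoped RealInnerProductSpace

noncomputable def gpsL {n : ℕ} (p : ℝ × EuclideanSpace ℝ (Fin n)) :
    (ℝ × ℝ × EuclideanSpace ℝ (Fin n) × ℝ) →ₗ[ℝ] ℝ where
  toFun v := v.2.2.2 - 2 * ⟪p.2, v.2.2.1⟫ + 2 * p.1 * v.2.1 + (‖p.2‖ ^ 2 - p.1 ^ 2) * v.1
  map_add' v w := by
    simp only [Prod.fst_add, Prod.snd_add, inner_add_right]
    ring
  map_smul' c v := by
    simp only [Prod.smul_fst, Prod.smul_snd, inner_smul_right, smul_eq_mul, RingHom.id_apply]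
    ring

noncomputable def gpsPhi {n : ℕ} (q : ℝ × EuclideanSpace ℝ (Fin n)) :
    ℝ × ℝ × EuclideanSpace ℝ (Fin n) × ℝ := (1, q.1, q.2, ‖q.2‖ ^ 2 - q.1 ^ 2)

theorem gps_iff {n : ℕ} (p q : ℝ × EuclideanSpace ℝ (Fin n)) :
    ‖q.2 - p.2‖ ^ 2 = (q.1 - p.1) ^ 2 ↔ gpsPhi q ∈ LinearMap.ker (gpsL p) := by
  rw [LinearMap.mem_ker]
  simp only [gpsL, gpsPhi, LinearMap.coe_mk, AddHom.coe_mk]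
  rw [norm_sub_sq_real, real_inner_comm]
  constructor <;> intro h <;> linarith

theorem gpsPhi_inj {n : ℕ} : Function.Injective (gpsPhi (n := n)) := by
  intro a b h
  simp only [gpsPhi, Prod.mk.injEq] at h
  exact Prod.ext h.2.1 h.2.2.1

theorem gps_aux {n : ℕ} (M : Set (ℝ × EuclideanSpace ℝ (Fin n))) :
    ∃ M' : Set (ℝ × EuclideanSpace ℝ (Fin n)), M' ⊆ M ∧ M'.Finite ∧
      M'.ncard ≤ Module.finrank ℝ (Submodule.span ℝ (gpsPhi '' M)) ∧
      {p : ℝ × EuclideanSpace ℝ (Fin n) | ∀ q ∈ M', ‖q.2 - p.2‖ ^ 2 = (q.1 - p.1) ^ 2}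
        = {p : ℝ × EuclideanSpace ℝ (Fin n) | ∀ q ∈ M, ‖q.2 - p.2‖ ^ 2 = (q.1 - p.1) ^ 2} := by
  obtain ⟨b, hb, hs, hl⟩ := exists_linearIndependent ℝ (gpsPhi '' M)
  obtain ⟨M', hM', rfl⟩ := Set.subset_image_iff.1 hb
  have hfin : (gpsPhi '' M').Finite := hl.setFinite
  refine ⟨M', hM', hfin.of_finite_image gpsPhi_inj.injOn, ?_, ?_⟩
  · rw [← hs, ← Set.ncard_image_of_injective M' gpsPhi_inj]
    have := hfin.fintype
    rw [finrank_span_set_eq_card hl, Set.ncard_eq_toFinset_card']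
  · ext p
    have key : ∀ S : Set (ℝ × EuclideanSpace ℝ (Fin n)),
        (∀ q ∈ S, ‖q.2 - p.2‖ ^ 2 = (q.1 - p.1) ^ 2) ↔
          Submodule.span ℝ (gpsPhi '' S) ≤ LinearMap.ker (gpsL p) := by
      intro S
      rw [Submodule.span_le, Set.image_subset_iff]
      exact forall₂_congr fun q _ => gps_iff p q
    simp only [Set.mem_ofPred_eq]
    rw [key, key, hs]

theorem gps_finrank {n : ℕ} :
    Module.finrank ℝ (ℝ × ℝ × EuclideanSpace ℝ (Fin n) × ℝ) = n + 3 := by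
  simp only [Module.finrank_prod, finrank_euclideanSpace_fin, Module.finrank_self]
  omega

theorem stmt_19 {n : ℕ} (hn : 1 ≤ n)
    (M : Set (ℝ × EuclideanSpace ℝ (Fin n))) (hM : M.Nonempty) :
    (∃ M' : Set (ℝ × EuclideanSpace ℝ (Fin n)), M' ⊆ M ∧ M'.Finite ∧ M'.ncard ≤ n + 3 ∧
      {p : ℝ × EuclideanSpace ℝ (Fin n) | ∀ q ∈ M', ‖q.2 - p.2‖ ^ 2 = (q.1 - p.1) ^ 2}
        = {p : ℝ × EuclideanSpace ℝ (Fin n) | ∀ q ∈ M, ‖q.2 - p.2‖ ^ 2 = (q.1 - p.1) ^ 2}) ∧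
    ({p : ℝ × EuclideanSpace ℝ (Fin n) | ∀ q ∈ M, ‖q.2 - p.2‖ ^ 2 = (q.1 - p.1) ^ 2}.Nonempty →
      ∃ M' : Set (ℝ × EuclideanSpace ℝ (Fin n)), M' ⊆ M ∧ M'.Finite ∧ M'.ncard ≤ n + 2 ∧
        {p : ℝ × EuclideanSpace ℝ (Fin n) | ∀ q ∈ M', ‖q.2 - p.2‖ ^ 2 = (q.1 - p.1) ^ 2}
          = {p : ℝ × EuclideanSpace ℝ (Fin n) | ∀ q ∈ M, ‖q.2 - p.2‖ ^ 2 = (q.1 - p.1) ^ 2}) := by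
  obtain ⟨M', h1, h2, h3, h4⟩ := gps_aux M
  refine ⟨⟨M', h1, h2, h3.trans ?_, h4⟩, ?_⟩
  · rw [← gps_finrank]
    exact Submodule.finrank_le _
  · rintro ⟨p, hp⟩
    refine ⟨M', h1, h2, h3.trans ?_, h4⟩
    have hle : Submodule.span ℝ (gpsPhi '' M) ≤ LinearMap.ker (gpsL p) := by
      rw [Submodule.span_le, Set.image_subset_iff]
      exact fun q hq => (gps_iff p q).1 (hp q hq)
    have hlt : Submodule.span ℝ (gpsPhi '' M) < ⊤ := by
      refine lt_of_le_of_lt hle (lt_top_iff_ne_top.2 fun h => ?_)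
      have : ((0, 0, 0, 1) : ℝ × ℝ × EuclideanSpace ℝ (Fin n) × ℝ) ∈ LinearMap.ker (gpsL p) := by
        rw [h]; trivial
      rw [LinearMap.mem_ker] at this
      simp [gpsL] at this
    have := Submodule.finrank_lt hlt.ne
    rw [gps_finrank] at this
    omega
end
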